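/- arXiv:2105.09565 — 3 statements merged into one kernel-verified Lean document; each statement's English description precedes it below -/
import Mathlib

section
/- Let f be a Steinhaus random multiplicative function, let x ≥ 4, and set 𝓕(√x) := σ({f(p) : p prime, p ≤ √x}), M_f(x) := ∑_{n ≤ x, P(n) > √x} f(n), and V(x) := ∑_{√x < p ≤ x, p prime} |∑_{m ≤ x/p} f(m)|². Then for any λ > 0, almost surely the conditional probabilities satisfy ℙ(|Re(M_f(x))| ≥ λ | 𝓕(√x)) ≤ 2·exp(−λ²/(2·V(x))) and ℙ(|Im(M_f(x))| ≥ λ | 𝓕(√x)) ≤ 2·exp(−λ²/(2·V(x))), where on the event {V(x) = 0} the left-hand sides vanish. -/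
open MeasureTheory ProbabilityTheory Real

noncomputable section

/-- The largest prime factor of `n`, with `P 1 = 1` (and `P 0 = 1`). -/
def Pfac (n : ℕ) : ℕ := if n ≤ 1 then 1 else n.primeFactors.sup id

/-- A Steinhaus random multiplicative function. -/
structure IsSteinhausRMF {Ω : Type*} [MeasurableSpace Ω] (μ : Measure Ω)
    (f : Ω → ℕ → ℂ) : Prop where
  meas : ∀ n : ℕ, Measurable fun ω => f ω n
  indep : iIndepFun (m := fun _ : Nat.Primes => (inferInstance : MeasurableSpace ℂ))
    (fun (p : Nat.Primes) (ω : Ω) => f ω (p : ℕ)) μ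
  unif : ∀ p : ℕ, p.Prime →
    Measure.map (fun ω => f ω p) μ =
      Measure.map (fun θ : ℝ => Complex.exp (2 * π * θ * Complex.I))
        (volume.restrict (Set.Ioc (0 : ℝ) 1))
  map_one : ∀ ω : Ω, f ω 1 = 1
  map_mul : ∀ (ω : Ω) (m n : ℕ), 1 ≤ m → 1 ≤ n → f ω (m * n) = f ω m * f ω n

/-- The σ-algebra `𝓕(√x)` generated by `{f(p) : p prime, p ≤ √x}`. -/
def sigmaAlgSqrt {Ω : Type*} (f : Ω → ℕ → ℂ) (x : ℝ) : MeasurableSpace Ω :=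
  ⨆ p ∈ {p : ℕ | p.Prime ∧ (p : ℝ) ≤ Real.sqrt x},
    MeasurableSpace.comap (fun ω => f ω p) (inferInstance : MeasurableSpace ℂ)

/-- `M_f(x) := ∑_{n ≤ x, P(n) > √x} f(n)`. -/
def Mst {Ω : Type*} (f : Ω → ℕ → ℂ) (ω : Ω) (x : ℝ) : ℂ :=
  ∑ n ∈ (Finset.Icc 1 ⌊x⌋₊).filter (fun n : ℕ => Real.sqrt x < (Pfac n : ℝ)), f ω n

/-- `V(x) := ∑_{√x < p ≤ x} |∑_{m ≤ x/p} f(m)|²`. -/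
def Vst {Ω : Type*} (f : Ω → ℕ → ℂ) (ω : Ω) (x : ℝ) : ℝ :=
  ∑ p ∈ (Finset.Icc 1 ⌊x⌋₊).filter (fun p : ℕ => Nat.Prime p ∧ Real.sqrt x < (p : ℝ)),
    ‖∑ m ∈ Finset.Icc 1 ⌊x / (p : ℝ)⌋₊, f ω m‖ ^ 2

lemma Pfac_mul {p m : ℕ} (hp : p.Prime) (hm : 1 ≤ m) (hmp : m < p) : Pfac (p * m) = p := by
  have h1 : 1 < p := hp.one_lt
  have h2 : ¬ p * m ≤ 1 := by nlinarith
  rw [Pfac, if_neg h2]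
  apply le_antisymm
  · apply Finset.sup_le
    intro q hq
    have hq' := Nat.prime_of_mem_primeFactors hq
    have hqd := Nat.dvd_of_mem_primeFactors hq
    rcases (hq'.dvd_mul).1 hqd with h | h
    · exact Nat.le_of_dvd hp.pos h
    · exact (Nat.le_of_dvd hm h).trans hmp.le
  · exact Finset.le_sup (f := id) (Nat.mem_primeFactors.2 ⟨hp, dvd_mul_right _ _, by positivity⟩)

lemma Pfac_mem {n : ℕ} (hn : 1 < n) : (Pfac n).Prime ∧ Pfac n ∣ n := by
  rw [Pfac, if_neg (by omega)]
  obtain ⟨q, hq, h⟩ := Finset.exists_mem_eq_sup n.primeFactors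
    (Nat.nonempty_primeFactors.2 hn) id
  rw [h]
  exact ⟨Nat.prime_of_mem_primeFactors hq, Nat.dvd_of_mem_primeFactors hq⟩

lemma lt_of_sqrt_lt {x : ℝ} (hx : 4 ≤ x) {p m : ℕ} (hp : Real.sqrt x < p)
    (hm : m ≤ ⌊x / (p : ℝ)⌋₊) : (m : ℝ) < Real.sqrt x ∧ (p * m : ℝ) ≤ x := by
  have hs : 0 < Real.sqrt x := Real.sqrt_pos.2 (by linarith)
  have hp0 : (0 : ℝ) < p := hs.trans hp
  have h1 : (m : ℝ) ≤ x / p := (Nat.le_floor_iff (by positivity)).1 hm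
  rw [le_div_iff₀ hp0] at h1
  have h3 := Real.mul_self_sqrt (show 0 ≤ x by linarith)
  refine ⟨?_, by linarith⟩
  by_contra hcon
  push Not at hcon
  nlinarith

/-- the inner sums -/
def Sst {Ω : Type*} (f : Ω → ℕ → ℂ) (x : ℝ) (ω : Ω) (p : ℕ) : ℂ :=
  ∑ m ∈ Finset.Icc 1 ⌊x / (p : ℝ)⌋₊, f ω m

lemma Mst_eq {Ω : Type*} [MeasurableSpace Ω] {μ : Measure Ω} {f : Ω → ℕ → ℂ}
    (hf : IsSteinhausRMF μ f) {x : ℝ} (hx : 4 ≤ x) (ω : Ω) :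
    Mst f ω x = ∑ p ∈ (Finset.Icc 1 ⌊x⌋₊).filter
      (fun p : ℕ => Nat.Prime p ∧ Real.sqrt x < (p : ℝ)), f ω p * Sst f x ω p := by
  have hs : 1 ≤ Real.sqrt x := Real.one_le_sqrt.2 (by linarith)
  simp only [Sst, Finset.mul_sum]
  rw [Finset.sum_sigma', Mst]
  have key : ∀ n ∈ (Finset.Icc 1 ⌊x⌋₊).filter (fun n : ℕ => Real.sqrt x < (Pfac n : ℝ)),
      1 < n ∧ (n : ℝ) ≤ x ∧ Real.sqrt x < (Pfac n : ℝ) ∧ (Pfac n).Prime ∧ Pfac n ∣ n := by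
    intro n hn
    simp only [Finset.mem_filter, Finset.mem_Icc] at hn
    have h1 : 1 < n := by
      by_contra h
      have : Pfac n = 1 := by rw [Pfac, if_pos (by omega)]
      rw [this] at hn
      norm_num at hn
      linarith [hn.2]
    exact ⟨h1, (Nat.le_floor_iff (by linarith)).1 hn.1.2, hn.2, Pfac_mem h1⟩
  refine Finset.sum_bij' (fun n _ => (⟨Pfac n, n / Pfac n⟩ : (_ : ℕ) × ℕ))
    (fun a _ => a.1 * a.2) ?_ ?_ ?_ ?_ ?_
  · intro n hn
    obtain ⟨h1, h2, h3, h4, h5⟩ := key n hn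
    have hpos : (0 : ℝ) < Pfac n := by exact_mod_cast h4.pos
    simp only [Finset.mem_sigma, Finset.mem_filter, Finset.mem_Icc]
    refine ⟨⟨⟨h4.one_lt.le, ?_⟩, h4, h3⟩, ?_, ?_⟩
    · exact (Nat.le_of_dvd (by omega) h5).trans (Nat.le_floor h2)
    · exact Nat.div_pos (Nat.le_of_dvd (by omega) h5) h4.pos
    · apply Nat.le_floor
      rw [Nat.cast_div h5 hpos.ne']
      gcongr
  · rintro ⟨p, m⟩ ha
    simp only [Finset.mem_sigma, Finset.mem_filter, Finset.mem_Icc] at ha ⊢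
    obtain ⟨⟨⟨h1, h2⟩, h3, h4⟩, h5, h6⟩ := ha
    obtain ⟨h7, h8⟩ := lt_of_sqrt_lt hx h4 h6
    rw [Pfac_mul h3 h5 (by exact_mod_cast h7.trans h4)]
    refine ⟨⟨Nat.mul_pos h1 h5, Nat.le_floor (by push_cast; exact h8)⟩, h4⟩
  · intro n hn
    obtain ⟨h1, h2, h3, h4, h5⟩ := key n hn
    exact Nat.mul_div_cancel' h5
  · rintro ⟨p, m⟩ ha
    simp only [Finset.mem_sigma, Finset.mem_filter, Finset.mem_Icc] at ha
    obtain ⟨⟨⟨h1, h2⟩, h3, h4⟩, h5, h6⟩ := ha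
    obtain ⟨h7, h8⟩ := lt_of_sqrt_lt hx h4 h6
    have := Pfac_mul h3 h5 (by exact_mod_cast h7.trans h4)
    simp only [this]
    rw [Nat.mul_div_cancel_left _ h1]
  · intro n hn
    obtain ⟨h1, h2, h3, h4, h5⟩ := key n hn
    rw [← hf.map_mul ω _ _ h4.pos (Nat.div_pos (Nat.le_of_dvd (by omega) h5) h4.pos),
      Nat.mul_div_cancel' h5]

lemma measurable_sigmaAlg {Ω : Type*} [MeasurableSpace Ω] {μ : Measure Ω} {f : Ω → ℕ → ℂ}
    (hf : IsSteinhausRMF μ f) {x : ℝ} (n : ℕ) (h1 : 1 ≤ n) (hn : (n : ℝ) ≤ Real.sqrt x) :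
    Measurable[sigmaAlgSqrt f x] (fun ω => f ω n) := by
  induction n using Nat.strong_induction_on with
  | _ n ih =>
    rcases Nat.eq_or_lt_of_le h1 with h | h
    · subst h
      simp only [hf.map_one]
      exact measurable_const
    · have hp := Nat.minFac_prime (n := n) (by omega)
      have hd := Nat.minFac_dvd n
      have hle := Nat.le_of_dvd (by omega) hd
      have hq : 0 < n / n.minFac := Nat.div_pos hle hp.pos
      have hlt : n / n.minFac < n := Nat.div_lt_self (by omega) hp.one_lt
      have hqm := ih _ hlt hq (le_trans (by exact_mod_cast hlt.le) hn)
      have hpm : Measurable[sigmaAlgSqrt f x] (fun ω => f ω n.minFac) := by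
        apply Measurable.of_comap_le
        exact le_iSup₂_of_le (f := fun (p : ℕ) (_ : p ∈ {p : ℕ | p.Prime ∧ (p : ℝ) ≤ Real.sqrt x}) =>
          MeasurableSpace.comap (fun ω => f ω p) (inferInstance : MeasurableSpace ℂ))
          n.minFac ⟨hp, le_trans (by exact_mod_cast hle) hn⟩ le_rfl
      have : (fun ω => f ω n) = fun ω => f ω n.minFac * f ω (n / n.minFac) := by
        funext ω
        rw [← hf.map_mul ω _ _ hp.pos hq, Nat.mul_div_cancel' hd]
      rw [this]
      exact hpm.mul hqm

lemma steinhaus_norm {Ω : Type*} [MeasurableSpace Ω] {μ : Measure Ω} {f : Ω → ℕ → ℂ}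
    (hf : IsSteinhausRMF μ f) {p : ℕ} (hp : p.Prime) : ∀ᵐ ω ∂μ, ‖f ω p‖ = 1 := by
  have hs : MeasurableSet {z : ℂ | ‖z‖ = 1} := measurableSet_eq_fun measurable_norm measurable_const
  have : ∀ᵐ z ∂(Measure.map (fun ω => f ω p) μ), ‖z‖ = 1 := by
    rw [hf.unif p hp, ae_map_iff (by fun_prop) hs]
    refine Filter.Eventually.of_forall fun θ => ?_
    have : (2 * π * θ * Complex.I : ℂ) = ((2 * π * θ : ℝ) : ℂ) * Complex.I := by push_cast; ring
    rw [this, Complex.norm_exp_ofReal_mul_I]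
  exact (ae_map_iff (hf.meas p).aemeasurable hs).1 this

lemma steinhaus_integral {Ω : Type*} [MeasurableSpace Ω] {μ : Measure Ω} {f : Ω → ℕ → ℂ}
    (hf : IsSteinhausRMF μ f) {p : ℕ} (hp : p.Prime) : ∫ ω, f ω p ∂μ = 0 := by
  have h := integral_map (μ := μ) (hf.meas p).aemeasurable (f := fun z : ℂ => z)
    (aestronglyMeasurable_id)
  rw [← h, hf.unif p hp, integral_map (f := fun z : ℂ => z) (by fun_prop) aestronglyMeasurable_id,
    ← intervalIntegral.integral_of_le zero_le_one]
  have h2 : (2 * π * Complex.I : ℂ) ≠ 0 := Complex.two_pi_I_ne_zero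
  have h3 : ∀ θ : ℝ, (2 * π * θ * Complex.I : ℂ) = (2 * π * Complex.I) * θ := fun θ => by ring
  simp only [h3]
  rw [integral_exp_mul_complex h2]
  simp [Complex.exp_two_pi_mul_I]

lemma steinhaus_subG {Ω : Type*} [MeasurableSpace Ω] {μ : Measure Ω} [IsProbabilityMeasure μ]
    {f : Ω → ℕ → ℂ}
    (hf : IsSteinhausRMF μ f) {p : ℕ} (hp : p.Prime) (c : ℂ) :
    HasSubgaussianMGF (fun ω => (c * f ω p).re) (‖c‖₊ ^ 2) μ := by
  have hm : Measurable (fun ω => (c * f ω p).re) :=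
    Complex.measurable_re.comp ((hf.meas p).const_mul c)
  have hb : ∀ᵐ ω ∂μ, (c * f ω p).re ∈ Set.Icc (-‖c‖) ‖c‖ := by
    filter_upwards [steinhaus_norm hf hp] with ω h
    have h1 := Complex.abs_re_le_norm (c * f ω p)
    rw [norm_mul, h, mul_one] at h1
    exact abs_le.1 h1
  have hi : Integrable (fun ω => f ω p) μ := by
    refine Integrable.of_bound (hf.meas p).aestronglyMeasurable 1 ?_
    filter_upwards [steinhaus_norm hf hp] with ω h using h.le
  have h0 : ∫ ω, (c * f ω p).re ∂μ = 0 := by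
    have := integral_re (𝕜 := ℂ) (hi.const_mul c)
    rw [integral_const_mul, steinhaus_integral hf hp] at this
    simpa using this
  have := hasSubgaussianMGF_of_mem_Icc_of_integral_eq_zero hm.aemeasurable hb h0
  convert this using 2
  ext
  simp only [coe_nnnorm, NNReal.coe_div, Real.norm_eq_abs, NNReal.coe_ofNat]
  rw [show ‖c‖ - -‖c‖ = 2 * ‖c‖ by ring, abs_of_nonneg (by positivity)]
  ring

lemma steinhaus_hoeffding {Ω : Type*} [MeasurableSpace Ω] {μ : Measure Ω} [IsProbabilityMeasure μ]
    {f : Ω → ℕ → ℂ} (hf : IsSteinhausRMF μ f) (T : Finset Nat.Primes) (c : T → ℂ)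
    {lam : ℝ} (hlam : 0 < lam) :
    μ.real {ω | lam ≤ |(∑ p : T, c p * f ω (p : Nat.Primes)).re|} ≤
      2 * Real.exp (-(lam ^ 2) / (2 * ∑ p : T, ‖c p‖ ^ 2)) := by
  have one : ∀ d : T → ℂ, (∀ p, ‖d p‖ = ‖c p‖) →
      μ.real {ω | lam ≤ ∑ p : T, (d p * f ω (p : Nat.Primes)).re} ≤
      Real.exp (-(lam ^ 2) / (2 * ∑ p : T, ‖c p‖ ^ 2)) := by
    intro d hd
    have hind : iIndepFun (fun (p : T) ω => (d p * f ω (p : Nat.Primes)).re) μ := by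
      have h1 := hf.indep.precomp (g := fun p : T => (p : Nat.Primes)) Subtype.val_injective
      exact h1.comp (fun p z => (d p * z).re) (fun p => by fun_prop)
    have := HasSubgaussianMGF.measure_sum_ge_le_of_iIndepFun hind (s := Finset.univ)
      (c := fun p => ‖d p‖₊ ^ 2) (fun p _ => steinhaus_subG hf p.1.2 (d p)) hlam.le
    simpa [hd] using this
  have h1 := one c (fun _ => rfl)
  have h2 := one (fun p => - c p) (fun _ => norm_neg _)
  have hsub : {ω | lam ≤ |(∑ p : T, c p * f ω (p : Nat.Primes)).re|} ⊆
      {ω | lam ≤ ∑ p : T, (c p * f ω (p : Nat.Primes)).re} ∪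
      {ω | lam ≤ ∑ p : T, (- c p * f ω (p : Nat.Primes)).re} := by
    intro ω hω
    simp only [Set.mem_setOf_eq, Set.mem_union, Complex.re_sum] at hω ⊢
    rcases le_abs.1 hω with h | h
    · exact Or.inl h
    · right
      simpa only [neg_mul, Complex.neg_re, Finset.sum_neg_distrib] using h
  calc _ ≤ _ := measureReal_mono hsub
    _ ≤ _ := measureReal_union_le _ _
    _ ≤ _ := by linarith

/-- large primes up to `x` -/
def Tst (x : ℝ) : Finset Nat.Primes :=
  Finset.subtype Nat.Prime ((Finset.Icc 1 ⌊x⌋₊).filter (fun p : ℕ => Real.sqrt x < (p : ℝ)))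

/-- small primes -/
def Ust (x : ℝ) : Finset Nat.Primes :=
  Finset.subtype Nat.Prime ((Finset.Icc 1 ⌊Real.sqrt x⌋₊))

lemma sum_Tst {x : ℝ} {E : Type*} [AddCommMonoid E] (g : ℕ → E) :
    ∑ p ∈ (Finset.Icc 1 ⌊x⌋₊).filter (fun p : ℕ => Nat.Prime p ∧ Real.sqrt x < (p : ℝ)), g p
      = ∑ p : Tst x, g (p : Nat.Primes) := by
  rw [Finset.sum_coe_sort (Tst x) (fun p => g (p : ℕ))]
  symm
  refine Finset.sum_bij (fun p _ => (p : ℕ)) ?_ ?_ ?_ ?_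
  · intro p hp
    have := Finset.mem_subtype.1 hp
    simp only [Finset.mem_filter] at this ⊢
    exact ⟨this.1, p.2, this.2⟩
  · intro p _ q _ h
    exact Subtype.ext h
  · intro p hp
    simp only [Finset.mem_filter] at hp
    exact ⟨⟨p, hp.2.1⟩, Finset.mem_subtype.2 (Finset.mem_filter.2 ⟨hp.1, hp.2.2⟩), rfl⟩
  · intro p _
    rfl

lemma sigmaAlg_eq {Ω : Type*} (f : Ω → ℕ → ℂ) (x : ℝ) :
    sigmaAlgSqrt f x =
      MeasurableSpace.comap (fun ω (p : Ust x) => f ω (p : Nat.Primes)) inferInstance := by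
  apply le_antisymm
  · refine iSup₂_le fun p hp => ?_
    have hmem : (⟨p, hp.1⟩ : Nat.Primes) ∈ Ust x :=
      Finset.mem_subtype.2 (Finset.mem_Icc.2 ⟨hp.1.one_lt.le, Nat.le_floor hp.2⟩)
    rw [← measurable_iff_comap_le]
    exact Measurable.comp (g := fun z : Ust x → ℂ => z ⟨⟨p, hp.1⟩, hmem⟩) (measurable_pi_apply _)
      (comap_measurable (fun ω (p : Ust x) => f ω (p : Nat.Primes)))
  · rw [← measurable_iff_comap_le]
    refine @measurable_pi_lambda _ _ _ (sigmaAlgSqrt f x) _ _ fun p => ?_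
    apply Measurable.of_comap_le
    have h1 := Finset.mem_Icc.1 (Finset.mem_subtype.1 p.2)
    exact le_iSup₂_of_le (f := fun (p : ℕ) (_ : p ∈ {p : ℕ | p.Prime ∧ (p : ℝ) ≤ Real.sqrt x}) =>
          MeasurableSpace.comap (fun ω => f ω p) (inferInstance : MeasurableSpace ℂ))
          ((p : Nat.Primes) : ℕ) ⟨p.1.2, (Nat.le_floor_iff (Real.sqrt_nonneg x)).1 h1.2⟩ le_rfl

/-- conditional expectation for independent variables -/
lemma condExp_indep {Ω β γ : Type*} [MeasurableSpace Ω] {μ : Measure Ω} [IsProbabilityMeasure μ]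
    [mβ : MeasurableSpace β] [MeasurableSpace γ] [StandardBorelSpace γ] [Nonempty γ]
    {X : Ω → β} {Y : Ω → γ} (hX : Measurable X) (hY : Measurable Y) (hXY : IndepFun X Y μ)
    {A : Set (β × γ)} (hA : MeasurableSet A) :
    μ[Set.indicator {ω | (X ω, Y ω) ∈ A} (fun _ => (1 : ℝ)) | mβ.comap X] =ᵐ[μ]
      fun ω => μ.real {ω' | (X ω, Y ω') ∈ A} := by
  have h1 := condExp_prod_ae_eq_integral_condDistrib (μ := μ) hX hY.aemeasurable
    (f := A.indicator (fun _ => (1 : ℝ))) (stronglyMeasurable_const.indicator hA) (by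
      refine Integrable.of_bound (C := 1) ?_ ?_
      · exact ((stronglyMeasurable_const.indicator hA).comp_measurable
          (hX.prodMk hY)).aestronglyMeasurable
      · refine Filter.Eventually.of_forall fun ω => ?_
        by_cases h : (X ω, Y ω) ∈ A <;> simp [h])
  have h2 : condDistrib Y X μ =ᵐ[μ.map X] Kernel.const β (μ.map Y) := by
    have : IsProbabilityMeasure (μ.map Y) := Measure.isProbabilityMeasure_map hY.aemeasurable
    apply condDistrib_ae_eq_of_measure_eq_compProd X hY.aemeasurable
    rw [Measure.compProd_const]
    exact (indepFun_iff_map_prod_eq_prod_map_map hX.aemeasurable hY.aemeasurable).1 hXY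
  have h3 := ae_of_ae_map hX.aemeasurable h2
  have e : (fun ω => A.indicator (fun _ => (1 : ℝ)) (X ω, Y ω)) =
      Set.indicator {ω | (X ω, Y ω) ∈ A} (fun _ => (1 : ℝ)) := by
    funext ω
    by_cases h : (X ω, Y ω) ∈ A <;> simp [h]
  rw [e] at h1
  filter_upwards [h1, h3] with ω h1 h3
  rw [h1, h3, Kernel.const_apply]
  have hA' : MeasurableSet {y | (X ω, y) ∈ A} := measurable_prodMk_left hA
  have e2 : (fun y => A.indicator (fun _ => (1 : ℝ)) (X ω, y)) =
      Set.indicator {y | (X ω, y) ∈ A} 1 := by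
    funext y
    by_cases h : (X ω, y) ∈ A <;> simp [h]
  rw [e2, integral_indicator_one hA', map_measureReal_apply hY hA']
  rfl

lemma hoeffding_phase {Ω : Type*} [MeasurableSpace Ω] (μ : Measure Ω) [IsProbabilityMeasure μ]
    (f : Ω → ℕ → ℂ) (hf : IsSteinhausRMF μ f) (x : ℝ) (hx : 4 ≤ x)
    (lam : ℝ) (hlam : 0 < lam) (u : ℂ) (hu : ‖u‖ = 1) :
    ∀ᵐ ω ∂μ,
      ((μ[Set.indicator {ω' | lam ≤ |(u * Mst f ω' x).re|}
          (fun _ => (1 : ℝ))|sigmaAlgSqrt f x]) ω ≤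
          2 * Real.exp (-(lam ^ 2) / (2 * Vst f ω x)) ∧
        (Vst f ω x = 0 →
          (μ[Set.indicator {ω' | lam ≤ |(u * Mst f ω' x).re|}
              (fun _ => (1 : ℝ))|sigmaAlgSqrt f x]) ω = 0)) := by
  set X : Ω → (Ust x → ℂ) := fun ω p => f ω (p : Nat.Primes) with hXdef
  set Y : Ω → (Tst x → ℂ) := fun ω p => f ω (p : Nat.Primes) with hYdef
  have hX : Measurable X := measurable_pi_lambda _ fun p => hf.meas _
  have hY : Measurable Y := measurable_pi_lambda _ fun p => hf.meas _
  have hdisj : Disjoint (Ust x) (Tst x) := by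
    rw [Finset.disjoint_left]
    intro p h1 h2
    have h1 := (Finset.mem_Icc.1 (Finset.mem_subtype.1 h1)).2
    have h2 := (Finset.mem_filter.1 (Finset.mem_subtype.1 h2)).2
    have h1 := (Nat.le_floor_iff (Real.sqrt_nonneg x)).1 h1
    linarith
  have hXY : IndepFun X Y μ := hf.indep.indepFun_finset _ _ hdisj (fun p => hf.meas _)
  have hTs : ∀ p : Tst x, Real.sqrt x < ((p : Nat.Primes) : ℕ) := fun p =>
    (Finset.mem_filter.1 (Finset.mem_subtype.1 p.2)).2
  have hC : Measurable[sigmaAlgSqrt f x]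
      (fun ω (p : Tst x) => Sst f x ω ((p : Nat.Primes) : ℕ)) := by
    refine @measurable_pi_lambda _ _ _ (sigmaAlgSqrt f x) _ _ fun p => ?_
    unfold Sst
    refine Finset.measurable_fun_sum _ fun m hm => ?_
    have hm := Finset.mem_Icc.1 hm
    exact measurable_sigmaAlg hf m hm.1 (lt_of_sqrt_lt hx (hTs p) hm.2).1.le
  rw [sigmaAlg_eq] at hC
  obtain ⟨g, hg, hgC⟩ := hC.exists_eq_measurable_comp
  have hgC' : ∀ ω (p : Tst x), Sst f x ω ((p : Nat.Primes) : ℕ) = g (X ω) p := fun ω p =>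
    congrFun (congrFun hgC ω) p
  let A : Set ((Ust x → ℂ) × (Tst x → ℂ)) :=
    {z | lam ≤ |(∑ p : Tst x, (u * g z.1 p) * z.2 p).re|}
  have hA : MeasurableSet A := by
    apply measurableSet_le measurable_const
    apply Measurable.abs
    apply Complex.measurable_re.comp
    refine Finset.measurable_fun_sum _ fun p _ => ?_
    have h1 : Measurable (fun z : (Ust x → ℂ) × (Tst x → ℂ) => g z.1 p) :=
      (measurable_pi_apply p).comp (hg.comp measurable_fst)
    have h2 : Measurable (fun z : (Ust x → ℂ) × (Tst x → ℂ) => z.2 p) :=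
      (measurable_pi_apply p).comp measurable_snd
    exact (h1.const_mul u).mul h2
  have hM : ∀ ω, u * Mst f ω x = ∑ p : Tst x, (u * g (X ω) p) * Y ω p := by
    intro ω
    rw [Mst_eq hf hx, sum_Tst (fun p => f ω p * Sst f x ω p), Finset.mul_sum]
    refine Finset.sum_congr rfl fun p _ => ?_
    rw [hgC']
    ring
  have hV : ∀ ω, Vst f ω x = ∑ p : Tst x, ‖u * g (X ω) p‖ ^ 2 := by
    intro ω
    have : Vst f ω x = _ := sum_Tst (fun p => ‖Sst f x ω p‖ ^ 2)
    rw [this]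
    refine Finset.sum_congr rfl fun p _ => ?_
    rw [hgC', norm_mul, hu, one_mul]
  have hset : {ω' | lam ≤ |(u * Mst f ω' x).re|} = {ω | (X ω, Y ω) ∈ A} := by
    ext ω
    simp only [Set.mem_setOf_eq, hM, A]
  rw [hset, sigmaAlg_eq]
  filter_upwards [condExp_indep hX hY hXY hA] with ω hω
  rw [hω, hV]
  refine ⟨steinhaus_hoeffding hf (Tst x) (fun p => u * g (X ω) p) hlam, fun h0 => ?_⟩
  have hz : ∀ p : Tst x, u * g (X ω) p = 0 := by
    intro p
    have := (Finset.sum_eq_zero_iff_of_nonneg (fun p _ => by positivity)).1 h0 p (Finset.mem_univ p)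
    simpa using this
  have : {ω' | (X ω, Y ω') ∈ A} = ∅ := by
    ext ω'
    simp only [A, Set.mem_setOf_eq, hz]
    simpa using hlam
  rw [this]
  simp

/-- Conditional Hoeffding bound for the Steinhaus case: almost surely,
`ℙ(|Re M_f(x)| ≥ λ | 𝓕(√x)) ≤ 2 exp(-λ²/(2 V(x)))` and
`ℙ(|Im M_f(x)| ≥ λ | 𝓕(√x)) ≤ 2 exp(-λ²/(2 V(x)))`, with the left-hand sides
vanishing on `{V(x) = 0}`. -/
theorem conditional_hoeffding_steinhaus
    {Ω : Type*} [MeasurableSpace Ω] (μ : Measure Ω) [IsProbabilityMeasure μ]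
    (f : Ω → ℕ → ℂ) (hf : IsSteinhausRMF μ f) (x : ℝ) (hx : 4 ≤ x)
    (lam : ℝ) (hlam : 0 < lam) :
    ∀ᵐ ω ∂μ,
      ((μ[Set.indicator {ω' | lam ≤ |(Mst f ω' x).re|} (fun _ => (1 : ℝ))|sigmaAlgSqrt f x]) ω ≤
          2 * Real.exp (-(lam ^ 2) / (2 * Vst f ω x)) ∧
        (Vst f ω x = 0 →
          (μ[Set.indicator {ω' | lam ≤ |(Mst f ω' x).re|}
              (fun _ => (1 : ℝ))|sigmaAlgSqrt f x]) ω = 0)) ∧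
      ((μ[Set.indicator {ω' | lam ≤ |(Mst f ω' x).im|} (fun _ => (1 : ℝ))|sigmaAlgSqrt f x]) ω ≤
          2 * Real.exp (-(lam ^ 2) / (2 * Vst f ω x)) ∧
        (Vst f ω x = 0 →
          (μ[Set.indicator {ω' | lam ≤ |(Mst f ω' x).im|}
              (fun _ => (1 : ℝ))|sigmaAlgSqrt f x]) ω = 0)) := by
  have h1 := hoeffding_phase μ f hf x hx lam hlam 1 (by simp)
  have h2 := hoeffding_phase μ f hf x hx lam hlam (-Complex.I) (by simp)
  simp only [one_mul] at h1
  have e : ∀ z : ℂ, (-Complex.I * z).re = z.im := fun z => by simp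
  simp only [e] at h2
  filter_upwards [h1, h2] with ω a b using ⟨a, b⟩
end
end

section
/- Let f be a Rademacher random multiplicative function and let q ≥ 1 be an integer. There exists a constant C = C(q) > 0 such that for all real x ≥ 2 and X ≥ 1, every prime p with √x < p ≤ x/(X+1), and every real t with p ≤ t ≤ p·(1+1/X), one has E[|∑_{x/t < m ≤ x/p} f(m)|^{2q}] ≤ C · (x/p)^q · (log x)^{4q²−6q+2} · X^{−1/2}. -/
open MeasureTheory ProbabilityTheory

noncomputable section

/-- A Rademacher random multiplicative function. -/
structure IsRademacherRMF {Ω : Type*} [MeasurableSpace Ω] (μ : Measure Ω)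
    (f : Ω → ℕ → ℝ) : Prop where
  meas : ∀ n : ℕ, Measurable fun ω => f ω n
  indep : iIndepFun
    (fun (p : Nat.Primes) (ω : Ω) => f ω (p : ℕ)) μ
  prob_one : ∀ p : ℕ, p.Prime → μ {ω | f ω p = 1} = 1 / 2
  prob_neg_one : ∀ p : ℕ, p.Prime → μ {ω | f ω p = -1} = 1 / 2
  eq_zero_of_not_squarefree : ∀ (ω : Ω) (n : ℕ), ¬Squarefree n → f ω n = 0
  eq_prod_of_squarefree : ∀ (ω : Ω) (n : ℕ), Squarefree n →
    f ω n = ∏ p ∈ n.primeFactors, f ω p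


lemma aux_choose_le (k j : ℕ) : (2 * k).choose (2 * j) ≤ k.choose j * (2 * k - 1) ^ j := by
  induction j with
  | zero => simp
  | succ j ih =>
    rcases Nat.lt_or_ge j k with hjk | hjk
    · have h1 := Nat.choose_succ_right_eq (2 * k) (2 * j)
      have h2 := Nat.choose_succ_right_eq (2 * k) (2 * j + 1)
      have h3 := Nat.choose_succ_right_eq k j
      obtain ⟨d, rfl⟩ : ∃ d, k = j + 1 + d := ⟨k - (j + 1), by omega⟩
      rw [show 2 * (j + 1 + d) - 2 * j = 2 * (d + 1) by omega] at h1
      rw [show 2 * (j + 1 + d) - (2 * j + 1) = 2 * d + 1 by omega] at h2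
      rw [show j + 1 + d - j = d + 1 by omega] at h3
      rw [show 2 * (j + 1 + d) - 1 = 2 * j + 2 * d + 1 by omega] at ih ⊢
      rw [show 2 * (j + 1) = 2 * j + 1 + 1 by ring]
      set k := j + 1 + d
      set a := (2 * k).choose (2 * j)
      set b := (2 * k).choose (2 * j + 1)
      set c := (2 * k).choose (2 * j + 1 + 1)
      set e := k.choose j
      set g := k.choose (j + 1)
      set R := 2 * j + 2 * d + 1 with hR
      have hp : 0 < (2 * j + 1 + 1) * (2 * j + 1) := by positivity
      refine Nat.le_of_mul_le_mul_right ?_ hp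
      calc c * ((2 * j + 1 + 1) * (2 * j + 1)) = (c * (2 * j + 1 + 1)) * (2 * j + 1) := by ring
        _ = (b * (2 * j + 1)) * (2 * d + 1) := by rw [h2]; ring
        _ = a * (2 * (d + 1) * (2 * d + 1)) := by rw [h1]; ring
        _ ≤ (e * R ^ j) * (2 * (d + 1) * (2 * d + 1)) := Nat.mul_le_mul_right _ ih
        _ = 2 * (e * (d + 1)) * R ^ j * (2 * d + 1) := by ring
        _ = g * (2 * j + 1 + 1) * R ^ j * (2 * d + 1) := by rw [← h3]; ring
        _ ≤ g * (2 * j + 1 + 1) * R ^ j * (R * (2 * j + 1)) := by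
            apply Nat.mul_le_mul_left
            nlinarith
        _ = _ := by ring
    · rw [Nat.choose_eq_zero_of_lt (by omega)]; exact Nat.zero_le _

lemma aux_sum_even (F : ℕ → ℝ) (hF : ∀ j, F (2 * j + 1) = 0) (k : ℕ) :
    ∑ i ∈ Finset.range (2 * k + 1), F i = ∑ j ∈ Finset.range (k + 1), F (2 * j) := by
  induction k with
  | zero => simp
  | succ k ih =>
    rw [Finset.sum_range_succ _ (k + 1), ← ih, show 2 * (k + 1) + 1 = 2 * k + 1 + 1 + 1 by ring,
      Finset.sum_range_succ, Finset.sum_range_succ, hF]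
    ring_nf

lemma aux_two_point (k : ℕ) (hk : 1 ≤ k) (a b : ℝ) :
    ((a + b) ^ (2 * k) + (a - b) ^ (2 * k)) / 2 ≤ (a ^ 2 + (2 * k - 1) * b ^ 2) ^ k := by
  have h1 : ((a + b) ^ (2 * k) + (a - b) ^ (2 * k)) / 2
      = ∑ i ∈ Finset.range (2 * k + 1),
        (1 + (-1) ^ i) / 2 * (b ^ i * a ^ (2 * k - i) * ((2 * k).choose i : ℝ)) := by
    rw [show a + b = b + a by ring, show a - b = -b + a by ring, add_pow, add_pow,
      ← Finset.sum_add_distrib, Finset.sum_div]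
    refine Finset.sum_congr rfl fun i _ => ?_
    rw [neg_pow b]; ring
  rw [h1, aux_sum_even _ (by intro j; simp [pow_succ, pow_mul]), add_comm (a ^ 2), add_pow]
  refine Finset.sum_le_sum fun j hj => ?_
  have hj : j ≤ k := by simpa [Nat.lt_succ_iff] using hj
  have h2 : ((2 * k).choose (2 * j) : ℝ) ≤ k.choose j * (2 * k - 1) ^ j := by
    have := aux_choose_le k j
    have h := (Nat.cast_le (α := ℝ)).2 this
    push_cast [Nat.cast_sub (show 1 ≤ 2 * k by omega)] at h
    exact h
  have h3 : a ^ (2 * k - 2 * j) = (a ^ 2) ^ (k - j) := by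
    rw [← pow_mul]; congr 1; omega
  rw [h3, mul_pow, ← pow_mul b, show (-1 : ℝ) ^ (2 * j) = 1 by simp [pow_mul]]
  have : 0 ≤ b ^ (2 * j) * (a ^ 2) ^ (k - j) := by
    rw [pow_mul]; positivity
  nlinarith [mul_le_mul_of_nonneg_left h2 this]

lemma aux_convex (k : ℕ) (G H r u v : ℝ) (hG : 0 < G) (hH : 0 < H) (hr : 0 < r)
    (hu : 0 ≤ u) (hv : 0 ≤ v) :
    (u + r * v) ^ k ≤ (G + r * H) ^ k *
      (G / (G + r * H) * (u ^ k / G ^ k) + r * H / (G + r * H) * (v ^ k / H ^ k)) := by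
  have hs : 0 < G + r * H := by positivity
  have hu' : u / G ∈ Set.Ici (0 : ℝ) := by simp only [Set.mem_Ici]; positivity
  have hv' : v / H ∈ Set.Ici (0 : ℝ) := by simp only [Set.mem_Ici]; positivity
  have hw1 : 0 ≤ G / (G + r * H) := by positivity
  have hw2 : 0 ≤ r * H / (G + r * H) := by positivity
  have h := (convexOn_pow (𝕜 := ℝ) k).2 hu' hv' hw1 hw2 (by field_simp)
  simp only [smul_eq_mul, div_pow] at h
  have e : (u + r * v) = (G + r * H) * (G / (G + r * H) * (u / G) + r * H / (G + r * H) * (v / H)) := by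
    field_simp
  rw [e, mul_pow]
  exact mul_le_mul_of_nonneg_left h (by positivity)

lemma aux_zeta_prime (r p : ℕ) (hp : p.Prime) :
    (ArithmeticFunction.zeta ^ r) p = r ∧ (ArithmeticFunction.zeta ^ r) 1 = 1 := by
  induction r with
  | zero => simp [hp.ne_one]
  | succ r ih =>
    rw [pow_succ, ArithmeticFunction.mul_zeta_apply, ArithmeticFunction.mul_zeta_apply,
      hp.sum_divisors, ih.1, ih.2]
    simp [ih.2]

lemma aux_zeta_sqf (r n : ℕ) (hn : Squarefree n) :
    (ArithmeticFunction.zeta ^ r) n = r ^ n.primeFactors.card := by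
  have hm : (ArithmeticFunction.zeta ^ r).IsMultiplicative := by
    induction r with
    | zero => simp
    | succ r ih => rw [pow_succ]; exact ih.mul ArithmeticFunction.isMultiplicative_zeta
  rw [← Finset.prod_const]
  conv_lhs => rw [← Nat.prod_primeFactors_of_squarefree hn]
  rw [hm.map_prod_of_subset_primeFactors n _ (Finset.Subset.refl _)]
  exact Finset.prod_congr rfl fun p hp => (aux_zeta_prime r p (Nat.prime_of_mem_primeFactors hp)).1

lemma aux_sum_zeta (s N : ℕ) :
    ((∑ n ∈ Finset.Ioc 0 N, (ArithmeticFunction.zeta ^ (s + 1)) n : ℕ) : ℝ)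
      ≤ N * (1 + Real.log N) ^ s := by
  induction s generalizing N with
  | zero =>
    have : ∑ n ∈ Finset.Ioc 0 N, (ArithmeticFunction.zeta ^ (0 + 1)) n = N := by
      rw [zero_add, pow_one]; exact ArithmeticFunction.sum_Ioc_zeta N
    rw [this]; simp
  | succ s ih =>
    rw [pow_succ', ArithmeticFunction.sum_Ioc_mul_eq_sum_sum]
    push_cast
    have hl : 0 ≤ Real.log N := Real.log_natCast_nonneg N
    calc _ ≤ ∑ n ∈ Finset.Ioc 0 N, (n : ℝ)⁻¹ * (N * (1 + Real.log N) ^ s) := by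
          refine Finset.sum_le_sum fun n hn => ?_
          obtain ⟨h0, h1⟩ := Finset.mem_Ioc.1 hn
          have := ih (N / n)
          push_cast at this
          have hz : (ArithmeticFunction.zeta n : ℝ) = 1 := by
            simp [ArithmeticFunction.zeta_apply, h0.ne']
          rw [hz, one_mul]
          refine this.trans ?_
          have hd : ((N / n : ℕ) : ℝ) ≤ (n : ℝ)⁻¹ * N := by
            rw [inv_mul_eq_div]; exact Nat.cast_div_le
          have hlog : Real.log ((N / n : ℕ) : ℝ) ≤ Real.log N := by
            apply Real.log_le_log
            · exact_mod_cast Nat.div_pos h1 h0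
            · exact_mod_cast Nat.div_le_self N n
          have : 0 ≤ Real.log ((N / n : ℕ) : ℝ) := Real.log_natCast_nonneg _
          rw [← mul_assoc]
          gcongr
      _ = (∑ n ∈ Finset.Ioc 0 N, (n : ℝ)⁻¹) * (N * (1 + Real.log N) ^ s) := by
          rw [Finset.sum_mul]
      _ ≤ (1 + Real.log N) * (N * (1 + Real.log N) ^ s) := by
          have h := harmonic_le_one_add_log N
          rw [harmonic_eq_sum_Icc] at h
          push_cast at h
          gcongr
          exact h
      _ = _ := by ring

section Hyper

variable {Ω ι : Type*} [MeasurableSpace Ω] [DecidableEq ι]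

/-- Walsh polynomial over subsets of `P`. -/
def walsh (P : Finset ι) (a : Finset ι → ℝ) (x : ι → ℝ) : ℝ :=
  ∑ S ∈ P.powerset, a S * ∏ j ∈ S, x j

lemma walsh_meas (P : Finset ι) (a : Finset ι → ℝ) : Measurable (walsh P a) := by
  unfold walsh
  fun_prop

lemma walsh_congr (P : Finset ι) (a : Finset ι → ℝ) (x y : ι → ℝ) (h : ∀ j ∈ P, x j = y j) :
    walsh P a x = walsh P a y := by
  unfold walsh
  refine Finset.sum_congr rfl fun S hS => ?_
  rw [Finset.prod_congr rfl fun j hj => h j (Finset.mem_powerset.1 hS hj)]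

lemma walsh_insert (P : Finset ι) (i : ι) (hi : i ∉ P) (a : Finset ι → ℝ) (x : ι → ℝ) :
    walsh (insert i P) a x = walsh P a x + x i * walsh P (fun S => a (insert i S)) x := by
  unfold walsh
  rw [Finset.sum_powerset_insert hi, Finset.mul_sum]
  congr 1
  refine Finset.sum_congr rfl fun S hS => ?_
  rw [Finset.prod_insert (fun h => hi (Finset.mem_powerset.1 hS h))]
  ring

lemma walsh_bound (P : Finset ι) (a : Finset ι → ℝ) (x : ι → ℝ)
    (h : ∀ j ∈ P, x j = 1 ∨ x j = -1) : |walsh P a x| ≤ ∑ S ∈ P.powerset, |a S| := by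
  unfold walsh
  refine (Finset.abs_sum_le_sum_abs _ _).trans (Finset.sum_le_sum fun S hS => ?_)
  rw [abs_mul, Finset.abs_prod, Finset.prod_eq_one, mul_one]
  intro j hj
  rcases h j (Finset.mem_powerset.1 hS hj) with h | h <;> simp [h]

lemma walsh_ae {μ : Measure Ω} {Y : ι → Ω → ℝ}
    (hpm : ∀ i, ∀ᵐ ω ∂μ, Y i ω = 1 ∨ Y i ω = -1) (P : Finset ι) :
    ∀ᵐ ω ∂μ, ∀ j ∈ P, Y j ω = 1 ∨ Y j ω = -1 :=
  (Finset.eventually_all P).2 fun i _ => hpm i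

/-- Polynomial expressions in two Walsh polynomials are integrable. -/
lemma walsh_integrable {μ : Measure Ω} [IsProbabilityMeasure μ] {Y : ι → Ω → ℝ}
    (hm : ∀ i, Measurable (Y i)) (hpm : ∀ i, ∀ᵐ ω ∂μ, Y i ω = 1 ∨ Y i ω = -1)
    (P : Finset ι) (a b : Finset ι → ℝ) (φ : ℝ × ℝ → ℝ) (hφ : Continuous φ) :
    Integrable (fun ω => φ (walsh P a (fun j => Y j ω), walsh P b (fun j => Y j ω))) μ := by
  have hY : Measurable (fun ω j => Y j ω) := measurable_pi_lambda _ hm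
  obtain ⟨C, hC⟩ := ((isCompact_Icc (a := -∑ S ∈ P.powerset, |a S|) (b := ∑ S ∈ P.powerset, |a S|)).prod
    (isCompact_Icc (a := -∑ S ∈ P.powerset, |b S|) (b := ∑ S ∈ P.powerset, |b S|))).exists_bound_of_continuousOn
      hφ.continuousOn
  refine Integrable.of_bound (C := C) ?_ ?_
  · exact (hφ.measurable.comp (((walsh_meas P a).comp hY).prodMk
      ((walsh_meas P b).comp hY))).aestronglyMeasurable
  · filter_upwards [walsh_ae hpm P] with ω h
    exact hC _ ⟨abs_le.1 (walsh_bound P a _ h), abs_le.1 (walsh_bound P b _ h)⟩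

/-- Bonami's hypercontractive inequality for even exponents. -/
lemma hyper {μ : Measure Ω} [IsProbabilityMeasure μ] {Y : ι → Ω → ℝ}
    (hm : ∀ i, Measurable (Y i)) (hpm : ∀ i, ∀ᵐ ω ∂μ, Y i ω = 1 ∨ Y i ω = -1)
    (hind : iIndepFun Y μ) (hz : ∀ i, ∫ ω, Y i ω ∂μ = 0) (k : ℕ) (hk : 1 ≤ k)
    (P : Finset ι) : ∀ (a : Finset ι → ℝ) (B : ℝ),
      ∑ S ∈ P.powerset, a S ^ 2 * (2 * k - 1 : ℝ) ^ S.card < B →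
      ∫ ω, walsh P a (fun j => Y j ω) ^ (2 * k) ∂μ ≤ B ^ k := by
  induction P using Finset.induction_on with
  | empty =>
    intro a B h
    simp [walsh] at h ⊢
    rw [pow_mul]
    exact pow_le_pow_left₀ (sq_nonneg _) h.le k
  | insert i P hi ih =>
    intro a B hB
    set r : ℝ := 2 * k - 1 with hr
    have hk' : (1 : ℝ) ≤ k := by exact_mod_cast hk
    have hr1 : 1 ≤ r := by linarith
    set b : Finset ι → ℝ := fun S => a (insert i S) with hb
    rw [Finset.sum_powerset_insert hi] at hB
    set G₀ := ∑ S ∈ P.powerset, a S ^ 2 * r ^ S.card with hG₀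
    set H₀ := ∑ S ∈ P.powerset, b S ^ 2 * r ^ S.card with hH₀
    have hH₁ : ∑ S ∈ P.powerset, a (insert i S) ^ 2 * r ^ (insert i S).card = r * H₀ := by
      rw [hH₀, Finset.mul_sum]
      refine Finset.sum_congr rfl fun S hS => ?_
      rw [Finset.card_insert_of_notMem (fun h => hi (Finset.mem_powerset.1 hS h))]
      ring
    rw [hH₁] at hB
    have hG₀n : 0 ≤ G₀ := Finset.sum_nonneg fun S _ => by positivity
    have hH₀n : 0 ≤ H₀ := Finset.sum_nonneg fun S _ => by positivity
    set δ := (B - (G₀ + r * H₀)) / (1 + r) with hδ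
    have hδp : 0 < δ := div_pos (by linarith) (by linarith)
    set G := G₀ + δ with hG
    set H := H₀ + δ with hH
    have hGp : 0 < G := by linarith
    have hHp : 0 < H := by linarith
    have hGH : G + r * H = B := by
      have : δ * (1 + r) = B - (G₀ + r * H₀) := by rw [hδ]; field_simp
      rw [hG, hH]; linarith
    have ihG := ih a G (by linarith)
    have ihH := ih b H (by linarith)
    set g : Ω → ℝ := fun ω => walsh P a (fun j => Y j ω) with hg
    set h : Ω → ℝ := fun ω => walsh P b (fun j => Y j ω) with hh
    -- independence
    have hY : Measurable (fun ω j => Y j ω) := measurable_pi_lambda _ hm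
    have hgm : Measurable g := (walsh_meas P a).comp hY
    have hhm : Measurable h := (walsh_meas P b).comp hY
    have hIn : IndepFun (fun ω => ((g ω + h ω) ^ (2 * k) - (g ω - h ω) ^ (2 * k)) / 2) (Y i) μ := by
      have h0 := hind.indepFun_finset P {i} (by simpa using hi) hm
      let ext : (P → ℝ) → ι → ℝ := fun v j => if hj : j ∈ P then v ⟨j, hj⟩ else 0
      have hext : Measurable ext := by
        refine measurable_pi_lambda _ fun j => ?_
        by_cases hj : j ∈ P
        · simp only [ext, hj, dif_pos]; exact measurable_pi_apply _
        · simp only [ext, hj, dif_neg, not_false_iff]; exact measurable_const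
      have hψ : Measurable
          (fun v : ({i} : Finset ι) → ℝ => v ⟨i, Finset.mem_singleton_self i⟩) :=
        measurable_pi_apply _
      have h1 := h0.comp
        (φ := fun v => ((walsh P a (ext v) + walsh P b (ext v)) ^ (2 * k)
          - (walsh P a (ext v) - walsh P b (ext v)) ^ (2 * k)) / 2)
        (ψ := fun v : ({i} : Finset ι) → ℝ => v ⟨i, Finset.mem_singleton_self i⟩)
        (by
          have h1 := (walsh_meas P a).comp hext
          have h2 := (walsh_meas P b).comp hext
          exact (((h1.add h2).pow_const _).sub ((h1.sub h2).pow_const _)).div_const _)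
        hψ
      have key : ∀ c ω, walsh P c (ext fun j : P => Y j ω) = walsh P c (fun j => Y j ω) := by
        intro c ω
        refine walsh_congr P c _ _ fun j hj => ?_
        simp [ext, hj]
      convert h1 using 1
      · funext ω
        simp only [Function.comp, key, hg, hh]
      · rfl
    have hz' : ∫ ω, ((g ω + h ω) ^ (2 * k) - (g ω - h ω) ^ (2 * k)) / 2 * Y i ω ∂μ = 0 := by
      rw [hIn.integral_fun_mul_eq_mul_integral
        ((((hgm.add hhm).pow_const _).sub ((hgm.sub hhm).pow_const _)).div_const _).aestronglyMeasurable
        (hm i).aestronglyMeasurable, hz i, mul_zero]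
    have hiA : Integrable (fun ω => ((g ω + h ω) ^ (2 * k) + (g ω - h ω) ^ (2 * k)) / 2) μ :=
      walsh_integrable hm hpm P a b
        (fun z => ((z.1 + z.2) ^ (2 * k) + (z.1 - z.2) ^ (2 * k)) / 2) (by fun_prop)
    have hiB : Integrable (fun ω => ((g ω + h ω) ^ (2 * k) - (g ω - h ω) ^ (2 * k)) / 2) μ :=
      walsh_integrable hm hpm P a b
        (fun z => ((z.1 + z.2) ^ (2 * k) - (z.1 - z.2) ^ (2 * k)) / 2) (by fun_prop)
    have hig : Integrable (fun ω => g ω ^ (2 * k)) μ :=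
      walsh_integrable hm hpm P a b (fun z => z.1 ^ (2 * k)) (by fun_prop)
    have hih : Integrable (fun ω => h ω ^ (2 * k)) μ :=
      walsh_integrable hm hpm P a b (fun z => z.2 ^ (2 * k)) (by fun_prop)
    have hiBY : Integrable
        (fun ω => ((g ω + h ω) ^ (2 * k) - (g ω - h ω) ^ (2 * k)) / 2 * Y i ω) μ := by
      refine hiB.mul_bdd (c := 1) (hm i).aestronglyMeasurable ?_
      filter_upwards [hpm i] with ω hω
      rcases hω with hω | hω <;> simp [hω]
    calc ∫ ω, walsh (insert i P) a (fun j => Y j ω) ^ (2 * k) ∂μ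
        = ∫ ω, (((g ω + h ω) ^ (2 * k) + (g ω - h ω) ^ (2 * k)) / 2
            + ((g ω + h ω) ^ (2 * k) - (g ω - h ω) ^ (2 * k)) / 2 * Y i ω) ∂μ := by
          refine integral_congr_ae ?_
          filter_upwards [hpm i] with ω hω
          rw [walsh_insert P i hi]
          change (g ω + Y i ω * h ω) ^ (2 * k) = _
          rcases hω with hω | hω
          · rw [hω]; ring
          · rw [hω, show g ω + -1 * h ω = g ω - h ω by ring]; ring
      _ = ∫ ω, ((g ω + h ω) ^ (2 * k) + (g ω - h ω) ^ (2 * k)) / 2 ∂μ := by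
          rw [integral_add hiA hiBY, hz', add_zero]
      _ ≤ ∫ ω, (B ^ k * (G / B * (g ω ^ (2 * k) / G ^ k) + r * H / B * (h ω ^ (2 * k) / H ^ k))) ∂μ := by
          refine integral_mono hiA ?_ fun ω => ?_
          · exact (((hig.div_const _).const_mul _).add ((hih.div_const _).const_mul _)).const_mul _
          · have h1 := aux_two_point k hk (g ω) (h ω)
            have h2 := aux_convex k G H r (g ω ^ 2) (h ω ^ 2) hGp hHp (by linarith)
              (sq_nonneg _) (sq_nonneg _)
            rw [hGH, ← pow_mul, ← pow_mul] at h2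
            exact h1.trans h2
      _ = B ^ k * (G / B * ((∫ ω, g ω ^ (2 * k) ∂μ) / G ^ k)
            + r * H / B * ((∫ ω, h ω ^ (2 * k) ∂μ) / H ^ k)) := by
          rw [integral_const_mul, integral_add ((hig.div_const _).const_mul _)
            ((hih.div_const _).const_mul _), integral_const_mul, integral_const_mul,
            integral_div, integral_div]
      _ ≤ B ^ k * (G / B * 1 + r * H / B * 1) := by
          have hBp : 0 < B := by rw [← hGH]; positivity
          have h1 : (∫ ω, g ω ^ (2 * k) ∂μ) / G ^ k ≤ 1 := (div_le_one (by positivity)).2 ihG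
          have h2 : (∫ ω, h ω ^ (2 * k) ∂μ) / H ^ k ≤ 1 := (div_le_one (by positivity)).2 ihH
          gcongr
      _ = B ^ k := by
          have hBp : 0 < B := by rw [← hGH]; positivity
          rw [mul_one, mul_one, ← add_div, hGH, div_self hBp.ne', mul_one]

end Hyper

section Moments

variable {Ω : Type*} [MeasurableSpace Ω] {μ : Measure Ω} [IsProbabilityMeasure μ]
  {f : Ω → ℕ → ℝ}

lemma rmf_pm (hf : IsRademacherRMF μ f) (p : Nat.Primes) :
    ∀ᵐ ω ∂μ, f ω p = 1 ∨ f ω p = -1 := by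
  have hm := hf.meas p
  have h1 : MeasurableSet {ω | f ω p = 1} := hm (measurableSet_singleton 1)
  have h2 : MeasurableSet {ω | f ω p = -1} := hm (measurableSet_singleton (-1))
  have hd : Disjoint {ω | f ω p = 1} {ω | f ω p = -1} := by
    rw [Set.disjoint_left]
    intro ω h h'
    simp only [Set.mem_setOf_eq] at h h'
    linarith
  have h3 : μ ({ω | f ω p = 1} ∪ {ω | f ω p = -1}) = 1 := by
    rw [measure_union hd h2, hf.prob_one p p.2, hf.prob_neg_one p p.2]
    exact ENNReal.add_halves 1
  exact (mem_ae_iff_prob_eq_one (h1.union h2)).2 h3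

lemma rmf_mean (hf : IsRademacherRMF μ f) (p : Nat.Primes) : ∫ ω, f ω p ∂μ = 0 := by
  have hm := hf.meas p
  have h1 : MeasurableSet {ω | f ω p = 1} := hm (measurableSet_singleton 1)
  have h2 : MeasurableSet {ω | f ω p = -1} := hm (measurableSet_singleton (-1))
  have e : ∫ ω, f ω p ∂μ = ∫ ω, (Set.indicator {ω | f ω p = 1} (fun _ => (1 : ℝ)) ω
      - Set.indicator {ω | f ω p = -1} (fun _ => (1 : ℝ)) ω) ∂μ := by
    refine integral_congr_ae ?_
    filter_upwards [rmf_pm hf p] with ω hω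
    rcases hω with hω | hω
    · simp [Set.indicator, hω]; norm_num
    · simp [Set.indicator, hω]; norm_num
  rw [e, integral_sub ((integrable_const _).indicator h1) ((integrable_const _).indicator h2),
    integral_indicator h1, integral_indicator h2]
  simp [Measure.real, hf.prob_one p p.2, hf.prob_neg_one p p.2]

/-- The set of primes dividing `m`, as a finset of `Nat.Primes`. -/
def pfac (m : ℕ) : Finset Nat.Primes := m.primeFactors.subtype Nat.Prime

lemma prod_pfac {M : Type*} [CommMonoid M] (g : ℕ → M) (m : ℕ) :
    ∏ p ∈ pfac m, g (p : ℕ) = ∏ p ∈ m.primeFactors, g p := by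
  unfold pfac
  exact Finset.prod_subtype_of_mem g fun p hp => Nat.prime_of_mem_primeFactors hp

lemma card_pfac (m : ℕ) : (pfac m).card = m.primeFactors.card := by
  have := prod_pfac (M := Multiplicative ℕ) (fun _ => Multiplicative.ofAdd 1) m
  simp only [Finset.prod_const, ← ofAdd_nsmul, smul_eq_mul, mul_one] at this
  exact Multiplicative.ofAdd.injective this

lemma pfac_inj (A : Finset ℕ) :
    Set.InjOn pfac (A.filter Squarefree : Finset ℕ) := by
  intro m hm n hn h
  simp only [Finset.coe_filter, Set.mem_setOf_eq] at hm hn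
  have h1 := prod_pfac (fun p => p) m
  have h2 := prod_pfac (fun p => p) n
  rw [h] at h1
  rw [← Nat.prod_primeFactors_of_squarefree hm.2, ← Nat.prod_primeFactors_of_squarefree hn.2,
    ← h1, ← h2]

lemma rmf_walsh (hf : IsRademacherRMF μ f) (A : Finset ℕ) :
    ∃ (P : Finset Nat.Primes) (a : Finset Nat.Primes → ℝ),
      (∀ ω, ∑ m ∈ A, f ω m = walsh P a (fun p => f ω (p : ℕ))) ∧
      ∀ r : ℝ, ∑ S ∈ P.powerset, a S ^ 2 * r ^ S.card
        = ∑ m ∈ A with Squarefree m, r ^ m.primeFactors.card := by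
  classical
  set J := (A.filter Squarefree).image pfac with hJ
  set P := J.biUnion id with hP
  have hsub : J ⊆ P.powerset := by
    intro S hS
    rw [Finset.mem_powerset]
    exact Finset.subset_biUnion_of_mem id hS
  have key : ∀ F : Finset Nat.Primes → ℝ,
      ∑ S ∈ P.powerset, (if S ∈ J then (1 : ℝ) else 0) * F S
        = ∑ m ∈ A with Squarefree m, F (pfac m) := by
    intro F
    simp only [ite_mul, one_mul, zero_mul]
    rw [Finset.sum_ite_mem, Finset.inter_eq_right.2 hsub, hJ, Finset.sum_image (pfac_inj A)]
  refine ⟨P, fun S => if S ∈ J then 1 else 0, fun ω => ?_, fun r => ?_⟩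
  · unfold walsh
    rw [key, Finset.sum_filter]
    refine Finset.sum_congr rfl fun m _ => ?_
    split_ifs with h
    · rw [prod_pfac (fun p => f ω p), hf.eq_prod_of_squarefree ω m h]
    · exact hf.eq_zero_of_not_squarefree ω m h
  · simp only [ite_pow, one_pow, ne_eq, OfNat.ofNat_ne_zero, not_false_eq_true, zero_pow]
    rw [key]
    simp only [card_pfac]

lemma rmf_integrable (hf : IsRademacherRMF μ f) (A : Finset ℕ) (k : ℕ) :
    Integrable (fun ω => (∑ m ∈ A, f ω m) ^ k) μ := by
  obtain ⟨P, a, h, -⟩ := rmf_walsh hf A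
  simp only [h]
  exact walsh_integrable (Y := fun (p : Nat.Primes) ω => f ω (p : ℕ)) (fun p => hf.meas p)
    (rmf_pm hf) P a a (fun z => z.1 ^ k) (by fun_prop)

lemma rmf_moment (hf : IsRademacherRMF μ f) (A : Finset ℕ) (k : ℕ) (hk : 1 ≤ k) (B : ℝ)
    (hB : ∑ m ∈ A with Squarefree m, (2 * k - 1 : ℝ) ^ m.primeFactors.card < B) :
    ∫ ω, (∑ m ∈ A, f ω m) ^ (2 * k) ∂μ ≤ B ^ k := by
  obtain ⟨P, a, h, h2⟩ := rmf_walsh hf A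
  simp only [h]
  exact hyper (Y := fun (p : Nat.Primes) ω => f ω (p : ℕ)) (fun p => hf.meas p)
    (rmf_pm hf) hf.indep (rmf_mean hf) k hk P a B (by rw [h2]; exact hB)

/-- Cauchy-Schwarz in the form used here. -/
lemma aux_cs (n : ℕ) (S : Ω → ℝ) (hS : ∀ k : ℕ, Integrable (fun ω => S ω ^ k) μ) (B₁ B₂ T : ℝ)
    (h1 : 0 < B₁) (hT : 0 < T) (h3 : T ^ 2 = B₁ * B₂)
    (hB₁ : ∫ ω, S ω ^ 2 ∂μ ≤ B₁) (hB₂ : ∫ ω, S ω ^ (2 * (2 * n + 1)) ∂μ ≤ B₂) :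
    ∫ ω, |S ω| ^ (2 * (n + 1)) ∂μ ≤ T := by
  set l := T / B₁ with hl
  have hlp : 0 < l := by positivity
  calc ∫ ω, |S ω| ^ (2 * (n + 1)) ∂μ
      ≤ ∫ ω, (l / 2 * S ω ^ 2 + 1 / (2 * l) * S ω ^ (2 * (2 * n + 1))) ∂μ := by
        refine integral_mono_of_nonneg (Filter.Eventually.of_forall fun ω => by positivity)
          (((hS 2).const_mul _).add ((hS _).const_mul _)) (Filter.Eventually.of_forall fun ω => ?_)
        show |S ω| ^ (2 * (n + 1)) ≤ l / 2 * S ω ^ 2 + 1 / (2 * l) * S ω ^ (2 * (2 * n + 1))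
        have e1 : S ω ^ 2 = |S ω| ^ 2 := (sq_abs _).symm
        have e2 : S ω ^ (2 * (2 * n + 1)) = (|S ω| ^ (2 * n + 1)) ^ 2 := by
          rw [pow_mul, e1, ← pow_mul, ← pow_mul, mul_comm]
        rw [e2, e1]
        have h := sq_nonneg (l * |S ω| - |S ω| ^ (2 * n + 1))
        have e3 : l / 2 * |S ω| ^ 2 + 1 / (2 * l) * (|S ω| ^ (2 * n + 1)) ^ 2
            - |S ω| ^ (2 * (n + 1)) = (l * |S ω| - |S ω| ^ (2 * n + 1)) ^ 2 / (2 * l) := by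
          field_simp
          ring
        have : 0 ≤ (l * |S ω| - |S ω| ^ (2 * n + 1)) ^ 2 / (2 * l) := by positivity
        linarith
    _ = l / 2 * ∫ ω, S ω ^ 2 ∂μ + 1 / (2 * l) * ∫ ω, S ω ^ (2 * (2 * n + 1)) ∂μ := by
        rw [integral_add ((hS 2).const_mul _) ((hS _).const_mul _), integral_const_mul,
          integral_const_mul]
    _ ≤ l / 2 * B₁ + 1 / (2 * l) * B₂ := by gcongr
    _ = T := by
        have : B₂ = T ^ 2 / B₁ := by field_simp; linarith
        rw [this, hl]; field_simp; ring

end Moments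

/-- `E[|∑_{x/t < m ≤ x/p} f(m)|^{2q}] ≪_q (x/p)^q (log x)^{4q²-6q+2} X^{-1/2}`. -/
theorem short_interval_moment_rademacher
    {Ω : Type*} [MeasurableSpace Ω] (μ : Measure Ω) [IsProbabilityMeasure μ]
    (f : Ω → ℕ → ℝ) (hf : IsRademacherRMF μ f) (q : ℕ) (hq : 1 ≤ q) :
    ∃ C : ℝ, 0 < C ∧ ∀ x X : ℝ, 2 ≤ x → 1 ≤ X → ∀ p : ℕ, p.Prime →
      Real.sqrt x < (p : ℝ) → (p : ℝ) ≤ x / (X + 1) →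
      ∀ t : ℝ, (p : ℝ) ≤ t → t ≤ (p : ℝ) * (1 + 1 / X) →
      ∫ ω, |∑ m ∈ Finset.Ioc ⌊x / t⌋₊ ⌊x / (p : ℝ)⌋₊, f ω m| ^ (2 * q) ∂μ ≤
        C * (x / (p : ℝ)) ^ q *
          Real.log x ^ (4 * (q : ℝ) ^ 2 - 6 * (q : ℝ) + 2) * X ^ (-(1 / 2 : ℝ)) := by
  obtain ⟨n, rfl⟩ : ∃ n, q = n + 1 := ⟨q - 1, by omega⟩
  set K : ℝ := 3 * (2 * 3 ^ (4 * n)) ^ (2 * n + 1) with hK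
  have hKp : 0 < K := by positivity
  refine ⟨Real.sqrt K, Real.sqrt_pos.2 hKp, ?_⟩
  intro x X hx hX p hp _ hpx t hpt htp
  have hp0 : (0 : ℝ) < p := by exact_mod_cast hp.pos
  have hp1 : (1 : ℝ) ≤ p := by exact_mod_cast hp.one_lt.le
  have ht0 : 0 < t := lt_of_lt_of_le hp0 hpt
  have hX0 : 0 < X := by linarith
  have hx0 : 0 < x := by linarith
  set y := x / (p : ℝ) with hy
  have hyX : X + 1 ≤ y := by
    rw [hy, le_div_iff₀ hp0]
    rw [le_div_iff₀ (by linarith)] at hpx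
    linarith
  have hy0 : 0 < y := by linarith
  have hyx : y ≤ x := div_le_self hx0.le hp1
  set L := Real.log x with hL
  have hL2 : 1 / 2 ≤ L := by
    have h1 := Real.log_two_gt_d9
    have h2 : Real.log 2 ≤ L := Real.log_le_log (by norm_num) hx
    linarith
  have hL0 : 0 < L := by linarith
  set A := Finset.Ioc ⌊x / t⌋₊ ⌊y⌋₊ with hA
  -- lower endpoint
  have hxt : y * X / (X + 1) ≤ x / t := by
    rw [le_div_iff₀ ht0, div_mul_eq_mul_div, div_le_iff₀ (by positivity)]
    have hxy : x = y * p := by rw [hy]; field_simp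
    have : t * X ≤ p * (X + 1) := by
      calc t * X ≤ (p * (1 + 1 / X)) * X := by gcongr
        _ = p * (X + 1) := by field_simp
    calc y * X * t = y * (t * X) := by ring
      _ ≤ y * (p * (X + 1)) := by gcongr
      _ = x * (X + 1) := by rw [hxy]; ring
  have hle : ⌊x / t⌋₊ ≤ ⌊y⌋₊ := by
    apply Nat.floor_le_floor
    rw [hy]; gcongr
  have hcard : (A.card : ℝ) < 3 * y / X := by
    rw [hA, Nat.card_Ioc, Nat.cast_sub hle]
    have h1 : (⌊y⌋₊ : ℝ) ≤ y := Nat.floor_le hy0.le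
    have h2 : x / t < (⌊x / t⌋₊ : ℝ) + 1 := Nat.lt_floor_add_one _
    have h3 : y * X / (X + 1) = y - y / (X + 1) := by field_simp; ring
    have h4 : y / (X + 1) ≤ y / X := by gcongr; linarith
    have h5 : 1 ≤ y / X := by rw [le_div_iff₀ hX0]; linarith
    have h6 : 3 * y / X = 3 * (y / X) := by ring
    rw [h6]
    linarith
  have hB₁ : ∫ ω, (∑ m ∈ A, f ω m) ^ 2 ∂μ ≤ 3 * y / X := by
    have := rmf_moment hf A 1 le_rfl (3 * y / X) (by
      refine lt_of_le_of_lt ?_ hcard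
      norm_num
      exact_mod_cast Finset.card_filter_le _ _)
    simpa using this
  have hB₂ : ∫ ω, (∑ m ∈ A, f ω m) ^ (2 * (2 * n + 1)) ∂μ
      ≤ (2 * (y * (3 * L) ^ (4 * n))) ^ (2 * n + 1) := by
    refine rmf_moment hf A (2 * n + 1) (by omega) _ ?_
    have e : (2 * ((2 * n + 1 : ℕ) : ℝ) - 1) = ((4 * n + 1 : ℕ) : ℝ) := by push_cast; ring
    rw [e]
    have hpos : 0 < y * (3 * L) ^ (4 * n) := by positivity
    have h1 : ∑ m ∈ A with Squarefree m, ((4 * n + 1 : ℕ) : ℝ) ^ m.primeFactors.card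
        ≤ y * (3 * L) ^ (4 * n) := by
      calc _ ≤ ((∑ m ∈ Finset.Ioc 0 ⌊y⌋₊, (ArithmeticFunction.zeta ^ (4 * n + 1)) m : ℕ) : ℝ) := by
            rw [Nat.cast_sum]
            calc _ = ∑ m ∈ A with Squarefree m,
                  (((ArithmeticFunction.zeta ^ (4 * n + 1)) m : ℕ) : ℝ) := by
                  refine Finset.sum_congr rfl fun m hm => ?_
                  rw [aux_zeta_sqf _ m (Finset.mem_filter.1 hm).2]
                  push_cast; rfl
              _ ≤ _ := by
                  refine Finset.sum_le_sum_of_subset_of_nonneg ?_ fun m _ _ => Nat.cast_nonneg _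
                  refine (Finset.filter_subset _ _).trans ?_
                  exact Finset.Ioc_subset_Ioc_left (Nat.zero_le _)
        _ ≤ _ := aux_sum_zeta (4 * n) ⌊y⌋₊
        _ ≤ _ := by
            have h1 : (⌊y⌋₊ : ℝ) ≤ y := Nat.floor_le hy0.le
            have h0 : 0 < (⌊y⌋₊ : ℝ) := by
              exact_mod_cast Nat.floor_pos.2 (by linarith)
            have h2 : Real.log ⌊y⌋₊ ≤ L := Real.log_le_log h0 (h1.trans hyx)
            have h3 : 0 ≤ Real.log ⌊y⌋₊ := Real.log_natCast_nonneg _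
            have h4 : 1 + Real.log ⌊y⌋₊ ≤ 3 * L := by linarith
            gcongr
    linarith
  have hexp : L ^ (4 * (((n + 1 : ℕ) : ℝ)) ^ 2 - 6 * ((n + 1 : ℕ) : ℝ) + 2)
      = L ^ (2 * n * (2 * n + 1)) := by
    rw [← Real.rpow_natCast L]
    congr 1
    push_cast
    ring
  rw [hexp]
  have hXr : (X ^ (-(1 / 2 : ℝ))) ^ 2 = X⁻¹ := by
    rw [← Real.rpow_natCast, ← Real.rpow_mul hX0.le]
    norm_num
    exact Real.rpow_neg_one X
  refine aux_cs n (fun ω => ∑ m ∈ A, f ω m) (rmf_integrable hf A) (3 * y / X)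
    ((2 * (y * (3 * L) ^ (4 * n))) ^ (2 * n + 1)) _ (by positivity) (by positivity) ?_ hB₁ hB₂
  rw [mul_pow, mul_pow, mul_pow, hXr, Real.sq_sqrt hKp.le, hK]
  simp only [mul_pow, ← pow_mul, div_eq_mul_inv]
  ring
end
end

section
/- Let f be a Rademacher random multiplicative function and let ℓ ≥ 2. For each test point x_i with X_{ℓ−1} < x_i ≤ X_ℓ define Y_{x_i} := (1/log x_i) · (log x_i / log X_{ℓ−1})^{1/(ℓ−1)^K} · ∫_{−∞}^{+∞} |S_{x_i}(1/2+it)|² / |1/2+it|² dt, where S_x(1/2+it) := ∏_{p ≤ x, p prime} (1 + f(p)·p^{−1/2−it}), and let 𝓕_i := σ({f(p) : p prime, p ≤ x_i}). Then for all i sufficiently large in terms of ε, Y_{x_i} is 𝓕_i-measurable and integrable, and E[Y_{x_i} | 𝓕_{i−1}] ≥ Y_{x_{i−1}} almost surely; that is, (Y_{x_i}) is a nonnegative submartingale along the test points in (X_{ℓ−1}, X_ℓ]. -/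
open MeasureTheory ProbabilityTheory

noncomputable section

/-- The test points `x_i := ⌊exp(i^ε)⌋`. -/
def testPoint (ε : ℝ) (i : ℕ) : ℕ := ⌊Real.exp ((i : ℝ) ^ ε)⌋₊

/-- `X_ℓ := exp(2^{ℓ^K})` with `K = 1/(4ε)` (here `ℓ` is a real number). -/
def Xpt (ε ℓ : ℝ) : ℝ := Real.exp ((2 : ℝ) ^ (ℓ ^ (1 / (4 * ε))))

/-- The truncated Euler product `S_x(1/2+it) = ∏_{p ≤ x} (1 + f(p) p^{-1/2-it})`. -/
def eulerProd {Ω : Type*} (f : Ω → ℕ → ℝ) (ω : Ω) (x : ℝ) (t : ℝ) : ℂ :=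
  ∏ p ∈ (Finset.Icc 1 ⌊x⌋₊).filter Nat.Prime,
    (1 + (f ω p : ℂ) * (p : ℂ) ^ (-(1 / 2 : ℂ) - (t : ℂ) * Complex.I))

/-- The normalized random variables
`Y_{x_i} = (1/log x_i) (log x_i / log X_{ℓ-1})^{1/(ℓ-1)^K}
  ∫_ℝ |S_{x_i}(1/2+it)|²/|1/2+it|² dt`. -/
def Ynorm {Ω : Type*} (f : Ω → ℕ → ℝ) (ε : ℝ) (ℓ i : ℕ) (ω : Ω) : ℝ :=
  (1 / Real.log (testPoint ε i)) *
    (Real.log (testPoint ε i) / Real.log (Xpt ε ((ℓ : ℝ) - 1))) ^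
      ((1 : ℝ) / ((ℓ : ℝ) - 1) ^ (1 / (4 * ε))) *
    ∫ t : ℝ, ‖eulerProd f ω (testPoint ε i) t‖ ^ 2 /
      ‖(1 / 2 : ℂ) + (t : ℂ) * Complex.I‖ ^ 2

/-- The σ-algebra `𝓕_i` generated by `{f(p) : p prime, p ≤ x_i}`. -/
def sigmaAlgTest {Ω : Type*} (f : Ω → ℕ → ℝ) (ε : ℝ) (i : ℕ) : MeasurableSpace Ω :=
  ⨆ p ∈ {p : ℕ | p.Prime ∧ p ≤ testPoint ε i},
    MeasurableSpace.comap (fun ω => f ω p) (inferInstance : MeasurableSpace ℝ)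


namespace RMF

lemma cpow_diff_bound {m x : ℝ} (hm : 1 ≤ m) (hx : m ≤ x) (hx1 : x ≤ m + 1) {s : ℂ} (hs : 0 < s.re) :
    ‖(x : ℂ) ^ (-s) - (m : ℂ) ^ (-s)‖ ≤ ‖s‖ * m ^ (-s.re - 1) := by
  have hd : ∀ y ∈ Set.Icc m (m+1), HasDerivWithinAt (fun y : ℝ => (y : ℂ) ^ (-s))
      (-s * (y : ℂ) ^ (-s - 1)) (Set.Icc m (m+1)) y := by
    intro y hy
    have hy0 : 0 < y := by linarith [hy.1]
    have h1 : HasDerivAt (fun z : ℂ => z ^ (-s)) (-s * (y : ℂ) ^ (-s - 1) * 1) (y : ℂ) :=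
      (hasDerivAt_id (y : ℂ)).cpow_const (c := -s) (by simpa using hy0)
    rw [mul_one] at h1
    exact h1.comp_ofReal.hasDerivWithinAt
  have hb : ∀ y ∈ Set.Ico m (m+1), ‖-s * (y : ℂ) ^ (-s - 1)‖ ≤ ‖s‖ * m ^ (-s.re - 1) := by
    intro y hy
    have hy0 : 0 < y := by linarith [hy.1]
    rw [norm_mul, norm_neg, Complex.norm_cpow_eq_rpow_re_of_pos hy0]
    gcongr
    simp only [Complex.sub_re, Complex.neg_re, Complex.one_re]
    exact Real.rpow_le_rpow_of_nonpos (by linarith) hy.1 (by linarith)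
  have h := norm_image_sub_le_of_norm_deriv_le_segment' hd hb x ⟨hx, hx1⟩
  refine h.trans ?_
  have : 0 ≤ ‖s‖ * m ^ (-s.re - 1) := by positivity
  nlinarith

lemma cpow_diff_bound' {m x : ℝ} (hm : 1 ≤ m) (hx : m ≤ x) (hx1 : x ≤ m + 1) {s : ℂ} (hs : 0 < s.re)
    {θ : ℝ} (hθ : 0 ≤ θ) (hθ1 : θ ≤ 1) :
    ‖(x : ℂ) ^ (-s) - (m : ℂ) ^ (-s)‖ ≤ 2 * ‖s‖ ^ θ * m ^ (-s.re - θ) := by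
  have hm0 : 0 < m := by linarith
  have hs0 : 0 < ‖s‖ := lt_of_lt_of_le hs (Complex.re_le_norm s)
  have e : 2 * ‖s‖ ^ θ * m ^ (-s.re - θ) = 2 * (‖s‖ / m) ^ θ * m ^ (-s.re) := by
    rw [Real.rpow_sub hm0, Real.div_rpow hs0.le hm0.le]; ring
  rw [e]
  rcases le_total 1 (‖s‖ / m) with h | h
  · have h1 : 1 ≤ (‖s‖ / m) ^ θ := Real.one_le_rpow h hθ
    have h2 : ‖(x : ℂ) ^ (-s) - (m : ℂ) ^ (-s)‖ ≤ m ^ (-s.re) + m ^ (-s.re) := by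
      refine (norm_sub_le _ _).trans ?_
      rw [Complex.norm_cpow_eq_rpow_re_of_pos hm0, Complex.norm_cpow_eq_rpow_re_of_pos (by linarith)]
      gcongr
      · simp only [Complex.neg_re]
        exact Real.rpow_le_rpow_of_nonpos hm0 hx (by linarith)
      · simp
    have : 0 < m ^ (-s.re) := by positivity
    nlinarith
  · have h1 : ‖s‖ / m ≤ (‖s‖ / m) ^ θ := by
      conv_lhs => rw [← Real.rpow_one (‖s‖ / m)]
      exact Real.rpow_le_rpow_of_exponent_ge (by positivity) h hθ1
    have h2 := cpow_diff_bound hm hx hx1 hs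
    have h3 : ‖s‖ * m ^ (-s.re - 1) = ‖s‖ / m * m ^ (-s.re) := by
      rw [Real.rpow_sub hm0, Real.rpow_one]; ring
    rw [h3] at h2
    have : 0 < m ^ (-s.re) := by positivity
    have h4 : 0 < ‖s‖ / m := by positivity
    nlinarith

/-- The terms of the series for `(s-1) ζ(s) - 1`. -/
def bT (n : ℕ) (s : ℂ) : ℂ :=
  (s - 1) * ((n + 1 : ℕ) : ℂ) ^ (-s) - ((n + 1 : ℕ) : ℂ) ^ (1 - s) + ((n + 2 : ℕ) : ℂ) ^ (1 - s)

lemma bT_bound (n : ℕ) {s : ℂ} (hs : 0 < s.re) {θ : ℝ} (hθ : 0 ≤ θ) (hθ1 : θ ≤ 1) :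
    ‖bT n s‖ ≤ ‖s - 1‖ * (2 * ‖s‖ ^ θ * ((n + 1 : ℕ) : ℝ) ^ (-s.re - θ)) := by
  set m : ℝ := ((n + 1 : ℕ) : ℝ) with hmdef
  have hm : 1 ≤ m := by rw [hmdef]; exact_mod_cast Nat.le_add_left 1 n
  have hd : ∀ y ∈ Set.Icc m (m+1), HasDerivWithinAt
      (fun y : ℝ => (s - 1) * (m : ℂ) ^ (-s) * (y : ℂ) + (y : ℂ) ^ (1 - s))
      (-(s - 1) * ((y : ℂ) ^ (-s) - (m : ℂ) ^ (-s))) (Set.Icc m (m+1)) y := by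
    intro y hy
    have hy0 : 0 < y := by linarith [hy.1]
    have h1 : HasDerivAt (fun z : ℂ => z ^ (1 - s)) ((1 - s) * (y : ℂ) ^ (1 - s - 1) * 1) (y : ℂ) :=
      (hasDerivAt_id (y : ℂ)).cpow_const (c := 1 - s) (by simpa using hy0)
    have h2 : HasDerivAt (fun z : ℂ => (s - 1) * (m : ℂ) ^ (-s) * z)
      ((s - 1) * (m : ℂ) ^ (-s) * 1) (y : ℂ) := (hasDerivAt_id (y : ℂ)).const_mul _
    have h3 := (h2.add h1).comp_ofReal.hasDerivWithinAt (s := Set.Icc m (m+1))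
    have this : (1 - s - 1 : ℂ) = -s := by ring
    have e : (s - 1) * (m : ℂ) ^ (-s) * 1 + (1 - s) * (y : ℂ) ^ (1 - s - 1) * 1 =
      -(s - 1) * ((y : ℂ) ^ (-s) - (m : ℂ) ^ (-s)) := by rw [this]; ring
    rw [← e]
    exact h3
  have hb : ∀ y ∈ Set.Ico m (m+1), ‖-(s - 1) * ((y : ℂ) ^ (-s) - (m : ℂ) ^ (-s))‖ ≤
      ‖s - 1‖ * (2 * ‖s‖ ^ θ * m ^ (-s.re - θ)) := by
    intro y hy
    rw [norm_mul, norm_neg]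
    gcongr
    exact cpow_diff_bound' hm hy.1 hy.2.le hs hθ hθ1
  have h := norm_image_sub_le_of_norm_deriv_le_segment' hd hb (m+1) ⟨by linarith, le_rfl⟩
  have e : (m + 1 - m) = 1 := by ring
  rw [e, mul_one] at h
  have e2 : bT n s = (s - 1) * (m : ℂ) ^ (-s) * ((m + 1 : ℝ) : ℂ) + ((m + 1 : ℝ) : ℂ) ^ (1 - s) -
      ((s - 1) * (m : ℂ) ^ (-s) * (m : ℂ) + (m : ℂ) ^ (1 - s)) := by
    rw [bT, hmdef]
    push_cast
    have : (n : ℂ) + 1 + 1 = n + 2 := by ring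
    rw [this]
    ring
  rw [e2]
  exact h

/-- `G(s) = (s-1) ζ(s)`, analytic for `Re s > 0`. -/
def GG (s : ℂ) : ℂ := 1 + ∑' n, bT n s

lemma summable_pow {p : ℝ} (hp : 1 < p) : Summable fun n : ℕ => ((n + 1 : ℕ) : ℝ) ^ (-p) := by
  have := (Real.summable_nat_rpow (p := -p)).2 (by linarith)
  exact (summable_nat_add_iff 1).2 this

lemma bT_diff (n : ℕ) : Differentiable ℂ (bT n) := by
  unfold bT
  have h1 : ((n + 1 : ℕ) : ℂ) ≠ 0 := by exact_mod_cast Nat.succ_ne_zero n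
  have h2 : ((n + 2 : ℕ) : ℂ) ≠ 0 := by exact_mod_cast Nat.succ_ne_zero (n+1)
  intro s
  refine DifferentiableAt.add (DifferentiableAt.sub (DifferentiableAt.mul (by fun_prop) ?_) ?_) ?_
  · exact DifferentiableAt.const_cpow (by fun_prop) (Or.inl h1)
  · exact DifferentiableAt.const_cpow (by fun_prop) (Or.inl h1)
  · exact DifferentiableAt.const_cpow (by fun_prop) (Or.inl h2)

/-- growth of G. -/
lemma GG_bound {θ : ℝ} (hθ : 0 < θ) (hθ1 : θ ≤ 1) : ∃ C : ℝ, 0 < C ∧ ∀ s : ℂ, 1 - θ / 2 ≤ s.re →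
    ‖GG s‖ ≤ 1 + C * ‖s - 1‖ * ‖s‖ ^ θ := by
  have hS := summable_pow (p := 1 + θ / 2) (by linarith)
  refine ⟨2 * ∑' n : ℕ, ((n + 1 : ℕ) : ℝ) ^ (-(1 + θ / 2)), ?_, ?_⟩
  · have : 0 < ∑' n : ℕ, ((n + 1 : ℕ) : ℝ) ^ (-(1 + θ / 2)) :=
      hS.tsum_pos (fun n => by positivity) 0 (by positivity)
    positivity
  intro s hs
  have hs0 : 0 < s.re := by linarith
  have hb : ∀ n, ‖bT n s‖ ≤ (2 * ‖s - 1‖ * ‖s‖ ^ θ) * ((n + 1 : ℕ) : ℝ) ^ (-(1 + θ / 2)) := by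
    intro n
    refine (bT_bound n hs0 hθ.le hθ1).trans ?_
    have h1 : ((n + 1 : ℕ) : ℝ) ^ (-s.re - θ) ≤ ((n + 1 : ℕ) : ℝ) ^ (-(1 + θ / 2)) :=
      Real.rpow_le_rpow_of_exponent_le (by exact_mod_cast Nat.le_add_left 1 n) (by linarith)
    calc _ ≤ ‖s - 1‖ * (2 * ‖s‖ ^ θ * ((n + 1 : ℕ) : ℝ) ^ (-(1 + θ / 2))) := by gcongr
      _ = _ := by ring
  have h2 := tsum_of_norm_bounded (hS.mul_left (2 * ‖s - 1‖ * ‖s‖ ^ θ)).hasSum hb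
  rw [tsum_mul_left] at h2
  calc ‖GG s‖ ≤ ‖(1:ℂ)‖ + ‖∑' n, bT n s‖ := norm_add_le _ _
    _ ≤ _ := by rw [norm_one]; linarith

lemma GG_diffOn : DifferentiableOn ℂ GG {s : ℂ | 0 < s.re} := by
  have key : ∀ δ : ℝ, 0 < δ → δ < 1 → ∀ R : ℝ, 0 < R → DifferentiableOn ℂ GG {s : ℂ | δ < s.re ∧ ‖s‖ < R} := by
    intro δ hδ hδ1 R hR
    unfold GG
    refine DifferentiableOn.const_add _ ?_
    refine Complex.differentiableOn_tsum_of_summable_norm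
      (u := fun n => (R + 1) * (2 * (1 + R) * ((n + 1 : ℕ) : ℝ) ^ (-(1 + δ)))) ?_ ?_ ?_ ?_
    · exact ((summable_pow (p := 1 + δ) (by linarith)).mul_left _).mul_left _
    · exact fun n => (bT_diff n).differentiableOn
    · exact (isOpen_lt continuous_const Complex.continuous_re).inter
        (isOpen_lt continuous_norm continuous_const)
    · rintro n s ⟨h1, h2⟩
      refine (bT_bound n (hδ.trans h1) zero_le_one le_rfl).trans ?_
      have h3 : ‖s - 1‖ ≤ R + 1 := (norm_sub_le _ _).trans (by rw [norm_one]; linarith)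
      rw [Real.rpow_one]
      have h4 : ((n + 1 : ℕ) : ℝ) ^ (-s.re - 1) ≤ ((n + 1 : ℕ) : ℝ) ^ (-(1 + δ)) :=
        Real.rpow_le_rpow_of_exponent_le (by exact_mod_cast Nat.le_add_left 1 n) (by linarith)
      gcongr
      linarith
  intro s hs
  have hs' : 0 < s.re := hs
  have h := key (min (s.re / 2) (1/2)) (by positivity) (by
    exact lt_of_le_of_lt (min_le_right _ _) (by norm_num)) (‖s‖ + 1) (by positivity)
  have hmem : s ∈ {z : ℂ | min (s.re / 2) (1/2) < z.re ∧ ‖z‖ < ‖s‖ + 1} :=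
    ⟨lt_of_le_of_lt (min_le_left _ _) (by linarith), by linarith⟩
  have ho : IsOpen {z : ℂ | min (s.re / 2) (1/2) < z.re ∧ ‖z‖ < ‖s‖ + 1} :=
    (isOpen_lt continuous_const Complex.continuous_re).inter
        (isOpen_lt continuous_norm continuous_const)
  exact (h.differentiableAt (ho.mem_nhds hmem)).differentiableWithinAt

lemma GG_eq {s : ℂ} (hs : 1 < s.re) : GG s = (s - 1) * riemannZeta s := by
  have hsum : Summable fun n => bT n s := by
    refine Summable.of_norm_bounded
      (((summable_pow (p := s.re) hs).mul_left (2 * ‖s‖ ^ (0:ℝ))).mul_left ‖s-1‖) ?_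
    intro n
    simpa using bT_bound n (by linarith) le_rfl zero_le_one
  have h1 := hsum.hasSum.tendsto_sum_nat
  have hz : HasSum (fun n : ℕ => 1 / ((n : ℂ) + 1) ^ s) (riemannZeta s) := by
    rw [zeta_eq_tsum_one_div_nat_add_one_cpow hs]
    refine Summable.hasSum ?_
    have := (summable_nat_add_iff 1).2 (Complex.summable_one_div_nat_cpow.2 hs)
    simpa using this
  have h2 := (hz.tendsto_sum_nat).const_mul (s - 1)
  have hpart : ∀ N : ℕ, ∑ n ∈ Finset.range N, bT n s =
      (s - 1) * ∑ n ∈ Finset.range N, 1 / ((n : ℂ) + 1) ^ s + ((N + 1 : ℕ) : ℂ) ^ (1 - s) - 1 := by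
    intro N
    induction N with
    | zero => simp
    | succ N ih =>
      rw [Finset.sum_range_succ, Finset.sum_range_succ, ih, bT, Complex.cpow_neg]
      push_cast
      have : (N : ℂ) + 1 + 1 = N + 2 := by ring
      rw [this]
      ring
  have h3 : Filter.Tendsto (fun N : ℕ => ((N + 1 : ℕ) : ℂ) ^ (1 - s)) Filter.atTop (nhds 0) := by
    rw [tendsto_zero_iff_norm_tendsto_zero]
    have h4 : Filter.Tendsto (fun N : ℕ => ((N + 1 : ℕ) : ℝ) ^ (-(s.re - 1))) Filter.atTop (nhds 0) :=
      ((tendsto_rpow_neg_atTop (by linarith : 0 < s.re - 1)).comp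
        tendsto_natCast_atTop_atTop).comp (Filter.tendsto_add_atTop_nat 1)
    refine h4.congr fun N => ?_
    rw [Complex.norm_natCast_cpow_of_pos (Nat.succ_pos N)]
    simp
  have h5 : Filter.Tendsto (fun N => ∑ n ∈ Finset.range N, bT n s) Filter.atTop
      (nhds ((s - 1) * riemannZeta s + 0 - 1)) := by
    simp_rw [hpart]
    exact (h2.add h3).sub_const 1
  have := tendsto_nhds_unique h1 h5
  rw [GG, this]; ring

lemma GG_one : GG 1 = 1 := by
  simp [GG, bT]

lemma GG_eq' {s : ℂ} (hs : 1 ≤ s.re) (h1 : s ≠ 1) : GG s = (s - 1) * riemannZeta s := by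
  have hc : ContinuousAt GG s := (GG_diffOn.differentiableAt
    ((isOpen_lt continuous_const Complex.continuous_re).mem_nhds (by show 0 < s.re; linarith))).continuousAt
  have hc2 : ContinuousAt (fun s => (s - 1) * riemannZeta s) s :=
    (by fun_prop : ContinuousAt (fun s : ℂ => s - 1) s).mul (differentiableAt_riemannZeta h1).continuousAt
  have hl : Filter.Tendsto (fun x : ℝ => s + x) (nhdsWithin 0 (Set.Ioi 0)) (nhds s) := by
    have : ContinuousAt (fun x : ℝ => s + x) 0 := by fun_prop
    have h := this.tendsto
    simp only [Complex.ofReal_zero, add_zero] at h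
    exact h.mono_left nhdsWithin_le_nhds
  refine tendsto_nhds_unique (hc.tendsto.comp hl) ((hc2.tendsto.comp hl).congr' ?_)
  filter_upwards [self_mem_nhdsWithin] with x hx
  have hx : 0 < x := hx
  simp only [Function.comp]
  rw [GG_eq]
  simp; linarith

lemma GG_ne_zero {s : ℂ} (hs : 1 ≤ s.re) : GG s ≠ 0 := by
  by_cases h1 : s = 1
  · rw [h1, GG_one]; exact one_ne_zero
  · rw [GG_eq' hs h1]
    exact mul_ne_zero (sub_ne_zero.2 h1) (riemannZeta_ne_zero_of_one_le_re hs)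

end RMF

namespace RMF

lemma GG_diffAt {s : ℂ} (hs : 0 < s.re) : DifferentiableAt ℂ GG s :=
  GG_diffOn.differentiableAt ((isOpen_lt continuous_const Complex.continuous_re).mem_nhds hs)

lemma GG_growth {θ : ℝ} (hθ : 0 < θ) (hθ1 : θ ≤ 1) : ∃ C : ℝ, 1 ≤ C ∧ ∀ s : ℂ, 1 - θ / 2 ≤ s.re →
    s.re ≤ 3 → ‖GG s‖ ≤ C * (1 + |s.im|) ^ (1 + θ) := by
  obtain ⟨C, hC, h⟩ := GG_bound hθ hθ1
  refine ⟨1 + 12 * C, by linarith, fun s h1 h2 => ?_⟩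
  refine (h s h1).trans ?_
  set u := 1 + |s.im| with hu
  have hu1 : 1 ≤ u := by rw [hu]; linarith [abs_nonneg s.im]
  have hre : |s.re| ≤ 3 := abs_le.2 ⟨by linarith, h2⟩
  have hn : ‖s‖ ≤ 3 * u := (Complex.norm_le_abs_re_add_abs_im s).trans (by
    rw [hu]; linarith [abs_nonneg s.im])
  have hn1 : ‖s - 1‖ ≤ 4 * u := (norm_sub_le _ _).trans (by rw [norm_one]; linarith)
  have hn2 : ‖s‖ ^ θ ≤ 3 * u ^ θ := by
    calc ‖s‖ ^ θ ≤ (3 * u) ^ θ := by gcongr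
      _ = 3 ^ θ * u ^ θ := Real.mul_rpow (by norm_num) (by linarith)
      _ ≤ 3 ^ (1:ℝ) * u ^ θ := by gcongr; norm_num
      _ = _ := by rw [Real.rpow_one]
  have hu2 : u ^ (1 + θ) = u * u ^ θ := by rw [Real.rpow_add (by linarith), Real.rpow_one]
  have hu3 : 1 ≤ u ^ (1 + θ) := Real.one_le_rpow hu1 (by linarith)
  have : C * ‖s - 1‖ * ‖s‖ ^ θ ≤ C * (4 * u) * (3 * u ^ θ) := by gcongr
  calc _ ≤ u ^ (1 + θ) + C * (4 * u) * (3 * u ^ θ) := by linarith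
    _ = _ := by rw [hu2]; ring

lemma GG_deriv_growth {θ : ℝ} (hθ : 0 < θ) (hθ1 : θ ≤ 1) : ∃ C : ℝ, 1 ≤ C ∧ ∀ s : ℂ,
    1 - θ / 4 ≤ s.re → s.re ≤ 2 → ‖deriv GG s‖ ≤ C * (1 + |s.im|) ^ (1 + θ) := by
  obtain ⟨C, hC, h⟩ := GG_growth hθ hθ1
  refine ⟨C * 4 / (θ / 4), ?_, fun s h1 h2 => ?_⟩
  · rw [le_div_iff₀ (by positivity)]; nlinarith
  have hball : ∀ z ∈ Metric.closedBall s (θ / 4), |z.re - s.re| ≤ θ / 4 ∧ |z.im - s.im| ≤ θ / 4 := by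
    intro z hz
    rw [mem_closedBall_iff_norm] at hz
    exact ⟨by simpa using (Complex.abs_re_le_norm (z - s)).trans hz,
      by simpa using (Complex.abs_im_le_norm (z - s)).trans hz⟩
  have hd : DiffContOnCl ℂ GG (Metric.ball s (θ / 4)) := by
    refine DifferentiableOn.diffContOnCl ?_
    rw [closure_ball _ (by positivity)]
    intro z hz
    have := abs_le.1 (hball z hz).1
    exact (GG_diffAt (by linarith)).differentiableWithinAt
  have := Complex.norm_deriv_le_of_forall_mem_sphere_norm_le (by positivity) hd
    (C := C * 4 * (1 + |s.im|) ^ (1 + θ)) (by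
      intro z hz
      obtain ⟨a1, a2⟩ := hball z (Metric.sphere_subset_closedBall hz)
      have a3 := abs_le.1 a1
      refine (h z (by linarith) (by linarith)).trans ?_
      have a4 : 1 + |z.im| ≤ 2 * (1 + |s.im|) := by
        have : |z.im| ≤ |z.im - s.im| + |s.im| := by
          simpa using abs_add_le (z.im - s.im) s.im
        linarith [abs_nonneg s.im]
      have a5 : (1 + |z.im|) ^ (1 + θ) ≤ 4 * (1 + |s.im|) ^ (1 + θ) := by
        calc (1 + |z.im|) ^ (1 + θ) ≤ (2 * (1 + |s.im|)) ^ (1 + θ) := by gcongr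
          _ = 2 ^ (1 + θ) * (1 + |s.im|) ^ (1 + θ) := Real.mul_rpow (by norm_num) (by positivity)
          _ ≤ 2 ^ (2 : ℝ) * (1 + |s.im|) ^ (1 + θ) := by gcongr; norm_num; linarith
          _ = _ := by norm_num
      calc _ ≤ C * (4 * (1 + |s.im|) ^ (1 + θ)) := by gcongr
        _ = _ := by ring)
  refine this.trans (le_of_eq ?_)
  ring

lemma zeta_341 {x : ℝ} (hx : 0 < x) (y : ℝ) :
    1 ≤ ‖riemannZeta (1 + x)‖ ^ 3 * ‖riemannZeta (1 + x + Complex.I * y)‖ ^ 4 *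
      ‖riemannZeta (1 + x + 2 * Complex.I * y)‖ := by
  have := DirichletCharacter.norm_LFunction_product_ge_one (N := 1) 1 hx y
  simpa [DirichletCharacter.LFunctionTrivChar, DirichletCharacter.LFunction_modOne_eq] using this

lemma GG_lower {θ : ℝ} (hθ : 0 < θ) (hθ1 : θ ≤ 1) : ∃ c : ℝ, 0 < c ∧ ∀ x y : ℝ, 0 < x → x ≤ 1 →
    1 ≤ |y| → c * x ^ 3 ≤ (‖GG (1 + x + Complex.I * y)‖ / |y|) ^ 4 * |y| ^ θ := by
  obtain ⟨C, hC, h⟩ := GG_growth hθ hθ1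
  refine ⟨1 / (5 * C ^ 4), by positivity, fun x y hx hx1 hy => ?_⟩
  have hy0 : 0 < |y| := by linarith
  have h1 := zeta_341 hx y
  have r1 : (1 + (x : ℂ)).re = 1 + x := by simp
  have r2 : (1 + (x : ℂ) + Complex.I * y).re = 1 + x := by simp
  have r3 : (1 + (x : ℂ) + 2 * Complex.I * y).re = 1 + x := by simp
  have i1 : (1 + (x : ℂ)).im = 0 := by simp
  have i2 : (1 + (x : ℂ) + Complex.I * y).im = y := by simp
  have i3 : (1 + (x : ℂ) + 2 * Complex.I * y).im = 2 * y := by simp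
  have e1 := congrArg norm (GG_eq (s := 1 + (x:ℂ)) (by rw [r1]; linarith))
  have e2 := congrArg norm (GG_eq (s := 1 + (x:ℂ) + Complex.I * y) (by rw [r2]; linarith))
  have e3 := congrArg norm (GG_eq (s := 1 + (x:ℂ) + 2 * Complex.I * y) (by rw [r3]; linarith))
  have b1 := h (1 + (x : ℂ)) (by rw [r1]; linarith) (by rw [r1]; linarith)
  have b3 := h (1 + (x : ℂ) + 2 * Complex.I * y) (by rw [r3]; linarith) (by rw [r3]; linarith)
  rw [norm_mul] at e1 e2 e3
  rw [e1, i1] at b1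
  rw [e3, i3] at b3
  have n1 : ‖(1 + (x:ℂ)) - 1‖ = x := by simp [abs_of_pos hx]
  have n2 : |y| ≤ ‖(1 + (x : ℂ) + Complex.I * y) - 1‖ := by
    have := Complex.abs_im_le_norm ((1 + (x : ℂ) + Complex.I * y) - 1)
    simpa using this
  have n3 : 2 * |y| ≤ ‖(1 + (x : ℂ) + 2 * Complex.I * y) - 1‖ := by
    have := Complex.abs_im_le_norm ((1 + (x : ℂ) + 2 * Complex.I * y) - 1)
    simpa [abs_mul] using this
  rw [n1] at b1
  simp only [abs_zero, add_zero, Real.one_rpow, mul_one] at b1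
  set z1 := ‖riemannZeta (1 + x)‖
  set z2 := ‖riemannZeta (1 + x + Complex.I * y)‖
  set z3 := ‖riemannZeta (1 + x + 2 * Complex.I * y)‖
  have c1 : z1 ≤ C / x := by rw [le_div_iff₀ hx]; linarith
  have c2 : z2 ≤ ‖GG (1 + x + Complex.I * y)‖ / |y| := by
    rw [le_div_iff₀ hy0, e2, mul_comm]
    gcongr
  have c3 : z3 ≤ 5 * C * |y| ^ θ := by
    have t1 : 2 * |y| * z3 ≤ C * (9 * (|y| * |y| ^ θ)) := by
      calc 2 * |y| * z3 ≤ ‖(1 + (x : ℂ) + 2 * Complex.I * y) - 1‖ * z3 := by gcongr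
        _ ≤ _ := b3
        _ ≤ C * (3 * |y|) ^ (1 + θ) := by
          gcongr; rw [abs_mul, abs_two]; linarith
        _ = C * (3 ^ (1 + θ) * |y| ^ (1 + θ)) := by rw [Real.mul_rpow (by norm_num) hy0.le]
        _ ≤ C * (3 ^ (2:ℝ) * |y| ^ (1 + θ)) := by gcongr; norm_num; linarith
        _ = _ := by rw [Real.rpow_add hy0, Real.rpow_one]; norm_num
    have : 0 < |y| ^ θ := by positivity
    have t2 : |y| * z3 ≤ |y| * (5 * C * |y| ^ θ) := by
      have : 0 < C * (|y| * |y| ^ θ) := by positivity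
      linarith
    exact le_of_mul_le_mul_left t2 hy0
  set g := ‖GG (1 + x + Complex.I * y)‖ / |y|
  have hz2 : 0 ≤ z2 := norm_nonneg _
  have hz1 : 0 ≤ z1 := norm_nonneg _
  have hz3 : 0 ≤ z3 := norm_nonneg _
  have f : 1 ≤ (C / x) ^ 3 * g ^ 4 * (5 * C * |y| ^ θ) := by
    refine h1.trans ?_
    gcongr
  have f2 : (C / x) ^ 3 * g ^ 4 * (5 * C * |y| ^ θ) = (5 * C ^ 4) * (g ^ 4 * |y| ^ θ) / x ^ 3 := by
    field_simp
  rw [f2, le_div_iff₀ (by positivity)] at f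
  rw [one_div_mul_eq_div, div_le_iff₀ (by positivity)]
  linarith

lemma zero_free_large {κ : ℝ} (hκ : 0 < κ) (hκ1 : κ ≤ 1) : ∃ a M : ℝ, 0 < a ∧ 0 < M ∧ a ≤ 1 / 2 ∧
    ∀ s : ℂ, 1 ≤ |s.im| → 1 - a * |s.im| ^ (-κ) ≤ s.re → s.re ≤ 2 →
      0 < s.re ∧ GG s ≠ 0 ∧ ‖deriv GG s / GG s‖ ≤ M * |s.im| ^ κ := by
  set θ := κ / 5 with hθdef
  have hθ : 0 < θ := by positivity
  have hθ1 : θ ≤ 1 := by rw [hθdef]; linarith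
  obtain ⟨D0, hD0, hD⟩ := GG_deriv_growth hθ hθ1
  obtain ⟨c, hc, hlow⟩ := GG_lower hθ hθ1
  set D := 4 * D0 with hDdef
  have hDpos : 1 ≤ D := by linarith
  have hD' : ∀ s : ℂ, 1 ≤ |s.im| → 1 - θ / 4 ≤ s.re → s.re ≤ 2 →
      ‖deriv GG s‖ ≤ D * (|s.im| * |s.im| ^ θ) := by
    intro s h1 h2 h3
    refine (hD s h2 h3).trans ?_
    have h0 : 0 < |s.im| := by linarith
    calc D0 * (1 + |s.im|) ^ (1 + θ) ≤ D0 * (2 * |s.im|) ^ (1 + θ) := by gcongr; linarith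
      _ = D0 * (2 ^ (1 + θ) * |s.im| ^ (1 + θ)) := by rw [Real.mul_rpow (by norm_num) h0.le]
      _ ≤ D0 * (2 ^ (2 : ℝ) * |s.im| ^ (1 + θ)) := by gcongr; norm_num; linarith
      _ = _ := by rw [Real.rpow_add h0, Real.rpow_one, hDdef]; norm_num; ring
  set a := min (c / (5 * D) ^ 4) (θ / 4) with hadef
  have ha : 0 < a := by positivity
  have ha1 : a ≤ θ / 4 := min_le_right _ _
  have ha2 : (5 * D) ^ 4 * a ≤ c := by
    rw [mul_comm, ← le_div_iff₀ (by positivity)]; exact min_le_left _ _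
  refine ⟨a, 1 / (3 * a), ha, by positivity, by linarith, ?_⟩
  intro s hs1 hs2 hs3
  set y := s.im with hydef
  set P := |y| ^ θ with hP
  have hy0 : 0 < |y| := by linarith
  have hP1 : 1 ≤ P := Real.one_le_rpow hs1 hθ.le
  have hP0 : 0 < P := by linarith
  have hPκ : |y| ^ κ = P ^ 5 := by
    rw [hP, ← Real.rpow_natCast, ← Real.rpow_mul hy0.le, hθdef]; congr 1; push_cast; ring
  have hPκ' : |y| ^ (-κ) = (P ^ 5)⁻¹ := by rw [Real.rpow_neg hy0.le, hPκ]
  rw [hPκ'] at hs2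
  rw [hPκ]
  set x0 := a * (P ^ 5)⁻¹ with hx0
  have hx0pos : 0 < x0 := by positivity
  have hx0a : x0 ≤ a := mul_le_of_le_one_right ha.le (inv_le_one_of_one_le₀ (one_le_pow₀ hP1))
  -- lower bound to the right
  have right : ∀ x : ℝ, x0 ≤ x → x ≤ 1 → 5 * D * a * |y| * (P ^ 4)⁻¹ ≤ ‖GG (1 + x + Complex.I * y)‖ := by
    intro x h1 h2
    have hx : 0 < x := by linarith
    have := hlow x y hx h2 hs1
    rw [← hP] at this
    set g := ‖GG (1 + x + Complex.I * y)‖ / |y| with hg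
    have hg0 : 0 ≤ g := by positivity
    have h3 : (5 * D * a * (P ^ 4)⁻¹) ^ 4 * P ≤ g ^ 4 * P := by
      refine le_trans ?_ this
      calc (5 * D * a * (P ^ 4)⁻¹) ^ 4 * P = ((5 * D) ^ 4 * a) * x0 ^ 3 := by
            rw [hx0]; field_simp
        _ ≤ c * x ^ 3 := by gcongr
    have h4 := le_of_mul_le_mul_right h3 hP0
    have h5 := le_of_pow_le_pow_left₀ (by norm_num) hg0 h4
    rw [hg, le_div_iff₀ hy0] at h5
    linarith
  have hθ4 : 1 - θ / 4 ≤ s.re := by linarith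
  have hsre : 0 < s.re := by linarith
  have hseq : ∀ z : ℂ, z.im = y → z = 1 + ((z.re - 1 : ℝ) : ℂ) + Complex.I * y := by
    intro z hz
    apply Complex.ext <;> simp [hz]
  have hlower : 3 * D * a * |y| * (P ^ 4)⁻¹ ≤ ‖GG s‖ := by
    have hpos : 0 < D * a * |y| * (P ^ 4)⁻¹ := by positivity
    rcases le_total x0 (s.re - 1) with h | h
    · have := right (s.re - 1) h (by linarith)
      rw [← hseq s rfl] at this
      linarith
    · set w : ℂ := 1 + (x0 : ℂ) + Complex.I * y with hw
      have hwre : w.re = 1 + x0 := by simp [hw]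
      have hwim : w.im = y := by simp [hw]
      have hr := right x0 le_rfl (by linarith)
      rw [← hw] at hr
      set S : Set ℂ := Complex.reLm ⁻¹' (Set.Icc (1 - θ / 4) 2) ∩ Complex.imLm ⁻¹' {y} with hS
      have hconv : Convex ℝ S :=
        ((convex_Icc _ _).linear_preimage Complex.reLm).inter
          ((convex_singleton _).linear_preimage Complex.imLm)
      have hmv := hconv.norm_image_sub_le_of_norm_deriv_le (f := GG) (C := D * (|y| * P)) (x := s) (y := w)
        (fun z hz => GG_diffAt (by
          have : 1 - θ / 4 ≤ z.re := hz.1.1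
          linarith))
        (fun z hz => by
          have h1 : 1 - θ / 4 ≤ z.re := hz.1.1
          have h2 : z.re ≤ 2 := hz.1.2
          have h3 : z.im = y := hz.2
          have := hD' z (by rw [h3]; exact hs1) h1 h2
          rwa [h3] at this)
        ⟨⟨hθ4, hs3⟩, rfl⟩ ⟨⟨by show _ ≤ w.re; linarith, by show w.re ≤ 2; linarith⟩, hwim⟩
      have hws : ‖w - s‖ ≤ 2 * x0 := by
        refine (Complex.norm_le_abs_re_add_abs_im _).trans ?_
        rw [Complex.sub_re, Complex.sub_im, hwim, hwre, ← hydef, sub_self, abs_zero, add_zero,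
          abs_of_nonneg (by linarith)]
        linarith
      have h6 : D * (|y| * P) * ‖w - s‖ ≤ 2 * (D * a * |y| * (P ^ 4)⁻¹) := by
        calc _ ≤ D * (|y| * P) * (2 * x0) := by gcongr
          _ = _ := by rw [hx0]; field_simp
      have h7 : ‖GG w‖ ≤ ‖GG w - GG s‖ + ‖GG s‖ := by
        simpa using norm_add_le (GG w - GG s) (GG s)
      linarith
  have hpos : 0 < 3 * D * a * |y| * (P ^ 4)⁻¹ := by positivity
  have hG0 : 0 < ‖GG s‖ := by linarith
  refine ⟨hsre, norm_pos_iff.1 hG0, ?_⟩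
  rw [norm_div, div_le_iff₀ hG0]
  calc ‖deriv GG s‖ ≤ D * (|y| * P) := hD' s hs1 hθ4 hs3
    _ = 1 / (3 * a) * P ^ 5 * (3 * D * a * |y| * (P ^ 4)⁻¹) := by field_simp
    _ ≤ _ := by gcongr

lemma GG_deriv_cont {s : ℂ} (hs : 0 < s.re) : ContinuousAt (deriv GG) s := by
  have ho : IsOpen {s : ℂ | 0 < s.re} := isOpen_lt continuous_const Complex.continuous_re
  exact ((GG_diffOn.deriv ho).differentiableAt (ho.mem_nhds hs)).continuousAt

lemma zero_free_small : ∃ a M : ℝ, 0 < a ∧ 0 < M ∧ a ≤ 1 / 2 ∧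
    ∀ s : ℂ, |s.im| ≤ 1 → 1 - a ≤ s.re → s.re ≤ 2 →
      GG s ≠ 0 ∧ ‖deriv GG s / GG s‖ ≤ M := by
  set K : Set ℂ := Set.Icc 1 2 ×ℂ Set.Icc (-1) 1 with hK
  have hKc : IsCompact K := isCompact_Icc.reProdIm isCompact_Icc
  set U : Set ℂ := {s : ℂ | 0 < s.re ∧ GG s ≠ 0} with hU
  have hUo : IsOpen U := by
    have ho : IsOpen {s : ℂ | 0 < s.re} := isOpen_lt continuous_const Complex.continuous_re
    exact GG_diffOn.continuousOn.isOpen_inter_preimage ho isOpen_ne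
  have hKU : K ⊆ U := by
    intro z hz
    have h1 : 1 ≤ z.re := hz.1.1
    exact ⟨by linarith, GG_ne_zero h1⟩
  obtain ⟨δ, hδ, hsub⟩ := hKc.exists_cthickening_subset_open hUo hKU
  set a := min δ (1/2)
  have ha : 0 < a := by positivity
  set K' : Set ℂ := Set.Icc (1 - a) 2 ×ℂ Set.Icc (-1) 1 with hK'
  have hKc' : IsCompact K' := isCompact_Icc.reProdIm isCompact_Icc
  have hKU' : K' ⊆ U := by
    intro z hz
    have h1 : 1 - a ≤ z.re := hz.1.1
    have h2 : z.re ≤ 2 := hz.1.2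
    rcases le_total 1 z.re with h | h
    · exact hKU ⟨⟨h, h2⟩, hz.2⟩
    · apply hsub
      refine Metric.mem_cthickening_of_dist_le z (⟨1, z.im⟩ : ℂ) δ K ⟨⟨le_rfl, by norm_num⟩, hz.2⟩ ?_
      rw [Complex.dist_of_im_eq (show z.im = (⟨1, z.im⟩ : ℂ).im from rfl), Real.dist_eq]
      simp only
      rw [abs_le]
      have : a ≤ δ := min_le_left _ _
      constructor <;> linarith
  have hcont : ContinuousOn (fun s => deriv GG s / GG s) K' := by
    intro z hz
    have := hKU' hz
    exact ((GG_deriv_cont this.1).div (GG_diffAt this.1).continuousAt this.2).continuousWithinAt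
  obtain ⟨M, hM⟩ := hKc'.exists_bound_of_continuousOn hcont
  refine ⟨a, max M 1, ha, by positivity, min_le_right _ _, fun s h1 h2 h3 => ?_⟩
  have hs : s ∈ K' := ⟨⟨h2, h3⟩, abs_le.1 h1⟩
  exact ⟨(hKU' hs).2, (hM s hs).trans (le_max_left _ _)⟩

/-- Zero-free region with polynomial (arbitrarily small power) width. -/
lemma zero_free {κ : ℝ} (hκ : 0 < κ) (hκ1 : κ ≤ 1) : ∃ a M : ℝ, 0 < a ∧ 0 < M ∧ a ≤ 1 / 2 ∧
    ∀ s : ℂ, 1 - a * (1 + |s.im|) ^ (-κ) ≤ s.re → s.re ≤ 2 →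
      0 < s.re ∧ GG s ≠ 0 ∧ ‖deriv GG s / GG s‖ ≤ M * (1 + |s.im|) ^ κ := by
  obtain ⟨a1, M1, ha1, hM1, hb1, h1⟩ := zero_free_large hκ hκ1
  obtain ⟨a2, M2, ha2, hM2, hb2, h2⟩ := zero_free_small
  refine ⟨min a1 a2, max M1 M2, by positivity, by positivity, (min_le_left _ _).trans hb1, ?_⟩
  intro s hs hs2
  have hu : 1 ≤ 1 + |s.im| := by linarith [abs_nonneg s.im]
  have hk0 : (1 + |s.im|) ^ (-κ) ≤ 1 := Real.rpow_le_one_of_one_le_of_nonpos hu (by linarith)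
  have hk1 : 1 ≤ (1 + |s.im|) ^ κ := Real.one_le_rpow hu hκ.le
  have hkp : 0 < (1 + |s.im|) ^ (-κ) := by positivity
  rcases le_total 1 |s.im| with h | h
  · have e : min a1 a2 * (1 + |s.im|) ^ (-κ) ≤ a1 * |s.im| ^ (-κ) := by
      have e1 : (1 + |s.im|) ^ (-κ) ≤ |s.im| ^ (-κ) :=
        Real.rpow_le_rpow_of_nonpos (by linarith) (by linarith) (by linarith)
      exact mul_le_mul (min_le_left _ _) e1 hkp.le ha1.le
    obtain ⟨c1, c2, c3⟩ := h1 s h (by linarith) hs2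
    refine ⟨c1, c2, c3.trans ?_⟩
    gcongr
    · exact le_max_left _ _
    · linarith
  · have e : min a1 a2 * (1 + |s.im|) ^ (-κ) ≤ a2 * 1 :=
      mul_le_mul (min_le_right _ _) hk0 hkp.le ha2.le
    obtain ⟨c2, c3⟩ := h2 s h (by linarith) hs2
    refine ⟨by linarith, c2, c3.trans ?_⟩
    calc M2 ≤ max M1 M2 * 1 := by rw [mul_one]; exact le_max_right _ _
      _ ≤ _ := by gcongr

end RMF

namespace RMF

/-- The Perron kernel. -/
def kk (s : ℂ) : ℂ := 1 / (s * (s + 1))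

/-- logarithmic derivative of `G`. -/
def FF (s : ℂ) : ℂ := deriv GG s / GG s

lemma norm_lower {s : ℂ} (hs : 1 / 2 ≤ s.re) : (1 + s.im ^ 2) / 4 ≤ ‖s * (s + 1)‖ := by
  have h1 : Real.sqrt ((1 + s.im ^ 2) / 4) ≤ ‖s‖ := by
    rw [Complex.norm_eq_sqrt_sq_add_sq]
    apply Real.sqrt_le_sqrt; nlinarith [sq_nonneg s.im]
  have h2 : Real.sqrt ((1 + s.im ^ 2) / 4) ≤ ‖s + 1‖ := by
    rw [Complex.norm_eq_sqrt_sq_add_sq]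
    apply Real.sqrt_le_sqrt; simp; nlinarith [sq_nonneg s.im]
  rw [norm_mul]
  calc _ = Real.sqrt ((1 + s.im ^ 2) / 4) * Real.sqrt ((1 + s.im ^ 2) / 4) := by
        rw [Real.mul_self_sqrt (by positivity)]
    _ ≤ _ := by gcongr

lemma kk_bound {s : ℂ} (hs : 1 / 2 ≤ s.re) : ‖kk s‖ ≤ 4 * (1 + s.im ^ 2)⁻¹ := by
  have := norm_lower hs
  rw [kk, norm_div, norm_one]
  calc 1 / ‖s * (s + 1)‖ ≤ 1 / ((1 + s.im ^ 2) / 4) := by gcongr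
    _ = _ := by field_simp

lemma kk_diffAt {s : ℂ} (hs : 0 < s.re) : DifferentiableAt ℂ kk s := by
  unfold kk
  have h1 : s ≠ 0 := by rintro rfl; simp at hs
  have h2 : s + 1 ≠ 0 := by
    intro h; have := congrArg Complex.re h; simp at this; linarith
  fun_prop (disch := exact mul_ne_zero h1 h2)

lemma g1_mellin {s : ℂ} (hs : 0 < s.re) :
    HasMellin (fun t : ℝ => (Set.Ioc (0:ℝ) 1).indicator (fun _ => 1 : ℝ → ℂ) t -
      (Set.Ioc (0:ℝ) 1).indicator (fun t => (t : ℂ) ^ (1 : ℂ) : ℝ → ℂ) t) s (kk s) := by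
  have h1 := hasMellin_one_Ioc hs
  have h2 := hasMellin_cpow_Ioc 1 (s := s) (by simp; linarith)
  have h := hasMellin_sub h1.1 h2.1
  rw [h1.2, h2.2] at h
  have n1 : s ≠ 0 := by rintro rfl; simp at hs
  have n2 : s + 1 ≠ 0 := by
    intro h; have := congrArg Complex.re h; simp at this; linarith
  have e : kk s = 1 / s - 1 / (s + 1) := by rw [kk]; field_simp; ring
  rw [e]; exact h

lemma g2_mellin {s : ℂ} (hs : 1 < s.re) :
    HasMellin (fun t : ℝ => (((1:ℂ)/2) • (Set.Ioc (0:ℝ) 1).indicator (fun t => (t : ℂ) ^ (-1 : ℂ) : ℝ → ℂ) t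
      + ((1:ℂ)/2) • (Set.Ioc (0:ℝ) 1).indicator (fun t => (t : ℂ) ^ (1 : ℂ) : ℝ → ℂ) t) -
      (Set.Ioc (0:ℝ) 1).indicator (fun _ => 1 : ℝ → ℂ) t) s (1 / (s - 1) * kk s) := by
  have h1 := hasMellin_one_Ioc (s := s) (by linarith)
  have h2 := hasMellin_cpow_Ioc 1 (s := s) (by simp; linarith)
  have h3 := hasMellin_cpow_Ioc (-1) (s := s) (by simp; linarith)
  have h2' := hasMellin_const_smul h2.1 ((1:ℂ)/2)
  have h3' := hasMellin_const_smul h3.1 ((1:ℂ)/2)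
  have h4 := hasMellin_add h3'.1 h2'.1
  rw [h3'.2, h2'.2] at h4
  have h := hasMellin_sub h4.1 h1.1
  rw [h1.2, h4.2, h2.2, h3.2] at h
  have n1 : s ≠ 0 := by rintro rfl; simp at hs; linarith
  have n2 : s + 1 ≠ 0 := by
    intro h; have := congrArg Complex.re h; simp at this; linarith
  have n3 : s - 1 ≠ 0 := by
    intro h; have := congrArg Complex.re h; simp at this; linarith
  have e : 1 / (s - 1) * kk s = ((1:ℂ)/2) • (1 / (s + -1)) + ((1:ℂ)/2) • (1 / (s + 1)) - 1 / s := by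
    rw [kk, smul_eq_mul, smul_eq_mul, ← sub_eq_add_neg]; field_simp; ring
  rw [e]; exact h

lemma line_re (σ t : ℝ) : ((σ : ℂ) + t * Complex.I).re = σ := by simp
lemma line_im (σ t : ℝ) : ((σ : ℂ) + t * Complex.I).im = t := by simp

lemma kk_line_cont {σ : ℝ} (hσ : 0 < σ) : Continuous fun t : ℝ => kk (σ + t * Complex.I) := by
  rw [continuous_iff_continuousAt]
  intro t
  have h := (kk_diffAt (s := σ + t * Complex.I) (by rwa [line_re])).continuousAt
  exact ContinuousAt.comp (f := fun t : ℝ => (σ : ℂ) + t * Complex.I) h (by fun_prop)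

lemma kk_line_int {σ : ℝ} (hσ : 1 / 2 ≤ σ) : Integrable fun t : ℝ => kk (σ + t * Complex.I) := by
  refine Integrable.mono' ((integrable_inv_one_add_sq).const_mul 4)
    (kk_line_cont (by linarith)).aestronglyMeasurable (Filter.Eventually.of_forall fun t => ?_)
  have := kk_bound (s := σ + t * Complex.I) (by rwa [line_re])
  rwa [line_im] at this

lemma kk2_line_int {σ : ℝ} (hσ : 1 < σ) :
    Integrable fun t : ℝ => 1 / ((σ : ℂ) + t * Complex.I - 1) * kk (σ + t * Complex.I) := by
  refine (kk_line_int (σ := σ) (by linarith)).bdd_mul (c := 1 / (σ - 1)) ?_ ?_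
  · refine Continuous.aestronglyMeasurable ?_
    refine Continuous.div continuous_const (by fun_prop) fun t h => ?_
    have := congrArg Complex.re h; simp at this; linarith
  · refine Filter.Eventually.of_forall fun t => ?_
    rw [norm_div, norm_one]
    have : σ - 1 ≤ ‖(σ : ℂ) + t * Complex.I - 1‖ := by
      refine le_trans (le_of_eq ?_) (Complex.re_le_norm _); simp
    have h0 : 0 < σ - 1 := by linarith
    gcongr

lemma perron1 {σ y : ℝ} (hσ : 1 < σ) (hy : 0 < y) :
    (1 / (2 * Real.pi) : ℝ) • ∫ t : ℝ, (y : ℂ) ^ (-((σ:ℂ) + t * Complex.I)) * kk (σ + t * Complex.I) =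
      ((max (1 - y) 0 : ℝ) : ℂ) := by
  set g : ℝ → ℂ := (fun t : ℝ => (Set.Ioc (0:ℝ) 1).indicator (fun _ => 1 : ℝ → ℂ) t -
      (Set.Ioc (0:ℝ) 1).indicator (fun t => (t : ℂ) ^ (1 : ℂ) : ℝ → ℂ) t) with hg
  have hm : ∀ t : ℝ, mellin g (σ + t * Complex.I) = kk (σ + t * Complex.I) := fun t =>
    (g1_mellin (by rw [line_re]; linarith)).2
  have hge : ∀ z : ℝ, 0 < z → g z = ((max (1 - z) 0 : ℝ) : ℂ) := by
    intro z hz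
    by_cases h : z ≤ 1
    · have hmem : z ∈ Set.Ioc (0:ℝ) 1 := ⟨hz, h⟩
      simp only [hg, Set.indicator_of_mem hmem, Complex.cpow_one]
      rw [max_eq_left (by linarith)]; push_cast; rfl
    · have hmem : z ∉ Set.Ioc (0:ℝ) 1 := fun hh => h hh.2
      simp only [hg, Set.indicator_of_notMem hmem]
      rw [max_eq_right (by linarith)]; simp
  have hc : ContinuousAt g y := by
    have : ContinuousAt (fun z : ℝ => ((max (1 - z) 0 : ℝ) : ℂ)) y := by fun_prop
    refine this.congr ?_
    filter_upwards [lt_mem_nhds hy] with z hz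
    exact (hge z hz).symm
  have h := mellinInv_mellin_eq σ g hy (g1_mellin (s := (σ:ℂ)) (by simp; linarith)).1
    (by
      show Integrable (fun t : ℝ => mellin g (σ + t * Complex.I)) volume
      simp_rw [hm]
      exact kk_line_int (by linarith)) hc
  rw [mellinInv, hge y hy] at h
  simp_rw [hm, smul_eq_mul] at h
  exact h

lemma perron2 {σ y : ℝ} (hσ : 1 < σ) (hy : 0 < y) (hy1 : y ≤ 1) :
    (1 / (2 * Real.pi) : ℝ) • ∫ t : ℝ, (y : ℂ) ^ (-((σ:ℂ) + t * Complex.I)) *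
      (1 / ((σ : ℂ) + t * Complex.I - 1) * kk (σ + t * Complex.I)) =
      (((1 - y) ^ 2 / (2 * y) : ℝ) : ℂ) := by
  set g : ℝ → ℂ := (fun t : ℝ => (((1:ℂ)/2) • (Set.Ioc (0:ℝ) 1).indicator (fun t => (t : ℂ) ^ (-1 : ℂ) : ℝ → ℂ) t
      + ((1:ℂ)/2) • (Set.Ioc (0:ℝ) 1).indicator (fun t => (t : ℂ) ^ (1 : ℂ) : ℝ → ℂ) t) -
      (Set.Ioc (0:ℝ) 1).indicator (fun _ => 1 : ℝ → ℂ) t) with hg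
  have hm : ∀ t : ℝ, mellin g (σ + t * Complex.I) =
      1 / ((σ : ℂ) + t * Complex.I - 1) * kk (σ + t * Complex.I) := fun t =>
    (g2_mellin (by rw [line_re]; linarith)).2
  have hge : ∀ z : ℝ, 0 < z → g z = (((max (1 - z) 0) ^ 2 / (2 * z) : ℝ) : ℂ) := by
    intro z hz
    by_cases h : z ≤ 1
    · have hmem : z ∈ Set.Ioc (0:ℝ) 1 := ⟨hz, h⟩
      simp only [hg, Set.indicator_of_mem hmem, Complex.cpow_one, Complex.cpow_neg_one]
      rw [max_eq_left (by linarith)]; push_cast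
      have : (z : ℂ) ≠ 0 := by exact_mod_cast hz.ne'
      simp only [smul_eq_mul]
      field_simp; ring
    · have hmem : z ∉ Set.Ioc (0:ℝ) 1 := fun hh => h hh.2
      simp only [hg, Set.indicator_of_notMem hmem]
      rw [max_eq_right (by linarith)]; simp
  have hc : ContinuousAt g y := by
    have : ContinuousAt (fun z : ℝ => (((max (1 - z) 0) ^ 2 / (2 * z) : ℝ) : ℂ)) y := by
      have : 2 * y ≠ 0 := by positivity
      fun_prop (disch := assumption)
    refine this.congr ?_
    filter_upwards [lt_mem_nhds hy] with z hz
    exact (hge z hz).symm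
  have h := mellinInv_mellin_eq σ g hy (g2_mellin (s := (σ:ℂ)) (by simpa using hσ)).1
    (by
      show Integrable (fun t : ℝ => mellin g (σ + t * Complex.I)) volume
      simp_rw [hm]
      exact kk2_line_int hσ) hc
  rw [mellinInv, hge y hy, max_eq_left (by linarith)] at h
  simp_rw [hm, smul_eq_mul] at h
  exact h

open ArithmeticFunction in
lemma LSeries_eq_FF {s : ℂ} (hs : 1 < s.re) :
    LSeries (fun n => ((vonMangoldt n : ℝ) : ℂ)) s = 1 / (s - 1) - FF s := by
  rw [LSeries_vonMangoldt_eq_deriv_riemannZeta_div hs, FF]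
  have hs1 : s ≠ 1 := by rintro rfl; simp at hs
  have hz : riemannZeta s ≠ 0 := riemannZeta_ne_zero_of_one_le_re hs.le
  have hd : deriv GG s = riemannZeta s + (s - 1) * deriv riemannZeta s := by
    have he : GG =ᶠ[nhds s] fun z => (z - 1) * riemannZeta z := by
      filter_upwards [(isOpen_lt continuous_const Complex.continuous_re).mem_nhds hs] with z hz
      exact GG_eq hz
    rw [he.deriv_eq]
    have h1 : HasDerivAt (fun z : ℂ => z - 1) 1 s := (hasDerivAt_id s).sub_const 1
    have h2 := h1.mul (differentiableAt_riemannZeta hs1).hasDerivAt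
    have h3 := h2.deriv
    rw [one_mul] at h3
    exact h3
  rw [hd, GG_eq hs]
  have : s - 1 ≠ 0 := sub_ne_zero.2 hs1
  field_simp
  ring

lemma FF_line_cont {σ : ℝ} (hσ : 1 ≤ σ) : Continuous fun t : ℝ => FF (σ + t * Complex.I) := by
  rw [continuous_iff_continuousAt]
  intro t
  have h0 : 1 ≤ ((σ : ℂ) + t * Complex.I).re := by rwa [line_re]
  have h : ContinuousAt FF ((σ : ℂ) + t * Complex.I) :=
    (GG_deriv_cont (by linarith)).div (GG_diffAt (by linarith)).continuousAt (GG_ne_zero h0)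
  exact ContinuousAt.comp (f := fun t : ℝ => (σ : ℂ) + t * Complex.I) h (by fun_prop)

/-- Smoothed Chebyshev sum. -/
def psi1 (x : ℝ) : ℝ := ∑' n : ℕ, ArithmeticFunction.vonMangoldt n * max (1 - n / x) 0

open ArithmeticFunction in
lemma perron {σ x : ℝ} (hσ : 1 < σ) (hx : 1 ≤ x) :
    ((psi1 x - (x - 1) ^ 2 / (2 * x) : ℝ) : ℂ) =
      -((1 / (2 * Real.pi) : ℝ) • ∫ t : ℝ, (x : ℂ) ^ ((σ:ℂ) + t * Complex.I) *
        (FF (σ + t * Complex.I) * kk (σ + t * Complex.I))) := by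
  have hx0 : 0 < x := by linarith
  set s : ℝ → ℂ := fun t => (σ : ℂ) + t * Complex.I with hs
  have hsre : ∀ t, (s t).re = σ := fun t => line_re σ t
  set F : ℕ → ℝ → ℂ := fun n t =>
    (x : ℂ) ^ (s t) * (LSeries.term (fun n => ((vonMangoldt n : ℝ) : ℂ)) (s t) n * kk (s t)) with hF
  have hxc : Continuous fun t => (x : ℂ) ^ (s t) := by
    refine Continuous.const_cpow (by fun_prop) (Or.inl (by exact_mod_cast hx0.ne'))
  have hxn : ∀ t, ‖(x : ℂ) ^ (s t)‖ = x ^ σ := fun t => by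
    rw [Complex.norm_cpow_eq_rpow_re_of_pos hx0, hsre]
  have htc : ∀ n, Continuous fun t => LSeries.term (fun n => ((vonMangoldt n : ℝ) : ℂ)) (s t) n := by
    intro n
    rcases eq_or_ne n 0 with rfl | hn
    · simp only [LSeries.term_zero]; exact continuous_const
    · simp only [LSeries.term_of_ne_zero hn]
      refine Continuous.div continuous_const ?_ ?_
      · refine Continuous.const_cpow (by fun_prop) (Or.inl (by exact_mod_cast hn))
      · intro t; rw [Complex.cpow_ne_zero_iff]; left; exact_mod_cast hn
  have htn : ∀ n t, ‖LSeries.term (fun n => ((vonMangoldt n : ℝ) : ℂ)) (s t) n‖ =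
      ‖LSeries.term (fun n => ((vonMangoldt n : ℝ) : ℂ)) (σ : ℂ) n‖ := by
    intro n t
    rw [LSeries.norm_term_eq, LSeries.norm_term_eq, hsre, Complex.ofReal_re]
  have hsum : Summable fun n => ‖LSeries.term (fun n => ((vonMangoldt n : ℝ) : ℂ)) (σ : ℂ) n‖ :=
    (LSeriesSummable_vonMangoldt (s := (σ:ℂ)) (by simpa using hσ)).norm
  have hFi : ∀ n, Integrable (F n) := by
    intro n
    have h1 := (kk_line_int (σ := σ) (by linarith)).bdd_mul (htc n).aestronglyMeasurable
      (Filter.Eventually.of_forall fun t => (htn n t).le)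
    exact h1.bdd_mul hxc.aestronglyMeasurable (Filter.Eventually.of_forall fun t => (hxn t).le)
  have hFn : ∀ n t, ‖F n t‖ = x ^ σ * (‖LSeries.term (fun n => ((vonMangoldt n : ℝ) : ℂ)) (σ : ℂ) n‖ *
      ‖kk (s t)‖) := by
    intro n t
    simp only [hF, norm_mul, hxn, htn]
  have hFs : Summable fun n => ∫ t, ‖F n t‖ := by
    simp_rw [hFn, integral_const_mul]
    exact (hsum.mul_right _).mul_left _
  have hmain := hasSum_integral_of_summable_integral_norm hFi hFs
  -- identify each term
  have hterm : ∀ n, (1 / (2 * Real.pi) : ℝ) • ∫ t, F n t =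
      ((vonMangoldt n * max (1 - n / x) 0 : ℝ) : ℂ) := by
    intro n
    rcases eq_or_ne n 0 with rfl | hn
    · simp [hF]
    have hn0 : 0 < (n : ℝ) := by exact_mod_cast Nat.pos_of_ne_zero hn
    have h1 := perron1 (σ := σ) (y := n / x) hσ (by positivity)
    rw [Complex.ofReal_mul, ← h1, mul_smul_comm, ← integral_const_mul]
    congr 1
    refine integral_congr_ae (Filter.Eventually.of_forall fun t => ?_)
    simp only [hF, LSeries.term_of_ne_zero hn]
    have e : (((n : ℝ) / x : ℝ) : ℂ) ^ (-(s t)) = (x : ℂ) ^ (s t) / (n : ℂ) ^ (s t) := by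
      rw [Complex.ofReal_div, Complex.div_cpow_ofReal_nonneg hn0.le hx0.le, Complex.cpow_neg, Complex.cpow_neg]
      simp [div_eq_mul_inv, mul_comm]
    show _ = _ * (_ ^ (-(s t)) * kk (s t))
    rw [e]
    ring
  have hmain2 := hmain.const_smul (1 / (2 * Real.pi) : ℝ)
  simp_rw [hterm] at hmain2
  have hpsi : ((psi1 x : ℝ) : ℂ) = (1 / (2 * Real.pi) : ℝ) • ∫ t, ∑' n, F n t := by
    rw [← hmain2.tsum_eq, psi1, Complex.ofReal_tsum]
  have hFt : ∀ t, ∑' n, F n t = (x : ℂ) ^ (s t) * (1 / (s t - 1) * kk (s t)) -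
      (x : ℂ) ^ (s t) * (FF (s t) * kk (s t)) := by
    intro t
    simp only [hF]
    rw [tsum_mul_left, tsum_mul_right]
    have := LSeries_eq_FF (s := s t) (by rw [hsre]; exact hσ)
    rw [LSeries] at this
    rw [this]; ring
  have hi1 : Integrable fun t => (x : ℂ) ^ (s t) * (1 / (s t - 1) * kk (s t)) :=
    (kk2_line_int hσ).bdd_mul hxc.aestronglyMeasurable
      (Filter.Eventually.of_forall fun t => (hxn t).le)
  have hi2 : Integrable fun t => (x : ℂ) ^ (s t) * (FF (s t) * kk (s t)) := by
    refine Integrable.bdd_mul ?_ hxc.aestronglyMeasurable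
      (Filter.Eventually.of_forall fun t => (hxn t).le)
    refine (kk_line_int (σ := σ) (by linarith)).bdd_mul
      (c := 1 / (σ - 1) + ∑' n, ‖LSeries.term (fun n => ((vonMangoldt n : ℝ) : ℂ)) (σ : ℂ) n‖)
      (FF_line_cont hσ.le).aestronglyMeasurable
      (Filter.Eventually.of_forall fun t => ?_)
    have e : FF (s t) = 1 / (s t - 1) - LSeries (fun n => ((vonMangoldt n : ℝ) : ℂ)) (s t) := by
      rw [LSeries_eq_FF (s := s t) (by rw [hsre]; exact hσ)]; ring
    show ‖FF (s t)‖ ≤ _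
    rw [e]
    refine (norm_sub_le _ _).trans (add_le_add ?_ ?_)
    · rw [norm_div, norm_one]
      have : σ - 1 ≤ ‖s t - 1‖ := by
        refine le_trans (le_of_eq ?_) (Complex.re_le_norm _); simp [hs]
      have h0 : 0 < σ - 1 := by linarith
      gcongr
    · refine tsum_of_norm_bounded hsum.hasSum fun n => (htn n t).le
  simp_rw [hFt] at hpsi
  rw [integral_sub hi1 hi2, smul_sub] at hpsi
  have h2 := perron2 (σ := σ) (y := 1 / x) hσ (by positivity) (by rw [div_le_one hx0]; exact hx)
  have e2 : (1 - 1 / x) ^ 2 / (2 * (1 / x)) = (x - 1) ^ 2 / (2 * x) := by field_simp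
  rw [e2] at h2
  have e3 : ∀ t, (((1 / x : ℝ)) : ℂ) ^ (-(s t)) = (x : ℂ) ^ (s t) := by
    intro t
    rw [one_div, Complex.ofReal_inv, Complex.inv_cpow, Complex.cpow_neg, inv_inv]
    rw [Complex.arg_ofReal_of_nonneg hx0.le]; exact Real.pi_pos.ne
  have e4 : (∫ t : ℝ, (x : ℂ) ^ (s t) * (1 / (s t - 1) * kk (s t))) =
      ∫ t : ℝ, (((1 / x : ℝ)) : ℂ) ^ (-((σ:ℂ) + t * Complex.I)) *
      (1 / ((σ : ℂ) + t * Complex.I - 1) * kk (σ + t * Complex.I)) := by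
    refine integral_congr_ae (Filter.Eventually.of_forall fun t => ?_)
    have := e3 t
    simp only [hs] at this ⊢
    rw [this]
  rw [e4, h2] at hpsi
  rw [Complex.ofReal_sub, hpsi]
  ring

end RMF

namespace RMF

lemma region_bound {κ M : ℝ} (hκ1 : κ ≤ 1 / 2) (hM : 0 < M) {s : ℂ} (hs : 1 / 2 ≤ s.re)
    (h : ‖FF s‖ ≤ M * (1 + |s.im|) ^ κ) : ‖FF s * kk s‖ ≤ 8 * M * (1 + |s.im|) ^ (-(3/2) : ℝ) := by
  set v := 1 + |s.im| with hv
  have hv1 : 1 ≤ v := by rw [hv]; linarith [abs_nonneg s.im]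
  have hv0 : 0 < v := by linarith
  have h1 : (1 + s.im ^ 2)⁻¹ ≤ 2 * (v ^ 2)⁻¹ := by
    rw [← div_eq_mul_inv, inv_eq_one_div, div_le_div_iff₀ (by positivity) (by positivity)]
    rw [← sq_abs s.im, hv]; nlinarith [sq_nonneg (|s.im| - 1)]
  have h2 : v ^ κ ≤ v ^ (1/2 : ℝ) := Real.rpow_le_rpow_of_exponent_le hv1 hκ1
  rw [norm_mul]
  calc ‖FF s‖ * ‖kk s‖ ≤ (M * v ^ (1/2 : ℝ)) * (4 * (2 * (v ^ 2)⁻¹)) := by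
        refine mul_le_mul (h.trans (by gcongr)) ((kk_bound hs).trans (by gcongr)) (norm_nonneg _) (by positivity)
    _ = 8 * M * (v ^ (1/2 : ℝ) * (v ^ (2:ℝ))⁻¹) := by rw [Real.rpow_two]; ring
    _ = _ := by
      rw [← Real.rpow_neg hv0.le, ← Real.rpow_add hv0]; norm_num

lemma contour {κ M a : ℝ} (hκ : 0 < κ) (hκ1 : κ ≤ 1 / 2) (hM : 0 < M) (ha : 0 < a) (ha1 : a ≤ 1 / 2)
    (hz : ∀ s : ℂ, 1 - a * (1 + |s.im|) ^ (-κ) ≤ s.re → s.re ≤ 2 →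
      0 < s.re ∧ GG s ≠ 0 ∧ ‖FF s‖ ≤ M * (1 + |s.im|) ^ κ)
    {x σ T : ℝ} (hx : 1 ≤ x) (hσ : 1 < σ) (hσ2 : σ ≤ 2) (hT : 1 ≤ T) :
    |psi1 x - (x - 1) ^ 2 / (2 * x)| ≤ 64 * M * x ^ σ * T ^ (-(1/2) : ℝ) +
      16 * M * T * x ^ (1 - a * (1 + T) ^ (-κ)) := by
  have hx0 : 0 < x := by linarith
  have hT0 : 0 < T := by linarith
  set h : ℂ → ℂ := fun s => (x : ℂ) ^ s * (FF s * kk s) with hh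
  set σ0 := 1 - a * (1 + T) ^ (-κ) with hσ0
  have hTk : (1 + T) ^ (-κ) ≤ 1 := Real.rpow_le_one_of_one_le_of_nonpos (by linarith) (by linarith)
  have hTk0 : 0 < (1 + T) ^ (-κ) := by positivity
  have hsig_l : 1 / 2 ≤ σ0 := by nlinarith
  have hsig_u : σ0 ≤ 1 := by rw [hσ0]; nlinarith
  have hreg : ∀ s : ℂ, σ0 ≤ s.re → s.re ≤ 2 → |s.im| ≤ T →
      0 < s.re ∧ GG s ≠ 0 ∧ ‖FF s‖ ≤ M * (1 + |s.im|) ^ κ := by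
    intro s h1 h2 h3
    refine hz s (le_trans ?_ h1) h2
    have : (1 + T) ^ (-κ) ≤ (1 + |s.im|) ^ (-κ) :=
      Real.rpow_le_rpow_of_nonpos (by positivity) (by linarith) (by linarith)
    rw [hσ0]; nlinarith
  have hline : ∀ t : ℝ, ‖FF (σ + t * Complex.I)‖ ≤ M * (1 + |t|) ^ κ := by
    intro t
    have := (hz (σ + t * Complex.I) (by rw [line_re, line_im]; nlinarith [show 0 < (1 + |t|) ^ (-κ) by positivity]) (by rw [line_re]; exact hσ2)).2.2
    rwa [line_im] at this
  have hbd : ∀ s : ℂ, ∀ r : ℝ, s.re ≤ r → 1 / 2 ≤ s.re → ‖FF s‖ ≤ M * (1 + |s.im|) ^ κ →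
      ‖h s‖ ≤ x ^ r * (8 * M * (1 + |s.im|) ^ (-(3/2) : ℝ)) := by
    intro s r h1 h2 h3
    rw [hh]; simp only
    rw [norm_mul, Complex.norm_cpow_eq_rpow_re_of_pos hx0]
    exact mul_le_mul (Real.rpow_le_rpow_of_exponent_le hx h1) (region_bound hκ1 hM h2 h3)
      (norm_nonneg _) (by positivity)
  -- the σ line
  have hlb : ∀ t : ℝ, ‖h (σ + t * Complex.I)‖ ≤ x ^ σ * (8 * M * (1 + |t|) ^ (-(3/2) : ℝ)) := by
    intro t
    have := hbd (σ + t * Complex.I) σ (by rw [line_re]) (by rw [line_re]; linarith)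
      (by rw [line_im]; exact hline t)
    rwa [line_im] at this
  have hxc : ∀ σ' : ℝ, Continuous fun t : ℝ => (x : ℂ) ^ ((σ' : ℂ) + t * Complex.I) := by
    intro σ'
    refine Continuous.const_cpow (by fun_prop) (Or.inl (by exact_mod_cast hx0.ne'))
  have hcont : Continuous fun t : ℝ => h (σ + t * Complex.I) :=
    (hxc σ).mul ((FF_line_cont hσ.le).mul (kk_line_cont (by linarith)))
  have hJ : Integrable fun t : ℝ => x ^ σ * (8 * M * (1 + |t|) ^ (-(3/2) : ℝ)) := by
    have : Integrable fun t : ℝ => (1 + ‖t‖) ^ (-(3/2) : ℝ) :=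
      integrable_one_add_norm (by simp; norm_num)
    exact (this.const_mul _).const_mul _
  have hhInt : Integrable fun t : ℝ => h (σ + t * Complex.I) :=
    hJ.mono' hcont.aestronglyMeasurable (Filter.Eventually.of_forall hlb)
  have htail : ∀ g : ℝ → ℂ, (∀ t, ‖g t‖ ≤ x ^ σ * (8 * M * (1 + |t|) ^ (-(3/2) : ℝ))) →
      ‖∫ t in Set.Ioi T, g t‖ ≤ 16 * M * x ^ σ * T ^ (-(1/2) : ℝ) := by
    intro g hg
    have hi : IntegrableOn (fun t : ℝ => x ^ σ * (8 * M * t ^ (-(3/2) : ℝ))) (Set.Ioi T) :=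
      ((integrableOn_Ioi_rpow_of_lt (by norm_num) hT0).const_mul _).const_mul _
    have := norm_integral_le_of_norm_le hi (f := g) (by
      filter_upwards [ae_restrict_mem measurableSet_Ioi] with t ht
      have ht : T < t := ht
      refine (hg t).trans ?_
      gcongr ?_ * (?_ * ?_)
      apply Real.rpow_le_rpow_of_nonpos (by linarith) _ (by norm_num)
      linarith [le_abs_self t])
    refine this.trans (le_of_eq ?_)
    rw [integral_const_mul, integral_const_mul, integral_Ioi_rpow_of_lt (by norm_num) hT0]
    have : (-(3/2) + 1 : ℝ) = -(1/2) := by norm_num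
    rw [this]
    ring
  have ht1 := htail (fun t => h (σ + t * Complex.I)) hlb
  have ht2 : ‖∫ t in Set.Iic (-T), h (σ + t * Complex.I)‖ ≤ 16 * M * x ^ σ * T ^ (-(1/2) : ℝ) := by
    have := htail (fun t => h (σ + ((-t : ℝ) : ℂ) * Complex.I)) (fun t => by
      have := hlb (-t); rwa [abs_neg] at this)
    rwa [integral_comp_neg_Ioi T (fun t : ℝ => h (σ + t * Complex.I))] at this
  -- the rectangle
  have hrect := Complex.integral_boundary_rect_eq_zero_of_differentiableOn h
    (⟨σ0, -T⟩ : ℂ) (⟨σ, T⟩ : ℂ) (by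
      intro s hs
      have h1 : s.re ∈ Set.uIcc σ0 σ := hs.1
      have h2 : s.im ∈ Set.uIcc (-T) T := hs.2
      rw [Set.uIcc_of_le (by linarith)] at h1 h2
      obtain ⟨c1, c2, c3⟩ := hreg s h1.1 (by linarith [h1.2]) (abs_le.2 h2)
      refine DifferentiableAt.differentiableWithinAt ?_
      have ho : IsOpen {s : ℂ | 0 < s.re} := isOpen_lt continuous_const Complex.continuous_re
      refine DifferentiableAt.mul ?_ (DifferentiableAt.mul ?_ (kk_diffAt c1))
      · exact DifferentiableAt.const_cpow (by fun_prop) (Or.inl (by exact_mod_cast hx0.ne'))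
      · exact ((GG_diffOn.deriv ho).differentiableAt (ho.mem_nhds c1)).div (GG_diffAt c1) c2)
  simp only at hrect
  have hTT : T ^ (-(3/2) : ℝ) ≤ T ^ (-(1/2) : ℝ) :=
    Real.rpow_le_rpow_of_exponent_le hT (by norm_num)
  have hhor : ∀ τ : ℝ, |τ| = T → ‖∫ y : ℝ in σ0..σ, h (y + τ * Complex.I)‖ ≤
      16 * M * x ^ σ * T ^ (-(1/2) : ℝ) := by
    intro τ hτ
    have h1 := intervalIntegral.norm_integral_le_of_norm_le_const (a := σ0) (b := σ)
      (f := fun y : ℝ => h (y + τ * Complex.I)) (C := x ^ σ * (8 * M * T ^ (-(1/2) : ℝ))) (by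
      intro y hy
      rw [Set.uIoc_of_le (by linarith)] at hy
      have c := hreg (y + τ * Complex.I) (by rw [line_re]; exact hy.1.le) (by rw [line_re]; linarith [hy.2])
        (by rw [line_im, hτ])
      have := hbd (y + τ * Complex.I) σ (by rw [line_re]; exact hy.2) (by rw [line_re]; linarith [hy.1]) c.2.2
      refine this.trans ?_
      rw [line_im, hτ]
      gcongr ?_ * (?_ * ?_)
      refine le_trans ?_ hTT
      exact Real.rpow_le_rpow_of_nonpos hT0 (by linarith) (by norm_num))
    refine h1.trans ?_
    rw [abs_of_nonneg (by linarith)]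
    calc _ ≤ x ^ σ * (8 * M * T ^ (-(1/2) : ℝ)) * 2 := by gcongr; linarith
      _ = _ := by ring
  have hleft : ‖∫ y : ℝ in (-T)..T, h (σ0 + y * Complex.I)‖ ≤ 16 * M * T * x ^ σ0 := by
    have h1 := intervalIntegral.norm_integral_le_of_norm_le_const (a := -T) (b := T)
      (f := fun y : ℝ => h (σ0 + y * Complex.I)) (C := x ^ σ0 * (8 * M)) (by
      intro y hy
      rw [Set.uIoc_of_le (by linarith)] at hy
      have c := hreg (σ0 + y * Complex.I) (by rw [line_re]) (by rw [line_re]; linarith)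
        (by rw [line_im]; exact abs_le.2 ⟨hy.1.le, hy.2⟩)
      have := hbd (σ0 + y * Complex.I) σ0 (by rw [line_re]) (by rw [line_re]; exact hsig_l) c.2.2
      refine this.trans ?_
      refine mul_le_mul_of_nonneg_left ?_ (by positivity)
      refine mul_le_of_le_one_right (by positivity) ?_
      exact Real.rpow_le_one_of_one_le_of_nonpos (by linarith [abs_nonneg ((σ0:ℂ) + y * Complex.I).im]) (by norm_num))
    refine h1.trans (le_of_eq ?_)
    rw [abs_of_nonneg (by linarith)]; ring
  have hh1 := hhor T (abs_of_pos hT0)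
  have hh2 := hhor (-T) (by rw [abs_neg, abs_of_pos hT0])
  have hmid : ‖∫ y : ℝ in (-T)..T, h (σ + y * Complex.I)‖ ≤
      2 * (16 * M * x ^ σ * T ^ (-(1/2) : ℝ)) + 16 * M * T * x ^ σ0 := by
    set A := ∫ y : ℝ in σ0..σ, h (y + ((-T : ℝ) : ℂ) * Complex.I)
    set B := ∫ y : ℝ in σ0..σ, h (y + (T : ℂ) * Complex.I)
    set Cc := ∫ y : ℝ in (-T)..T, h (σ + y * Complex.I)
    set Dd := ∫ y : ℝ in (-T)..T, h (σ0 + y * Complex.I)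
    have e : Complex.I • Cc = B - A + Complex.I • Dd := by linear_combination hrect
    have : ‖Cc‖ = ‖Complex.I • Cc‖ := by rw [norm_smul, Complex.norm_I, one_mul]
    rw [this, e]
    calc ‖B - A + Complex.I • Dd‖ ≤ ‖B‖ + ‖A‖ + ‖Complex.I • Dd‖ :=
          (norm_add_le _ _).trans (by gcongr; exact norm_sub_le _ _)
      _ ≤ _ := by rw [norm_smul, Complex.norm_I, one_mul]; linarith
  have hp := congrArg norm (perron hσ hx)
  rw [Complex.norm_real, Real.norm_eq_abs] at hp
  rw [hp, norm_neg, norm_smul]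
  have hsplit : (∫ t : ℝ, h (σ + t * Complex.I)) = (∫ t in Set.Iic (-T), h (σ + t * Complex.I)) +
      ((∫ t : ℝ in (-T)..T, h (σ + t * Complex.I)) + ∫ t in Set.Ioi T, h (σ + t * Complex.I)) := by
    rw [intervalIntegral.integral_interval_add_Ioi hhInt.integrableOn hhInt.integrableOn,
      intervalIntegral.integral_Iic_add_Ioi hhInt.integrableOn hhInt.integrableOn]
  have hpi : ‖(1 / (2 * Real.pi) : ℝ)‖ ≤ 1 := by
    rw [Real.norm_eq_abs, abs_of_pos (by positivity), div_le_one (by positivity)]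
    linarith [Real.two_le_pi]
  calc _ ≤ 1 * ‖∫ t : ℝ, h (σ + t * Complex.I)‖ := by gcongr
    _ ≤ _ := by
      rw [one_mul, hsplit]
      refine (norm_add_le _ _).trans ?_
      have := norm_add_le (∫ t : ℝ in (-T)..T, h (σ + t * Complex.I)) (∫ t in Set.Ioi T, h (σ + t * Complex.I))
      linarith

open Filter in
lemma psi1_asymp {B : ℝ} (hB : 1 ≤ B) : ∃ C x0 : ℝ, 0 < C ∧ 1 < x0 ∧ ∀ x ≥ x0,
    |psi1 x - (x - 1) ^ 2 / (2 * x)| ≤ C * x * (Real.log x) ^ (-B) := by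
  set κ := 1 / (4 * B) with hκdef
  have hκ : 0 < κ := by positivity
  have hκ1 : κ ≤ 1 / 2 := by
    rw [hκdef]; apply one_div_le_one_div_of_le <;> linarith
  obtain ⟨a, M, ha, hM, ha1, hz⟩ := zero_free hκ (by linarith)
  have hlim := tendsto_rpow_mul_exp_neg_mul_atTop_nhds_zero (6 * B) (a / 2) (by positivity)
  have hev := hlim.eventually (eventually_le_nhds (show (0:ℝ) < 1 by norm_num))
  obtain ⟨v0, hv0⟩ := eventually_atTop.1 hev
  set u0 := max v0 1 with hu0
  have hu01 : 1 ≤ u0 := le_max_right _ _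
  refine ⟨64 * M * Real.exp 1 + 16 * M, Real.exp (u0 ^ 2), by positivity,
    Real.one_lt_exp_iff.2 (by positivity), fun x hx => ?_⟩
  have hx0 : 0 < x := lt_of_lt_of_le (Real.exp_pos _) hx
  set u := Real.log x with hu
  have hxu : x = Real.exp u := (Real.exp_log hx0).symm
  have hu02 : u0 ^ 2 ≤ u := by rw [hu, Real.le_log_iff_exp_le hx0]; exact hx
  have hu1 : 1 ≤ u := by nlinarith
  have hup : 0 < u := by linarith
  have hx1 : 1 ≤ x := by rw [hxu]; exact Real.one_le_exp hup.le
  set v := u ^ (1/2 : ℝ) with hv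
  have hv1 : u0 ≤ v := by
    rw [hv, ← Real.sqrt_eq_rpow]; exact Real.le_sqrt_of_sq_le hu02
  have hvp : 0 < v := by linarith
  have hvv := hv0 v ((le_max_left _ _).trans hv1)
  set T := u ^ (2 * B) with hT
  have hT1 : 1 ≤ T := Real.one_le_rpow hu1 (by linarith)
  have hTk : T ^ κ = v := by
    rw [hT, ← Real.rpow_mul hup.le, hv, hκdef]; congr 1; field_simp; norm_num
  have hTk2 : (1 + T) ^ κ ≤ 2 * v := by
    calc (1 + T) ^ κ ≤ (2 * T) ^ κ := by gcongr; linarith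
      _ = 2 ^ κ * T ^ κ := Real.mul_rpow (by norm_num) (by linarith)
      _ ≤ 2 ^ (1:ℝ) * T ^ κ := by gcongr; norm_num; linarith
      _ = _ := by rw [hTk, Real.rpow_one]
  have hvu : v * v = u := by rw [hv, ← Real.rpow_add hup]; norm_num
  have h := contour hκ hκ1 hM ha ha1 (x := x) (σ := 1 + 1 / u) (T := T)
    (fun s h1 h2 => hz s h1 h2) hx1 (by linarith [show 0 < 1 / u by positivity])
    (by have : 1 / u ≤ 1 := by rw [div_le_one hup]; exact hu1
        linarith) hT1
  refine h.trans ?_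
  have e1 : x ^ (1 + 1 / u) = Real.exp 1 * x := by
    rw [Real.rpow_add hx0, Real.rpow_one, mul_comm]
    congr 1
    rw [Real.rpow_def_of_pos hx0, ← hu]; congr 1; field_simp
  have e2 : T ^ (-(1/2) : ℝ) = u ^ (-B) := by
    rw [hT, ← Real.rpow_mul hup.le]; congr 1; ring
  have e3 : T * x ^ (1 - a * (1 + T) ^ (-κ)) ≤ x * u ^ (-B) := by
    have f1 : x ^ (1 - a * (1 + T) ^ (-κ)) ≤ x * Real.exp (-(a / 2) * v) := by
      rw [Real.rpow_def_of_pos hx0, ← hu]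
      conv_rhs => rw [hxu, ← Real.exp_add]
      apply Real.exp_le_exp.2
      have g1 : v / 2 ≤ u * (1 + T) ^ (-κ) := by
        rw [Real.rpow_neg (by linarith), ← div_eq_mul_inv, le_div_iff₀ (by positivity), ← hvu]
        nlinarith
      nlinarith
    have f2 : T * Real.exp (-(a / 2) * v) ≤ u ^ (-B) := by
      have g1 : v ^ (6 * B) = T * u ^ B := by
        rw [hv, hT, ← Real.rpow_mul hup.le, ← Real.rpow_add hup]; congr 1; ring
      rw [g1] at hvv
      rw [Real.rpow_neg hup.le, ← one_div, le_div_iff₀ (by positivity)]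
      linarith
    calc _ ≤ T * (x * Real.exp (-(a / 2) * v)) := by gcongr
      _ = x * (T * Real.exp (-(a / 2) * v)) := by ring
      _ ≤ _ := by gcongr
  rw [e1, e2]
  have : 16 * M * T * x ^ (1 - a * (1 + T) ^ (-κ)) ≤ 16 * M * (x * u ^ (-B)) := by
    rw [mul_assoc (16 * M)]; gcongr
  linarith

end RMF

namespace RMF

lemma psi1_eq_sum {x : ℝ} (hx : 0 < x) {N : ℕ} (hN : ⌊x⌋₊ ≤ N) :
    x * psi1 x = ∑ n ∈ Finset.Icc 0 N, ArithmeticFunction.vonMangoldt n * max (x - n) 0 := by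
  rw [psi1, tsum_eq_sum (s := Finset.Icc 0 N), Finset.mul_sum]
  · refine Finset.sum_congr rfl fun n _ => ?_
    have : x * max (1 - n / x) 0 = max (x - n) 0 := by
      rw [mul_max_of_nonneg _ _ hx.le, mul_zero]
      congr 1
      field_simp
    rw [← this]; ring
  · intro n hn
    have h1 : N < n := by simpa using hn
    have h2 : x < n := Nat.lt_of_floor_lt (lt_of_le_of_lt hN h1)
    have : (1 - n / x) ≤ 0 := by
      rw [sub_nonpos, le_div_iff₀ hx]; linarith
    rw [max_eq_right this, mul_zero]

lemma psi_eq_sum' {x : ℝ} (hx : 0 < x) {N : ℕ} (hN : ⌊x⌋₊ ≤ N) :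
    Chebyshev.psi x = ∑ n ∈ Finset.Icc 0 N,
      ArithmeticFunction.vonMangoldt n * (if (n : ℝ) ≤ x then 1 else 0) := by
  rw [Chebyshev.psi_eq_sum_Icc]
  simp only [mul_ite, mul_one, mul_zero]
  rw [← Finset.sum_filter]
  refine Finset.sum_congr ?_ fun _ _ => rfl
  ext n
  simp only [Finset.mem_Icc, Finset.mem_filter, zero_le, true_and]
  rw [Nat.le_floor_iff hx.le]
  constructor
  · intro h; exact ⟨(Nat.le_floor h).trans hN, h⟩
  · exact fun h => h.2

lemma psi_sandwich {x h : ℝ} (hx : 0 < x) (hh : 0 < h) :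
    h * Chebyshev.psi x ≤ (x + h) * psi1 (x + h) - x * psi1 x ∧
    (x + h) * psi1 (x + h) - x * psi1 x ≤ h * Chebyshev.psi (x + h) := by
  have hN : ⌊x⌋₊ ≤ ⌊x + h⌋₊ := Nat.floor_le_floor (by linarith)
  rw [psi1_eq_sum hx hN, psi1_eq_sum (by linarith : 0 < x + h) le_rfl, psi_eq_sum' hx hN,
    psi_eq_sum' (by linarith : 0 < x + h) le_rfl, ← Finset.sum_sub_distrib, Finset.mul_sum,
    Finset.mul_sum]
  constructor
  all_goals
    refine Finset.sum_le_sum fun n _ => ?_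
    have hv : 0 ≤ ArithmeticFunction.vonMangoldt n := ArithmeticFunction.vonMangoldt_nonneg
    rw [← mul_sub, mul_left_comm]
    refine mul_le_mul_of_nonneg_left ?_ hv
    split_ifs with hc
    · simp only [mul_one]
      rcases max_cases (x + h - n) 0 with h1 | h1 <;> rcases max_cases (x - n) 0 with h2 | h2 <;>
      linarith [h1.1, h1.2, h2.1, h2.2]
    · simp only [mul_zero]
      rcases max_cases (x + h - n) 0 with h1 | h1 <;> rcases max_cases (x - n) 0 with h2 | h2 <;>
      linarith [h1.1, h1.2, h2.1, h2.2]

set_option maxHeartbeats 1000000 in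
lemma theta_asymp {A : ℝ} (hA : 1 ≤ A) : ∃ C x0 : ℝ, 0 < C ∧ 1 < x0 ∧ ∀ x ≥ x0,
    |Chebyshev.theta x - x| ≤ C * x * (Real.log x) ^ (-A) := by
  obtain ⟨C, x0, hC, hx0, H⟩ := psi1_asymp (B := 2 * A) (by linarith)
  have H2 : ∀ x ≥ x0, |x * psi1 x - (x - 1) ^ 2 / 2| ≤ C * x ^ 2 * (Real.log x) ^ (-(2 * A)) := by
    intro x hx
    have hxp : 0 < x := by linarith
    have h1 := H x hx
    have : x * psi1 x - (x - 1) ^ 2 / 2 = x * (psi1 x - (x - 1) ^ 2 / (2 * x)) := by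
      field_simp
    rw [this, abs_mul, abs_of_pos hxp]
    calc _ ≤ x * (C * x * (Real.log x) ^ (-(2 * A))) := by gcongr
      _ = _ := by ring
  have e1 : ∀ᶠ x : ℝ in Filter.atTop, (Real.log x) ^ (-A) ≤ 1 / 2 := by
    have := (tendsto_rpow_neg_atTop (by linarith : 0 < A)).comp Real.tendsto_log_atTop
    exact this.eventually_le_const (by norm_num)
  have e2 : ∀ᶠ x : ℝ in Filter.atTop, (Real.log x) ^ (A + 1) ≤ x ^ (1 / 2 : ℝ) := by
    have := (isLittleO_log_rpow_rpow_atTop (A + 1) (by norm_num : (0:ℝ) < 1 / 2)).bound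
      (c := 1) one_pos
    filter_upwards [this, Filter.eventually_ge_atTop 1] with x hx hx1
    rw [one_mul, Real.norm_of_nonneg (Real.rpow_nonneg (Real.log_nonneg hx1) _),
      Real.norm_of_nonneg (by positivity)] at hx
    exact hx
  obtain ⟨x1, hx1⟩ := Filter.eventually_atTop.1 (e1.and e2)
  refine ⟨4 + 5 * C + 2 * 2 ^ (2 * A) * C, max (max x1 (2 * x0)) (Real.exp 2), by positivity,
    lt_of_lt_of_le (by linarith) ((le_max_right x1 (2 * x0)).trans (le_max_left _ _)), ?_⟩
  intro x hx
  have hxx1 : x1 ≤ x := ((le_max_left x1 (2 * x0)).trans (le_max_left _ _)).trans hx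
  have hxx0 : 2 * x0 ≤ x := ((le_max_right x1 (2 * x0)).trans (le_max_left _ _)).trans hx
  have hxe : Real.exp 2 ≤ x := (le_max_right _ _).trans hx
  obtain ⟨h1, h2⟩ := hx1 x hxx1
  have hxp : 0 < x := by linarith
  set u := Real.log x with hu
  have hu2 : 2 ≤ u := by rw [hu, Real.le_log_iff_exp_le hxp]; exact hxe
  have hup : 0 < u := by linarith
  set r := u ^ (-A) with hr
  have hrp : 0 < r := Real.rpow_pos_of_pos hup _
  have hrr : u ^ (-(2 * A)) = r ^ 2 := by
    rw [hr, ← Real.rpow_natCast, ← Real.rpow_mul hup.le]; congr 1; push_cast; ring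
  have hsq : Real.sqrt x * u ≤ x * r := by
    have : u ^ (A + 1) * r = u := by
      rw [hr, ← Real.rpow_add hup]; simp
    have hs : Real.sqrt x * Real.sqrt x = x := Real.mul_self_sqrt hxp.le
    calc Real.sqrt x * u = Real.sqrt x * (u ^ (A + 1) * r) := by rw [this]
      _ ≤ Real.sqrt x * (Real.sqrt x * r) := by
        rw [Real.sqrt_eq_rpow]; rw [Real.sqrt_eq_rpow] at *; gcongr
      _ = x * r := by rw [← mul_assoc, hs]
  have hone : 1 ≤ x * r := by
    refine le_trans ?_ hsq
    have : 1 ≤ Real.sqrt x := Real.one_le_sqrt.2 (by linarith)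
    nlinarith
  set h := x * r with hh
  have hhp : 0 < h := by positivity
  have hhx : h ≤ x / 2 := by rw [hh]; nlinarith
  -- upper bound
  have up : Chebyshev.psi x ≤ x + (1 + 5 * C) * (x * r) := by
    have s := (psi_sandwich hxp hhp).1
    have a1 := abs_le.1 (H2 x (by linarith))
    have a2 := abs_le.1 (H2 (x + h) (by linarith))
    have l2 : (Real.log (x + h)) ^ (-(2 * A)) ≤ r ^ 2 := by
      rw [← hrr]
      refine Real.rpow_le_rpow_of_nonpos hup (Real.log_le_log hxp (by linarith)) (by linarith)
    have b2 : C * (x + h) ^ 2 * (Real.log (x + h)) ^ (-(2 * A)) ≤ C * (2 * x) ^ 2 * r ^ 2 := by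
      have : 0 ≤ (Real.log (x + h)) ^ (-(2 * A)) :=
        Real.rpow_nonneg (Real.log_nonneg (by linarith)) _
      gcongr; linarith
    rw [← hu, hrr] at a1
    have : h * Chebyshev.psi x ≤ h * (x + (1 + 5 * C) * (x * r)) := by
      have key : h * (x + (1 + 5 * C) * (x * r)) = h * x + h * h + 5 * C * x ^ 2 * r ^ 2 := by
        rw [hh]; ring
      rw [key]
      have e : (x + h - 1) ^ 2 / 2 - (x - 1) ^ 2 / 2 = h * x - h + h * h / 2 := by ring
      have hhh : 0 ≤ h * h := by positivity
      linarith [a1.1, a2.2]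
    exact le_of_mul_le_mul_left this hhp
  have lo : x - (2 + 2 * 2 ^ (2 * A) * C) * (x * r) ≤ Chebyshev.psi x := by
    have s := (psi_sandwich (x := x - h) (by linarith) hhp).2
    rw [sub_add_cancel] at s
    have a1 := abs_le.1 (H2 x (by linarith))
    have a2 := abs_le.1 (H2 (x - h) (by linarith))
    rw [← hu, hrr] at a1
    have hl : u / 2 ≤ Real.log (x - h) := by
      have : Real.log (x / 2) ≤ Real.log (x - h) := Real.log_le_log (by linarith) (by linarith)
      rw [Real.log_div hxp.ne' (by norm_num)] at this
      have l2 : Real.log 2 ≤ 1 := by linarith [Real.log_two_lt_d9]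
      linarith
    have l2 : (Real.log (x - h)) ^ (-(2 * A)) ≤ 2 ^ (2 * A) * r ^ 2 := by
      refine (Real.rpow_le_rpow_of_nonpos (by linarith) hl (by linarith)).trans (le_of_eq ?_)
      rw [Real.div_rpow hup.le (by norm_num), hrr, Real.rpow_neg (by norm_num : (0:ℝ) ≤ 2) (2 * A)]
      field_simp
    have b2 : C * (x - h) ^ 2 * (Real.log (x - h)) ^ (-(2 * A)) ≤
        C * x ^ 2 * (2 ^ (2 * A) * r ^ 2) := by
      have : 0 ≤ (Real.log (x - h)) ^ (-(2 * A)) := Real.rpow_nonneg (by linarith) _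
      gcongr
      · linarith
      · linarith
    have h2A : (1:ℝ) ≤ 2 ^ (2 * A) := Real.one_le_rpow (by norm_num) (by linarith)
    have b1 : C * x ^ 2 * r ^ 2 ≤ C * x ^ 2 * (2 ^ (2 * A) * r ^ 2) := by
      gcongr
      nlinarith [sq_nonneg r]
    have : h * (x - (2 + 2 * 2 ^ (2 * A) * C) * (x * r)) ≤ h * Chebyshev.psi x := by
      have key : h * (x - (2 + 2 * 2 ^ (2 * A) * C) * (x * r)) =
        h * x - 2 * (h * h) - 2 * (C * x ^ 2 * (2 ^ (2 * A) * r ^ 2)) := by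
        rw [hh]; ring
      rw [key]
      have e : (x - 1) ^ 2 / 2 - (x - h - 1) ^ 2 / 2 = h * x - h - h * h / 2 := by ring
      have hhh : h ≤ h * h := le_mul_of_one_le_left hhp.le hone
      linarith [a1.1, a2.2]
    exact le_of_mul_le_mul_left this hhp
  have t1 := Chebyshev.theta_le_psi x
  have t2 := Chebyshev.psi_sub_theta_le (x := x) (by linarith)
  rw [← hu] at t2
  have h2A : (0:ℝ) < 2 ^ (2 * A) := by positivity
  have p1 : 0 < C * h := by positivity
  have p2 : 0 < 2 ^ (2 * A) * C * h := by positivity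
  rw [mul_assoc _ x r, ← hh, abs_le]
  have e1 : (4 + 5 * C + 2 * 2 ^ (2 * A) * C) * h =
    4 * h + 5 * (C * h) + 2 * (2 ^ (2 * A) * C * h) := by ring
  have e2 : (1 + 5 * C) * h = h + 5 * (C * h) := by ring
  have e3 : (2 + 2 * 2 ^ (2 * A) * C) * h = 2 * h + 2 * (2 ^ (2 * A) * C * h) := by ring
  rw [e1]; rw [e2] at up; rw [e3] at lo
  constructor <;> linarith

end RMF

namespace RMF

lemma prod_ge_one_add_sum (s : Finset ℕ) (g : ℕ → ℝ) (hg : ∀ p ∈ s, 0 ≤ g p) :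
    1 + ∑ p ∈ s, g p ≤ ∏ p ∈ s, (1 + g p) := by
  classical
  induction s using Finset.induction_on with
  | empty => simp
  | insert a s ha ih =>
    rw [Finset.sum_insert ha, Finset.prod_insert ha]
    have h1 := ih fun p hp => hg p (Finset.mem_insert_of_mem hp)
    have h2 := hg a (Finset.mem_insert_self _ _)
    have h3 : 0 ≤ ∑ p ∈ s, g p := Finset.sum_nonneg fun p hp => hg p (Finset.mem_insert_of_mem hp)
    nlinarith

lemma theta_diff {a b : ℕ} (hab : a ≤ b) :
    Chebyshev.theta b - Chebyshev.theta a = ∑ p ∈ (Finset.Ioc a b).filter Nat.Prime, Real.log p := by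
  rw [Chebyshev.theta, Chebyshev.theta, Nat.floor_natCast, Nat.floor_natCast, sub_eq_iff_eq_add,
    Finset.sum_filter, Finset.sum_filter, Finset.sum_filter, add_comm,
    ← Finset.Ioc_union_Ioc_eq_Ioc (Nat.zero_le a) hab, Finset.sum_union]
  exact Finset.Ioc_disjoint_Ioc_of_le le_rfl

set_option maxHeartbeats 1000000 in
lemma short_interval (D : ℝ) (hD : 1 ≤ D) : ∃ a0 : ℝ, ∀ a b : ℕ, a0 ≤ a →
    (a : ℝ) + a * (Real.log a) ^ (-D) ≤ b → (b : ℝ) ≤ a * (1 + 1 / Real.log a) →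
    ∀ δ : ℝ, δ ≤ 1 → Real.log 2 ≤ δ * Real.log (Real.log a) →
    (Real.log b / Real.log a) ^ (1 - δ) ≤
      ∏ p ∈ (Finset.Ioc a b).filter Nat.Prime, (1 + 1 / (p : ℝ)) := by
  obtain ⟨C, x0, hC, hx0, H⟩ := theta_asymp (A := D + 2) (by linarith)
  have e1 : ∀ᶠ L : ℝ in Filter.atTop, (3 + 4 * C) * Real.log L ≤ Real.log 2 * L := by
    have := (Real.isLittleO_log_id_atTop).bound (c := Real.log 2 / (3 + 4 * C))
      (div_pos (Real.log_pos (by norm_num)) (by positivity))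
    filter_upwards [this, Filter.eventually_ge_atTop 1] with L hL hL1
    rw [id, Real.norm_of_nonneg (Real.log_nonneg hL1), Real.norm_of_nonneg (by linarith),
      div_mul_eq_mul_div, le_div_iff₀ (by positivity)] at hL
    linarith
  have e2 := Real.tendsto_log_atTop.eventually (e1.and (Filter.eventually_ge_atTop (3:ℝ)))
  obtain ⟨a1, ha1⟩ := Filter.eventually_atTop.1 e2
  refine ⟨max a1 (max x0 1), fun a b ha hlo hup δ hδ1 hδ => ?_⟩
  have haa1 := (le_max_left _ _).trans ha
  have hax0 := (le_max_left _ _).trans ((le_max_right _ _).trans ha)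
  have hap : (0:ℝ) < a := by linarith
  obtain ⟨hL1, hL3⟩ := ha1 _ haa1
  set L := Real.log a with hL
  have hLp : 0 < L := by linarith
  have hlogL : 0 < Real.log L := Real.log_pos (by linarith)
  have hrD : 0 < L ^ (-D) := Real.rpow_pos_of_pos hLp _
  have hba : (a:ℝ) < b := by nlinarith
  have habN : a ≤ b := by exact_mod_cast hba.le
  have hbp : (0:ℝ) < b := by linarith
  have hb2 : (b:ℝ) ≤ 2 * a := by
    have : 1 / L ≤ 1 := by rw [div_le_one hLp]; linarith
    nlinarith
  have hlogb : L ≤ Real.log b := Real.log_le_log hap hba.le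
  have hlogb' : Real.log b - L ≤ b / a - 1 := by
    rw [hL, ← Real.log_div hbp.ne' hap.ne']
    exact Real.log_le_sub_one_of_pos (by positivity)
  have hba1 : (b:ℝ) / a - 1 ≤ 1 / L := by
    rw [sub_le_iff_le_add, div_le_iff₀ hap]; linarith
  have hδp : 0 < δ := by
    by_contra hc
    have := Real.log_pos (by norm_num : (1:ℝ) < 2)
    nlinarith
  have hδL : (3 + 4 * C) ≤ δ * L := by
    have : (3 + 4 * C) * Real.log L ≤ (δ * L) * Real.log L := by nlinarith
    exact le_of_mul_le_mul_right this hlogL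
  -- theta
  have t1 := (abs_le.1 (H a hax0)).2
  have t2 := (abs_le.1 (H b (by linarith))).1
  have r2 : L ^ (-(D + 2)) = L ^ (-D) * (1 / L ^ 2) := by
    rw [neg_add, Real.rpow_add hLp, Real.rpow_neg hLp.le 2]; norm_num
  have t3 : C * b * (Real.log b) ^ (-(D + 2)) ≤ C * (2 * a) * (L ^ (-D) * (1 / L ^ 2)) := by
    rw [← r2]
    have : (Real.log b) ^ (-(D + 2)) ≤ L ^ (-(D + 2)) :=
      Real.rpow_le_rpow_of_nonpos hLp hlogb (by linarith)
    have h0 : 0 ≤ (Real.log b) ^ (-(D + 2)) := Real.rpow_nonneg (by linarith) _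
    gcongr
  rw [← hL, r2] at t1
  have hLsq : 1 / L ^ 2 ≤ 1 / L := by
    apply one_div_le_one_div_of_le hLp; nlinarith
  have th : (b - a : ℝ) * (1 - 4 * C * (1 / L)) ≤ Chebyshev.theta b - Chebyshev.theta a := by
    have : C * (a * L ^ (-D)) * (1 / L ^ 2) ≤ C * (b - a) * (1 / L) := by
      have : (a * L ^ (-D)) ≤ (b - a:ℝ) := by linarith
      have h0 : (0:ℝ) ≤ b - a := by linarith
      gcongr
    have h0 : 0 ≤ C * (a * L ^ (-D)) * (1 / L ^ 2) := by positivity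
    linarith
  rw [theta_diff habN] at th
  have hlb : 0 < Real.log b := by linarith
  have s1 : ∑ p ∈ (Finset.Ioc a b).filter Nat.Prime, Real.log p ≤
      (∑ p ∈ (Finset.Ioc a b).filter Nat.Prime, 1 / (p:ℝ)) * (b * Real.log b) := by
    rw [Finset.sum_mul]
    refine Finset.sum_le_sum fun p hp => ?_
    simp only [Finset.mem_filter, Finset.mem_Ioc] at hp
    have hp0 : (0:ℝ) < p := by exact_mod_cast hp.2.pos
    have hpb : (p:ℝ) ≤ b := by exact_mod_cast hp.1.2
    have hl : Real.log p ≤ Real.log b := Real.log_le_log hp0 hpb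
    rw [one_div, inv_mul_eq_div, le_div_iff₀ hp0, mul_comm]
    exact mul_le_mul hpb hl (Real.log_natCast_nonneg p) hbp.le
  set S := ∑ p ∈ (Finset.Ioc a b).filter Nat.Prime, 1 / (p:ℝ) with hS
  have hfac : (1 - δ) * (b * Real.log b) ≤ (a * L) * (1 - 4 * C * (1 / L)) := by
    have g1 : b * Real.log b ≤ (a * (1 + 1 / L)) * (L * (1 + 1 / L)) := by
      refine mul_le_mul hup ?_ hlb.le (by positivity)
      have : L * (1 + 1 / L) = L + 1 := by field_simp
      rw [this]
      have : 1 / L ≤ 1 := by rw [div_le_one hLp]; linarith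
      linarith
    have g2 : (1 + 1 / L) * (1 + 1 / L) ≤ 1 + 3 * (1 / L) := by
      have : 1 / L ≤ 1 := by rw [div_le_one hLp]; linarith
      have : 0 < 1 / L := by positivity
      nlinarith
    have g3 : (1 - δ) * (1 + 3 * (1 / L)) ≤ 1 - 4 * C * (1 / L) := by
      have h1 : (3 + 4 * C) * (1 / L) ≤ δ := by
        rw [mul_one_div, div_le_iff₀ hLp]; exact hδL
      have h2 : 0 < δ * (3 * (1 / L)) := by positivity
      nlinarith
    calc (1 - δ) * (b * Real.log b) ≤ (1 - δ) * ((a * (1 + 1 / L)) * (L * (1 + 1 / L))) :=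
          mul_le_mul_of_nonneg_left g1 (by linarith)
      _ = (a * L) * ((1 - δ) * ((1 + 1 / L) * (1 + 1 / L))) := by ring
      _ ≤ (a * L) * ((1 - δ) * (1 + 3 * (1 / L))) := by
          refine mul_le_mul_of_nonneg_left (mul_le_mul_of_nonneg_left g2 (by linarith))
            (by positivity)
      _ ≤ _ := mul_le_mul_of_nonneg_left g3 (by positivity)
  have hS2 : (1 - δ) * ((b - a) / (a * L)) ≤ S := by
    have hbl : 0 < b * Real.log b := by positivity
    rw [← mul_div_assoc, div_le_iff₀ (by positivity)]
    refine le_of_mul_le_mul_right ?_ hbl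
    have h0 : (0:ℝ) ≤ b - a := by linarith
    calc (1 - δ) * (b - a) * (b * Real.log b) = (b - a) * ((1 - δ) * (b * Real.log b)) := by ring
      _ ≤ (b - a) * ((a * L) * (1 - 4 * C * (1 / L))) := mul_le_mul_of_nonneg_left hfac h0
      _ = (a * L) * ((b - a) * (1 - 4 * C * (1 / L))) := by ring
      _ ≤ (a * L) * (S * (b * Real.log b)) :=
          mul_le_mul_of_nonneg_left (th.trans s1) (by positivity)
      _ = _ := by ring
  have hber : (Real.log b / L) ^ (1 - δ) ≤ 1 + (1 - δ) * (Real.log b / L - 1) := by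
    have := rpow_one_add_le_one_add_mul_self (s := Real.log b / L - 1) (p := 1 - δ)
      (by have : 0 ≤ Real.log b / L := by positivity
          linarith) (by linarith) (by linarith)
    rwa [add_sub_cancel] at this
  refine hber.trans (le_trans ?_ (prod_ge_one_add_sum _ _ fun p _ => by positivity))
  refine add_le_add le_rfl (le_trans ?_ hS2)
  refine mul_le_mul_of_nonneg_left ?_ (by linarith)
  have : ((b:ℝ) - a) / (a * L) = (b / a - 1) / L := by field_simp
  rw [this]
  have : Real.log b / L - 1 = (Real.log b - L) / L := by field_simp
  rw [this]
  gcongr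

set_option maxHeartbeats 1000000 in
lemma test_gap {ε : ℝ} (hε : 0 < ε) (hε4 : ε < 1 / 4) : ∃ n0 : ℕ, ∀ n : ℕ, n0 ≤ n →
    (⌊Real.exp ((n:ℝ) ^ ε)⌋₊ : ℝ) + ⌊Real.exp ((n:ℝ) ^ ε)⌋₊ *
      (Real.log ⌊Real.exp ((n:ℝ) ^ ε)⌋₊) ^ (-(2 / ε)) ≤ ⌊Real.exp (((n:ℝ) + 1) ^ ε)⌋₊ ∧
    (⌊Real.exp (((n:ℝ) + 1) ^ ε)⌋₊ : ℝ) ≤ ⌊Real.exp ((n:ℝ) ^ ε)⌋₊ *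
      (1 + 1 / Real.log ⌊Real.exp ((n:ℝ) ^ ε)⌋₊) := by
  set D := 2 / ε with hD
  have hDp : 0 < D := by positivity
  have tu : Filter.Tendsto (fun n : ℕ => (n:ℝ) ^ ε) Filter.atTop Filter.atTop :=
    (tendsto_rpow_atTop hε).comp tendsto_natCast_atTop_atTop
  have e1 : ∀ᶠ u : ℝ in Filter.atTop, u ^ D ≤ Real.exp u := by
    filter_upwards [(tendsto_exp_div_rpow_atTop D).eventually_ge_atTop 1,
      Filter.eventually_gt_atTop 0] with u hu hu0
    rwa [le_div_iff₀ (by positivity), one_mul] at hu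
  have e2 : ∀ᶠ u : ℝ in Filter.atTop, 4 * u ≤ Real.exp u := by
    filter_upwards [(tendsto_exp_div_rpow_atTop 1).eventually_ge_atTop 4,
      Filter.eventually_gt_atTop 0] with u hu hu0
    rwa [le_div_iff₀ (by positivity), Real.rpow_one] at hu
  have e3 : ∀ᶠ n : ℕ in Filter.atTop, 4 * ((n:ℝ) ^ ε) ^ 2 ≤ n := by
    have := ((tendsto_rpow_atTop (by linarith : 0 < 1 - 2 * ε)).comp
      (tendsto_natCast_atTop_atTop (R := ℝ))).eventually_ge_atTop 4
    filter_upwards [this, Filter.eventually_gt_atTop 0] with n hn hn0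
    have hn0' : (0:ℝ) < n := by exact_mod_cast hn0
    have h1 : ((n:ℝ) ^ ε) ^ 2 = (n:ℝ) ^ (2 * ε) := by
      rw [← Real.rpow_natCast, ← Real.rpow_mul hn0'.le]; congr 1; push_cast; ring
    rw [h1]
    calc 4 * (n:ℝ) ^ (2 * ε) ≤ (n:ℝ) ^ (1 - 2 * ε) * (n:ℝ) ^ (2 * ε) := by gcongr; exact hn
      _ = n := by rw [← Real.rpow_add hn0']; simp
  have e4 : ∀ᶠ n : ℕ in Filter.atTop, 4 * 2 ^ D / ε ≤ (n:ℝ) :=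
    tendsto_natCast_atTop_atTop.eventually_ge_atTop _
  have e5 := tu.eventually (e1.and (e2.and (Filter.eventually_ge_atTop (2:ℝ))))
  obtain ⟨n0, hn0⟩ := Filter.eventually_atTop.1 (e3.and (e4.and (e5.and
    (Filter.eventually_ge_atTop 1))))
  refine ⟨n0, fun n hn => ?_⟩
  obtain ⟨h3, h4, ⟨h1, h2, hu2⟩, hn1⟩ := hn0 n hn
  have hnp : (1:ℝ) ≤ n := by exact_mod_cast hn1
  have hn0' : (0:ℝ) < n := by linarith
  set u := (n:ℝ) ^ ε with hu
  set v := ((n:ℝ) + 1) ^ ε with hv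
  have hup : 0 < u := by linarith
  have huD : u ^ D = (n:ℝ) ^ 2 := by
    rw [hu, ← Real.rpow_mul hn0'.le, hD, mul_div_cancel₀ _ hε.ne']; norm_num
  have hvu : v - u ≤ u / n := by
    have : (1 + 1 / (n:ℝ)) ^ ε ≤ 1 + ε * (1 / n) :=
      rpow_one_add_le_one_add_mul_self (le_trans (by norm_num) (by positivity : 0 ≤ 1 / (n:ℝ))) hε.le (by linarith)
    have hv' : v = u * (1 + 1 / (n:ℝ)) ^ ε := by
      rw [hv, hu, ← Real.mul_rpow hn0'.le (by positivity)]; congr 1; field_simp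
    rw [hv']
    have h6 : u * (1 + 1 / (n:ℝ)) ^ ε ≤ u * (1 + 1 * (1 / n)) := by
      refine mul_le_mul_of_nonneg_left (this.trans ?_) hup.le
      gcongr; linarith
    have : u * (1 + 1 * (1 / (n:ℝ))) = u + u / n := by ring
    linarith
  have hvu' : ε / (2 * n) ≤ v - u := by
    have hs : 1 / ((n:ℝ) + 1) ≤ 1 := by rw [div_le_one (by linarith)]; linarith
    have h5 : (1 + -(1 / ((n:ℝ) + 1))) ^ ε ≤ 1 + ε * (-(1 / (n + 1))) :=
      rpow_one_add_le_one_add_mul_self (by linarith) hε.le (by linarith)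
    have hu' : u = v * (1 + -(1 / ((n:ℝ) + 1))) ^ ε := by
      rw [hv, hu, ← Real.mul_rpow (by linarith) (by linarith)]; congr 1; field_simp; ring
    have hv1 : 1 ≤ v := Real.one_le_rpow (by linarith) hε.le
    have h6 : u ≤ v * (1 + ε * (-(1 / (n + 1)))) := by
      rw [hu']; exact mul_le_mul_of_nonneg_left h5 (by linarith)
    have h7 : ε / (2 * n) ≤ ε * (1 / (n + 1)) := by
      rw [mul_one_div]; gcongr; linarith
    have h8 : 0 < ε * (1 / ((n:ℝ) + 1)) := by positivity
    nlinarith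
  have hexpu : 0 < Real.exp u := Real.exp_pos u
  set a := ⌊Real.exp u⌋₊ with ha
  set b := ⌊Real.exp v⌋₊ with hb
  have ha1 : (a:ℝ) ≤ Real.exp u := Nat.floor_le hexpu.le
  have ha2 : Real.exp u - 1 < a := Nat.sub_one_lt_floor _
  have hb1 : (b:ℝ) ≤ Real.exp v := Nat.floor_le (Real.exp_pos v).le
  have hb2 : Real.exp v - 1 < b := Nat.sub_one_lt_floor _
  have hev : Real.exp v = Real.exp u * Real.exp (v - u) := by rw [← Real.exp_add]; congr 1; ring
  have hap : (0:ℝ) < a := by linarith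
  have hLu : Real.log a ≤ u := by
    rw [Real.log_le_iff_le_exp hap]; exact ha1
  have huL : u / 2 ≤ Real.log a := by
    rw [Real.le_log_iff_exp_le hap]
    have : Real.exp u = Real.exp (u / 2) * Real.exp (u / 2) := by
      rw [← Real.exp_add]; congr 1; ring
    have h6 : u / 2 + 1 ≤ Real.exp (u / 2) := Real.add_one_le_exp _
    nlinarith
  have hLp : 0 < Real.log a := by linarith
  constructor
  · have hLD : (Real.log a) ^ (-D) ≤ 2 ^ D / (n:ℝ) ^ 2 := by
      refine (Real.rpow_le_rpow_of_nonpos (by linarith) huL (by linarith)).trans (le_of_eq ?_)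
      rw [Real.div_rpow hup.le (by norm_num), Real.rpow_neg hup.le, huD,
        Real.rpow_neg (by norm_num : (0:ℝ) ≤ 2)]
      field_simp
    have g1 : a * (Real.log a) ^ (-D) ≤ Real.exp u * (2 ^ D / (n:ℝ) ^ 2) := by
      have : 0 ≤ (Real.log a) ^ (-D) := Real.rpow_nonneg hLp.le _
      gcongr
    have g2 : Real.exp u * (1 + ε / (2 * n)) ≤ Real.exp v := by
      rw [hev]
      gcongr
      linarith [Real.add_one_le_exp (v - u)]
    have h2D : (1:ℝ) ≤ 2 ^ D := Real.one_le_rpow (by norm_num) hDp.le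
    have g3 : 1 ≤ Real.exp u * (2 ^ D / (n:ℝ) ^ 2) := by
      rw [← huD, ← mul_div_assoc, le_div_iff₀ (by positivity), one_mul]
      nlinarith
    have g4 : 2 * (2 ^ D / (n:ℝ) ^ 2) ≤ ε / (2 * n) := by
      rw [div_le_iff₀ hε] at h4
      rw [← mul_div_assoc, div_le_div_iff₀ (by positivity) (by positivity)]
      nlinarith
    have g5 := mul_le_mul_of_nonneg_left g4 hexpu.le
    linarith
  · have hd : v - u ≤ 1 / (4 * u) := by
      refine hvu.trans ?_
      rw [div_le_div_iff₀ hn0' (by positivity)]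
      nlinarith
    have hd1 : 1 / (4 * u) ≤ 1 / 2 := by
      apply one_div_le_one_div_of_le <;> linarith
    have hexp : Real.exp (v - u) ≤ 1 + 1 / (2 * u) := by
      have : Real.exp (v - u) ≤ Real.exp (1 / (4 * u)) := Real.exp_le_exp.2 hd
      have h7 := Real.exp_bound_div_one_sub_of_interval (x := 1 / (4 * u)) (by positivity) (by linarith)
      have h8 : 1 / (1 - 1 / (4 * u)) ≤ 1 + 1 / (2 * u) := by
        have : 1 / (2 * u) = 2 * (1 / (4 * u)) := by field_simp; norm_num
        rw [this, div_le_iff₀ (by linarith)]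
        have : 0 < 1 / (4 * u) := by positivity
        nlinarith
      linarith
    have g1 : Real.exp v ≤ Real.exp u * (1 + 1 / (2 * u)) := by rw [hev]; gcongr
    have g2 : 1 / u ≤ 1 / Real.log a := one_div_le_one_div_of_le hLp hLu
    have g3 : (Real.exp u - 1) * (1 + 1 / u) ≤ a * (1 + 1 / Real.log a) := by
      gcongr
    have g4 : 2 ≤ Real.exp u * (1 / (2 * u)) := by
      rw [mul_one_div, le_div_iff₀ (by positivity)]; linarith
    have g5 : 1 / u = 2 * (1 / (2 * u)) := by field_simp
    have g6 : 1 / u ≤ 1 := by rw [div_le_one hup]; linarith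
    have g7 : (Real.exp u - 1) * (1 + 1 / u) =
      Real.exp u + 2 * (Real.exp u * (1 / (2 * u))) - 1 - 1 / u := by rw [g5]; ring
    have g8 : Real.exp u * (1 + 1 / (2 * u)) = Real.exp u + Real.exp u * (1 / (2 * u)) := by ring
    linarith

end RMF

namespace RMF

/-- The integrand. -/
def gE {Ω : Type*} (f : Ω → ℕ → ℝ) (N : ℕ) (ω : Ω) (t : ℝ) : ℝ :=
  ‖eulerProd f ω (N : ℝ) t‖ ^ 2 / ‖(1 / 2 : ℂ) + (t : ℂ) * Complex.I‖ ^ 2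

/-- The sigma algebra generated by the values at primes up to `N`. -/
def Fil {Ω : Type*} (f : Ω → ℕ → ℝ) (N : ℕ) : MeasurableSpace Ω :=
  ⨆ p ∈ {p : ℕ | p.Prime ∧ p ≤ N},
    MeasurableSpace.comap (fun ω => f ω p) (inferInstance : MeasurableSpace ℝ)

lemma eulerProd_meas {Ω : Type*} [MeasurableSpace Ω] (f : Ω → ℕ → ℝ) (N : ℕ)
    (h : ∀ p : ℕ, p.Prime → p ≤ N → Measurable fun ω => f ω p) :
    Measurable (fun z : Ω × ℝ => eulerProd f z.1 (N : ℝ) z.2) := by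
  unfold eulerProd
  refine Finset.measurable_fun_prod _ fun p hp => ?_
  simp only [Nat.floor_natCast, Finset.mem_filter, Finset.mem_Icc] at hp
  have h1 : Measurable fun z : Ω × ℝ => f z.1 p := (h p hp.2 hp.1.2).comp measurable_fst
  have h2 : Continuous fun t : ℝ => (p : ℂ) ^ (-(1 / 2 : ℂ) - (t : ℂ) * Complex.I) := by
    refine Continuous.const_cpow (by fun_prop) (Or.inl ?_)
    exact_mod_cast hp.2.ne_zero
  have h3 : Measurable fun z : Ω × ℝ => (p : ℂ) ^ (-(1 / 2 : ℂ) - (z.2 : ℂ) * Complex.I) :=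
    h2.measurable.comp measurable_snd
  exact measurable_const.add ((Complex.measurable_ofReal.comp h1).mul h3)

lemma eulerProd_sq_meas {Ω : Type*} [MeasurableSpace Ω] (f : Ω → ℕ → ℝ) (N : ℕ)
    (h : ∀ p : ℕ, p.Prime → p ≤ N → Measurable fun ω => f ω p) (t : ℝ) :
    Measurable (fun ω => ‖eulerProd f ω (N : ℝ) t‖ ^ 2) := by
  have h2 : Measurable (fun ω : Ω => eulerProd f ω (N : ℝ) t) := by
    unfold eulerProd
    refine Finset.measurable_fun_prod _ fun p hp => ?_
    simp only [Nat.floor_natCast, Finset.mem_filter, Finset.mem_Icc] at hp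
    exact measurable_const.add
      ((Complex.measurable_ofReal.comp (h p hp.2 hp.1.2)).mul measurable_const)
  have h3 : Measurable (fun z : ℂ => ‖z‖ ^ 2) := by fun_prop
  exact h3.comp h2

lemma gE_meas {Ω : Type*} [MeasurableSpace Ω] (f : Ω → ℕ → ℝ) (N : ℕ)
    (h : ∀ p : ℕ, p.Prime → p ≤ N → Measurable fun ω => f ω p) :
    Measurable (Function.uncurry (gE f N)) := by
  have h1 := (eulerProd_meas f N h).norm.pow_const 2
  have h2 : Measurable fun z : Ω × ℝ => ‖(1 / 2 : ℂ) + (z.2 : ℂ) * Complex.I‖ ^ 2 := by fun_prop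
  exact h1.div h2

lemma Q_meas {Ω : Type*} [MeasurableSpace Ω] (f : Ω → ℕ → ℝ) (N : ℕ)
    (h : ∀ p : ℕ, p.Prime → p ≤ N → Measurable fun ω => f ω p) :
    Measurable (fun ω => ∫ t, gE f N ω t) :=
  (StronglyMeasurable.integral_prod_right (gE_meas f N h).stronglyMeasurable).measurable

lemma Fil_meas {Ω : Type*} (f : Ω → ℕ → ℝ) (N : ℕ) (p : ℕ) (hp : p.Prime) (hpN : p ≤ N) :
    Measurable[Fil f N] fun ω => f ω p := by
  refine Measurable.mono (comap_measurable _) ?_ le_rfl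
  exact le_iSup₂_of_le p ⟨hp, hpN⟩ le_rfl

lemma Fil_mono {Ω : Type*} (f : Ω → ℕ → ℝ) {a b : ℕ} (hab : a ≤ b) : Fil f a ≤ Fil f b := by
  refine iSup₂_le fun p hp => ?_
  exact le_iSup₂_of_le p ⟨hp.1, hp.2.trans hab⟩ le_rfl

variable {Ω : Type*} [mΩ : MeasurableSpace Ω] {μ : Measure Ω} [IsProbabilityMeasure μ]
  {f : Ω → ℕ → ℝ}

lemma Fil_le (hf : IsRademacherRMF μ f) (N : ℕ) : Fil f N ≤ mΩ :=
  iSup₂_le fun p _ => (hf.meas p).comap_le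

lemma ae_pm (hf : IsRademacherRMF μ f) {p : ℕ} (hp : p.Prime) :
    ∀ᵐ ω ∂μ, f ω p = 1 ∨ f ω p = -1 := by
  have m1 : MeasurableSet {ω | f ω p = 1} := hf.meas p (measurableSet_singleton 1)
  have m2 : MeasurableSet {ω | f ω p = -1} := hf.meas p (measurableSet_singleton (-1))
  have hu : μ ({ω | f ω p = 1} ∪ {ω | f ω p = -1}) = 1 := by
    rw [measure_union _ m2, hf.prob_one p hp, hf.prob_neg_one p hp]
    · exact ENNReal.add_halves 1
    · rw [Set.disjoint_left]
      intro ω h1 h2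
      simp only [Set.mem_ofPred_eq] at h1 h2
      linarith
  exact (prob_compl_eq_zero_iff (m1.union m2)).2 hu

lemma mean_zero (hf : IsRademacherRMF μ f) {p : ℕ} (hp : p.Prime) :
    Integrable (fun ω => f ω p) μ ∧ ∫ ω, f ω p ∂μ = 0 := by
  have m1 : MeasurableSet {ω | f ω p = 1} := hf.meas p (measurableSet_singleton 1)
  have m2 : MeasurableSet {ω | f ω p = -1} := hf.meas p (measurableSet_singleton (-1))
  have hae : (fun ω => f ω p) =ᵐ[μ] fun ω => ({ω | f ω p = 1}.indicator (fun _ => (1:ℝ)) ω) -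
      ({ω | f ω p = -1}.indicator (fun _ => (1:ℝ)) ω) := by
    filter_upwards [ae_pm hf hp] with ω hω
    rcases hω with h | h <;> simp [Set.indicator, h] <;> norm_num
  have i1 : Integrable ({ω | f ω p = 1}.indicator (fun _ => (1:ℝ))) μ :=
    (integrable_const _).indicator m1
  have i2 : Integrable ({ω | f ω p = -1}.indicator (fun _ => (1:ℝ))) μ :=
    (integrable_const _).indicator m2
  refine ⟨(i1.sub i2).congr hae.symm, ?_⟩
  rw [integral_congr_ae hae, integral_sub i1 i2, integral_indicator_const _ m1,
    integral_indicator_const _ m2, Measure.real, Measure.real, hf.prob_one p hp,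
    hf.prob_neg_one p hp]
  simp

lemma factor_mean (hf : IsRademacherRMF μ f) {p : ℕ} (hp : p.Prime) (w : ℂ) :
    ∫ ω, ‖1 + (f ω p : ℂ) * w‖ ^ 2 ∂μ = 1 + ‖w‖ ^ 2 := by
  have hae : (fun ω => ‖1 + (f ω p : ℂ) * w‖ ^ 2) =ᵐ[μ]
      fun ω => (1 + ‖w‖ ^ 2) + f ω p * (2 * w.re) := by
    filter_upwards [ae_pm hf hp] with ω hω
    rw [← Complex.normSq_eq_norm_sq, ← Complex.normSq_eq_norm_sq, Complex.normSq_apply,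
      Complex.normSq_apply]
    rcases hω with h | h <;> simp [h] <;> ring
  obtain ⟨h1, h2⟩ := mean_zero hf hp
  rw [integral_congr_ae hae, integral_add (integrable_const _) (h1.mul_const _),
    integral_mul_const, h2]
  simp

lemma norm_w (p : ℕ) (hp : p.Prime) (t : ℝ) :
    ‖(p : ℂ) ^ (-(1 / 2 : ℂ) - (t : ℂ) * Complex.I)‖ ^ 2 = 1 / p := by
  rw [Complex.norm_natCast_cpow_of_pos hp.pos, ← Real.rpow_natCast, ← Real.rpow_mul (by positivity)]
  have : (-(1 / 2 : ℂ) - (t : ℂ) * Complex.I).re * ((2:ℕ):ℝ) = -1 := by simp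
  rw [this, Real.rpow_neg_one, one_div]

lemma Fil_indep (hf : IsRademacherRMF μ f) {b p : ℕ} (hp : p.Prime) (hbp : b < p) :
    Indep (Fil f b) (MeasurableSpace.comap (fun ω => f ω p) inferInstance) μ := by
  have h1 := indep_iSup_of_disjoint (S := {q : Nat.Primes | (q:ℕ) ≤ b}) (T := {⟨p, hp⟩})
    (m := fun q : Nat.Primes => MeasurableSpace.comap (fun ω => f ω (q:ℕ)) inferInstance)
    (fun q => (hf.meas q).comap_le) hf.indep.iIndep (by
      refine Set.disjoint_singleton_right.2 ?_
      exact fun h => absurd h (not_le.2 hbp))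
  refine indep_of_indep_of_le_left (indep_of_indep_of_le_right h1 ?_) ?_
  · exact le_iSup₂_of_le (⟨p, hp⟩ : Nat.Primes) rfl le_rfl
  · refine iSup₂_le fun q hq => ?_
    exact le_iSup₂_of_le (⟨q, hq.1⟩ : Nat.Primes) hq.2 le_rfl

lemma eulerProd_succ (f : Ω → ℕ → ℝ) (ω : Ω) (b : ℕ) (t : ℝ) :
    eulerProd f ω ((b + 1 : ℕ) : ℝ) t = eulerProd f ω (b : ℝ) t *
      (if (b + 1).Prime then
        (1 + (f ω (b + 1) : ℂ) * ((b + 1 : ℕ) : ℂ) ^ (-(1 / 2 : ℂ) - (t : ℂ) * Complex.I)) else 1) := by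
  unfold eulerProd
  rw [Nat.floor_natCast, Nat.floor_natCast, Finset.prod_filter, Finset.prod_filter,
    Finset.prod_Icc_succ_top (by omega)]

lemma set_step (hf : IsRademacherRMF μ f) {b : ℕ} {A : Set Ω} (hA : MeasurableSet[Fil f b] A)
    (t : ℝ) :
    ∫ ω in A, ‖eulerProd f ω ((b + 1 : ℕ) : ℝ) t‖ ^ 2 ∂μ =
      (if (b + 1).Prime then (1 + 1 / ((b + 1 : ℕ) : ℝ)) else 1) *
      ∫ ω in A, ‖eulerProd f ω (b : ℝ) t‖ ^ 2 ∂μ := by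
  simp_rw [eulerProd_succ]
  split_ifs with hp
  · have hA' : MeasurableSet A := Fil_le hf b _ hA
    rw [← integral_indicator hA', ← integral_indicator hA']
    set w : ℂ := ((b + 1 : ℕ) : ℂ) ^ (-(1 / 2 : ℂ) - (t : ℂ) * Complex.I) with hw
    set U : Ω → ℝ := A.indicator fun ω => ‖eulerProd f ω (b : ℝ) t‖ ^ 2 with hU
    set V : Ω → ℝ := fun ω => ‖1 + (f ω (b + 1) : ℂ) * w‖ ^ 2 with hV
    have hUm : Measurable[Fil f b] U := by
      refine Measurable.indicator ?_ hA
      exact @eulerProd_sq_meas Ω (Fil f b) f b (fun p hp hpb => Fil_meas f b p hp hpb) t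
    have hVm : Measurable[MeasurableSpace.comap (fun ω => f ω (b + 1)) inferInstance] V := by
      have h1 : Measurable fun x : ℝ => ‖1 + (x : ℂ) * w‖ ^ 2 := by fun_prop
      exact h1.comp (comap_measurable _)
    have hind : IndepFun U V μ := by
      rw [IndepFun_iff_Indep]
      exact indep_of_indep_of_le_left (indep_of_indep_of_le_right
        (Fil_indep hf hp (Nat.lt_succ_self b)) hVm.comap_le) hUm.comap_le
    have hUm' : Measurable U := hUm.mono (Fil_le hf b) le_rfl
    have hVm' : Measurable V := hVm.mono ((hf.meas _).comap_le) le_rfl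
    have := hind.integral_fun_mul_eq_mul_integral hUm'.aestronglyMeasurable
      hVm'.aestronglyMeasurable
    have e : (A.indicator fun ω => ‖eulerProd f ω (b : ℝ) t * (1 + (f ω (b + 1) : ℂ) * w)‖ ^ 2) =
        fun ω => U ω * V ω := by
      ext ω
      by_cases h : ω ∈ A <;> simp [hU, hV, h, mul_pow]
    rw [e, this, mul_comm]
    congr 1
    rw [hV, factor_mean hf hp, hw, norm_w _ hp]
  · simp

lemma set_multi (hf : IsRademacherRMF μ f) {a b : ℕ} (hab : a ≤ b) {A : Set Ω}
    (hA : MeasurableSet[Fil f a] A) (t : ℝ) :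
    ∫ ω in A, ‖eulerProd f ω (b : ℝ) t‖ ^ 2 ∂μ =
      (∏ p ∈ (Finset.Ioc a b).filter Nat.Prime, (1 + 1 / (p : ℝ))) *
      ∫ ω in A, ‖eulerProd f ω (a : ℝ) t‖ ^ 2 ∂μ := by
  induction b, hab using Nat.le_induction with
  | base => simp
  | succ b hab ih =>
    rw [set_step hf (Fil_mono f hab _ hA), ih, Finset.prod_filter, Finset.prod_filter,
      Finset.prod_Ioc_succ_top hab]
    ring

lemma set_multi_gE (hf : IsRademacherRMF μ f) {a b : ℕ} (hab : a ≤ b) {A : Set Ω}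
    (hA : MeasurableSet[Fil f a] A) (t : ℝ) :
    ∫ ω in A, gE f b ω t ∂μ =
      (∏ p ∈ (Finset.Ioc a b).filter Nat.Prime, (1 + 1 / (p : ℝ))) *
      ∫ ω in A, gE f a ω t ∂μ := by
  unfold gE
  rw [integral_div, integral_div, set_multi hf hab hA, mul_div_assoc]

lemma eulerProd_bound (hf : IsRademacherRMF μ f) (N : ℕ) :
    ∀ᵐ ω ∂μ, ∀ t : ℝ, ‖eulerProd f ω (N : ℝ) t‖ ≤ 2 ^ N := by
  have : ∀ᵐ ω ∂μ, ∀ p : ℕ, p.Prime → f ω p = 1 ∨ f ω p = -1 := by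
    rw [ae_all_iff]
    intro p
    by_cases hp : p.Prime
    · filter_upwards [ae_pm hf hp] with ω h _ using h
    · exact Filter.Eventually.of_forall fun ω h => absurd h hp
  filter_upwards [this] with ω hω t
  unfold eulerProd
  rw [norm_prod]
  refine (Finset.prod_le_prod (g := fun _ => (2:ℝ)) (fun p _ => norm_nonneg _) fun p hp => ?_).trans ?_
  · simp only [Finset.mem_filter] at hp
    refine (norm_add_le _ _).trans ?_
    have h1 : ‖(f ω p : ℂ)‖ = 1 := by
      rcases hω p hp.2 with h | h <;> simp [h]
    have h2 : ‖(p : ℂ) ^ (-(1 / 2 : ℂ) - (t : ℂ) * Complex.I)‖ ≤ 1 := by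
      have h3 := norm_w p hp.2 t
      have h4 : 1 / (p:ℝ) ≤ 1 := by
        rw [div_le_one (by exact_mod_cast hp.2.pos)]; exact_mod_cast hp.2.one_le
      exact (sq_le_one_iff₀ (norm_nonneg _)).1 (h3.trans_le h4)
    rw [norm_mul, h1, one_mul, norm_one]
    linarith
  · rw [Finset.prod_const]
    refine pow_le_pow_right₀ (by norm_num) ?_
    refine (Finset.card_filter_le _ _).trans ?_
    simp

lemma gE_int (hf : IsRademacherRMF μ f) (N : ℕ) :
    Integrable (Function.uncurry (gE f N)) (μ.prod volume) := by
  have hb : Integrable (fun z : Ω × ℝ => (2 ^ N) ^ 2 * (4 * (1 + z.2 ^ 2)⁻¹)) (μ.prod volume) :=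
    ((integrable_inv_one_add_sq.const_mul 4).comp_snd μ).const_mul _
  refine hb.mono' (gE_meas f N fun p _ _ => hf.meas p).aestronglyMeasurable ?_
  have := (Measure.quasiMeasurePreserving_fst (μ := μ) (ν := (volume : Measure ℝ))).ae
    (eulerProd_bound hf N)
  filter_upwards [this] with z hz
  rw [Real.norm_of_nonneg (by unfold Function.uncurry gE; positivity)]
  simp only [Function.uncurry, gE]
  have hden : ‖(1 / 2 : ℂ) + (z.2 : ℂ) * Complex.I‖ ^ 2 = 1 / 4 + z.2 ^ 2 := by
    rw [← Complex.normSq_eq_norm_sq, Complex.normSq_apply]; simp; ring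
  rw [hden, div_eq_mul_inv]
  have h1 := hz z.2
  have h2 : (1 / 4 + z.2 ^ 2)⁻¹ ≤ 4 * (1 + z.2 ^ 2)⁻¹ := by
    rw [← div_eq_mul_inv, inv_eq_one_div, div_le_div_iff₀ (by positivity) (by positivity)]
    nlinarith [sq_nonneg z.2]
  gcongr

lemma Q_int (hf : IsRademacherRMF μ f) (N : ℕ) :
    Integrable (fun ω => ∫ t, gE f N ω t) μ :=
  (gE_int hf N).integral_prod_left

lemma Q_set (hf : IsRademacherRMF μ f) {a b : ℕ} (hab : a ≤ b) {A : Set Ω}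
    (hA : MeasurableSet[Fil f a] A) :
    ∫ ω in A, (∫ t, gE f b ω t) ∂μ =
      (∏ p ∈ (Finset.Ioc a b).filter Nat.Prime, (1 + 1 / (p : ℝ))) *
      ∫ ω in A, (∫ t, gE f a ω t) ∂μ := by
  have hi : ∀ N, Integrable (Function.uncurry (gE f N)) ((μ.restrict A).prod volume) := by
    intro N
    have : (μ.restrict A).prod (volume : Measure ℝ) = (μ.prod volume).restrict (A ×ˢ Set.univ) := by
      rw [← Measure.prod_restrict, Measure.restrict_univ]
    rw [this]
    exact (gE_int hf N).restrict
  rw [integral_integral_swap (hi b), integral_integral_swap (hi a), ← integral_const_mul]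
  refine integral_congr_ae (Filter.Eventually.of_forall fun t => ?_)
  exact set_multi_gE hf hab hA t

lemma Q_condExp (hf : IsRademacherRMF μ f) {a b : ℕ} (hab : a ≤ b) (c : ℝ) :
    (fun ω => c * ((∏ p ∈ (Finset.Ioc a b).filter Nat.Prime, (1 + 1 / (p : ℝ))) *
      ∫ t, gE f a ω t)) =ᵐ[μ] μ[fun ω => c * ∫ t, gE f b ω t|Fil f a] := by
  refine ae_eq_condExp_of_forall_setIntegral_eq (Fil_le hf a) ((Q_int hf b).const_mul c) ?_ ?_ ?_
  · intro s _ _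
    exact (((Q_int hf a).const_mul _).const_mul c).integrableOn
  · intro s hs _
    rw [integral_const_mul, integral_const_mul, integral_const_mul, Q_set hf hab hs]
  · have := @Q_meas Ω (Fil f a) f a (fun p hp hpb => Fil_meas f a p hp hpb)
    exact ((this.const_mul _).const_mul c).stronglyMeasurable.aestronglyMeasurable

end RMF

/-- `(Y_{x_i})` is a nonnegative submartingale along the test points in
`(X_{ℓ-1}, X_ℓ]`, for `i` sufficiently large in terms of `ε`. -/
theorem Ynorm_submartingale
    {Ω : Type*} [MeasurableSpace Ω] (μ : Measure Ω) [IsProbabilityMeasure μ]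
    (f : Ω → ℕ → ℝ) (hf : IsRademacherRMF μ f) :
    ∃ ε₀ : ℝ, 0 < ε₀ ∧ ∀ ε : ℝ, 0 < ε → ε < ε₀ →
      ∃ I₀ : ℕ, ∀ ℓ : ℕ, 2 ≤ ℓ → ∀ i : ℕ, I₀ ≤ i → 2 ≤ i →
        Xpt ε ((ℓ : ℝ) - 1) < (testPoint ε (i - 1) : ℝ) →
        (testPoint ε i : ℝ) ≤ Xpt ε (ℓ : ℝ) →
        (∀ ω, 0 ≤ Ynorm f ε ℓ i ω) ∧
        Measurable[sigmaAlgTest f ε i] (Ynorm f ε ℓ i) ∧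
        Integrable (Ynorm f ε ℓ i) μ ∧
        Ynorm f ε ℓ (i - 1) ≤ᵐ[μ] μ[Ynorm f ε ℓ i|sigmaAlgTest f ε (i - 1)] := by
  refine ⟨1 / 4, by norm_num, fun ε hε hε4 => ?_⟩
  obtain ⟨a0, ha0⟩ := RMF.short_interval (2 / ε) (by rw [le_div_iff₀ hε]; linarith)
  obtain ⟨n0, hn0⟩ := RMF.test_gap hε hε4
  have ht : Filter.Tendsto (fun n : ℕ => ((testPoint ε n : ℕ) : ℝ)) Filter.atTop Filter.atTop := by
    refine tendsto_natCast_atTop_atTop.comp ?_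
    exact tendsto_nat_floor_atTop.comp (Real.tendsto_exp_atTop.comp
      ((tendsto_rpow_atTop hε).comp tendsto_natCast_atTop_atTop))
  obtain ⟨n1, hn1⟩ := Filter.eventually_atTop.1 (ht.eventually_ge_atTop a0)
  refine ⟨max n0 n1 + 1, fun ℓ hℓ i hi hi2 hX _ => ?_⟩
  have hin0 : n0 ≤ i - 1 := by have := le_max_left n0 n1; omega
  have hin1 : n1 ≤ i - 1 := by have := le_max_right n0 n1; omega
  have hcast : ((i - 1 : ℕ) : ℝ) + 1 = i := by
    have : (i - 1) + 1 = i := by omega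
    exact_mod_cast this
  obtain ⟨g1, g2⟩ := hn0 (i - 1) hin0
  rw [hcast] at g1 g2
  have g0 := hn1 (i - 1) hin1
  have hYi : ∀ j : ℕ, Ynorm f ε ℓ j = fun ω => (1 / Real.log (testPoint ε j)) *
    (Real.log (testPoint ε j) / Real.log (Xpt ε ((ℓ : ℝ) - 1))) ^
      ((1 : ℝ) / ((ℓ : ℝ) - 1) ^ (1 / (4 * ε))) * ∫ t : ℝ, RMF.gE f (testPoint ε j) ω t :=
    fun j => rfl
  change (testPoint ε (i - 1) : ℝ) + (testPoint ε (i - 1) : ℝ) *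
    (Real.log (testPoint ε (i - 1))) ^ (-(2 / ε)) ≤ (testPoint ε i : ℝ) at g1
  change (testPoint ε i : ℝ) ≤ (testPoint ε (i - 1) : ℝ) *
    (1 + 1 / Real.log (testPoint ε (i - 1))) at g2
  change Real.exp _ < _ at hX
  have hσ : ∀ j, sigmaAlgTest f ε j = RMF.Fil f (testPoint ε j) := fun j => rfl
  have hlX : Real.log (Xpt ε ((ℓ : ℝ) - 1)) = 2 ^ (((ℓ : ℝ) - 1) ^ (1 / (4 * ε))) := by
    rw [Xpt, Real.log_exp]
  rw [hσ, hσ, hYi, hYi, hlX]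
  have hℓ1 : (1:ℝ) ≤ (ℓ:ℝ) - 1 := by
    have : (2:ℝ) ≤ ℓ := by exact_mod_cast hℓ
    linarith
  set M := ((ℓ : ℝ) - 1) ^ (1 / (4 * ε)) with hM
  have hM1 : 1 ≤ M := Real.one_le_rpow hℓ1 (by positivity)
  set a := testPoint ε (i - 1) with ha
  set b := testPoint ε i with hb
  have g1' := ha0 a b g0 g1 g2 (1 / M) (by rw [div_le_one (by linarith)]; exact hM1)
  have hap : (0:ℝ) < a := (Real.exp_pos _).trans hX
  have hla : 2 ^ M < Real.log a := (Real.lt_log_iff_exp_lt hap).2 hX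
  have h2M : (0:ℝ) < 2 ^ M := by positivity
  have hlap : 0 < Real.log a := h2M.trans hla
  have hab' : (a:ℝ) ≤ b := by
    have : 0 ≤ (Real.log a) ^ (-(2 / ε)) := Real.rpow_nonneg hlap.le _
    have := mul_nonneg hap.le this
    linarith
  have hab : a ≤ b := by exact_mod_cast hab'
  have hlab : Real.log a ≤ Real.log b := Real.log_le_log hap hab'
  have hlbp : 0 < Real.log b := by linarith
  have hP := g1' (by
    have : M * Real.log 2 ≤ Real.log (Real.log a) := by
      rw [← Real.log_rpow (by norm_num)]
      exact Real.log_le_log h2M hla.le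
    rw [one_div, inv_mul_eq_div, le_div_iff₀ (by linarith)]; linarith)
  refine ⟨fun ω => ?_, ?_, ?_, ?_⟩
  · have h1 : 0 ≤ ∫ t : ℝ, RMF.gE f b ω t :=
      integral_nonneg fun t => by unfold RMF.gE; positivity
    have h2 : 0 ≤ (Real.log b / 2 ^ M) ^ (1 / M) := by positivity
    have h3 : 0 ≤ 1 / Real.log b := by positivity
    exact mul_nonneg (mul_nonneg h3 h2) h1
  · have := @RMF.Q_meas Ω (RMF.Fil f b) f b (fun p hp hpb => RMF.Fil_meas f b p hp hpb)
    exact this.const_mul _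
  · exact (RMF.Q_int hf b).const_mul _
  · filter_upwards [RMF.Q_condExp hf hab (1 / Real.log b * (Real.log b / 2 ^ M) ^ (1 / M))] with ω hω
    rw [← hω]
    set P := ∏ p ∈ (Finset.Ioc a b).filter Nat.Prime, (1 + 1 / (p : ℝ)) with hPdef
    have h1 : 0 ≤ ∫ t : ℝ, RMF.gE f a ω t :=
      integral_nonneg fun t => by unfold RMF.gE; positivity
    rw [← mul_assoc]
    refine mul_le_mul_of_nonneg_right ?_ h1
    have hr : 0 < Real.log b / Real.log a := by positivity
    have e1 : (Real.log b / 2 ^ M) ^ (1 / M) =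
        (Real.log a / 2 ^ M) ^ (1 / M) * (Real.log b / Real.log a) ^ (1 / M) := by
      rw [← Real.mul_rpow (by positivity) hr.le]; congr 1; field_simp
    have e2 : (Real.log b / Real.log a) ^ (1 / M) * (Real.log b / Real.log a) ^ (1 - 1 / M) =
        Real.log b / Real.log a := by
      rw [← Real.rpow_add hr]; simp
    have e3 : Real.log b / Real.log a ≤ (Real.log b / Real.log a) ^ (1 / M) * P := by
      conv_lhs => rw [← e2]
      exact mul_le_mul_of_nonneg_left hP (by positivity)
    have hpos : 0 ≤ (Real.log a / 2 ^ M) ^ (1 / M) := by positivity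
    calc 1 / Real.log a * (Real.log a / 2 ^ M) ^ (1 / M)
        = 1 / Real.log b * (Real.log a / 2 ^ M) ^ (1 / M) * (Real.log b / Real.log a) := by
          field_simp
      _ ≤ 1 / Real.log b * (Real.log a / 2 ^ M) ^ (1 / M) *
          ((Real.log b / Real.log a) ^ (1 / M) * P) := by
          refine mul_le_mul_of_nonneg_left e3 (by positivity)
      _ = _ := by rw [e1]; ring
end
end
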